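/- arXiv:2005.13627 — 2 statements merged into one kernel-verified Lean document; each statement's English description precedes it below -/
import Mathlib

section
/- Let n≥1, m≥1 be integers, 0<γ<1, p>1, and let u_0 ∈ C_0(ℝ^n). Then there exists T>0 and a unique mild solution u ∈ C([0,T], C_0(ℝ^n)) of the problem u_t + (-Δ)^m u = ∫_0^t (t-s)^{-γ}|u|^p ds, u(·,0)=u_0. Moreover, any two mild solutions on a common interval [0,T] coincide. -/
/-!
The kernel at time one is, up to dilation, the Fourier transform of the Schwartz function
`exp (-|ξ|^{2m})`; hence it is integrable, and it has mass one by Fourier inversion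
(`integrable_heatKern_one`, `integral_heatKern_one`). Parabolic scaling turns the convolution into
`S(t)φ(x) = ∫ b(1,z) φ(x - t^{1/(2m)} z) dz`, a formula that is also valid at `t = 0` (`Sop_eq`).
Read as a Bochner integral of translates in `C₀` (`semi`), it shows that the `S(t)` are bounded
uniformly in `t` and that `(t, φ) ↦ S(t)φ` is jointly continuous (`continuous_semi`). The semigroup
law is not needed.

The map `φ ↦ |φ|^p` is Lipschitz on balls of `C₀`, and the singular weight `(s-σ)^{-γ}` is
integrable because `γ < 1`. Writing the Duhamel term as an integral over the unit interval
(`memory`, `duhamel`) makes its continuity in time a matter of dominated convergence, and evaluation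
at a point identifies it with the pointwise integrals of the integral equation (`duhamel_apply`).

The central estimate is `norm_duhamel_sub_le`: for two functions with values in a ball, if their
difference is bounded by `A σ^k`, then the difference of their Duhamel terms is bounded by
`K A t^{k+1}/(k+1)`. With `k = 0` and small `T` it makes the Picard map a contraction of a ball of
bounded continuous functions (`mild_exists`); iterated over `k` it bounds the difference of two mild
solutions by `2R (K t)^k / k!`, which tends to `0` (`mild_unique`).
-/

open MeasureTheory Real Filter
open scoped ZeroAtInfty RealInnerProductSpace

/-- The kernel `b(t,x)` of the semigroup generated by `-(-Δ)^m`. -/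
noncomputable def heatKern (n m : ℕ) (t : ℝ) (x : EuclideanSpace ℝ (Fin n)) : ℝ :=
  (2 * Real.pi) ^ (-(n : ℤ)) *
    (∫ ξ : EuclideanSpace ℝ (Fin n),
      Complex.exp (-((t * ‖ξ‖ ^ (2 * m) : ℝ) : ℂ) - Complex.I * ((⟪ξ, x⟫ : ℝ) : ℂ))).re

/-- The semigroup `S(t)φ = b(t,·) ∗ φ`, with `S(0) = Id`. -/
noncomputable def Sop (n m : ℕ) (t : ℝ) (φ : EuclideanSpace ℝ (Fin n) → ℝ) :
    EuclideanSpace ℝ (Fin n) → ℝ :=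
  if t = 0 then φ else fun x => ∫ y, heatKern n m t y * φ (x - y)

/-- `u` is a mild solution on `[0,T]` of `u_t + (-Δ)^m u = ∫_0^t (t-s)^{-γ}|u|^p ds`,
`u(0) = u0`. -/
def IsMildSolution (n m : ℕ) (γ p : ℝ) (u0 : C₀(EuclideanSpace ℝ (Fin n), ℝ))
    (T : ℝ) (u : ℝ → C₀(EuclideanSpace ℝ (Fin n), ℝ)) : Prop :=
  ContinuousOn u (Set.Icc 0 T) ∧
  ∀ t ∈ Set.Icc (0 : ℝ) T, ∀ x,
    u t x = Sop n m t (⇑u0) x +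
      ∫ s in Set.Ioc (0 : ℝ) t,
        Sop n m (t - s)
          (fun y => ∫ σ in Set.Ioc (0 : ℝ) s, (s - σ) ^ (-γ) * |u σ y| ^ p) x

/-- The set of times `T > 0` for which a mild solution exists on `[0,T]`. -/
noncomputable def solSet (n m : ℕ) (γ p : ℝ) (u0 : C₀(EuclideanSpace ℝ (Fin n), ℝ)) : Set ℝ :=
  {T | 0 < T ∧ ∃ u, IsMildSolution n m γ p u0 T u}

open scoped SchwartzMap FourierTransform

/-! ### The kernel -/

lemma iteratedDeriv_ofReal_cexp (i : ℕ) :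
    iteratedDeriv i (fun x : ℝ => Complex.exp (x : ℂ)) = fun x : ℝ => Complex.exp (x : ℂ) := by
  induction i with
  | zero => simp
  | succ i ih =>
    rw [iteratedDeriv_succ, ih]
    ext x
    have := (Complex.hasDerivAt_exp (x : ℂ)).comp_ofReal
    exact this.deriv

/-- Rapid decay of all derivatives of the symbol: by Faà di Bruno they are at most
`exp (-|ξ|^{2m})` times a polynomial in `|ξ|`, and `|ξ| ≤ 1 + |ξ|^{2m}`. -/
lemma symbol_decay (n m : ℕ) (hm : 1 ≤ m) (k j : ℕ) :
    ∃ C : ℝ, ∀ ξ : EuclideanSpace ℝ (Fin n),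
      ‖ξ‖ ^ k * ‖iteratedFDeriv ℝ j
        (fun ξ : EuclideanSpace ℝ (Fin n) => Complex.exp ((-(‖ξ‖ ^ (2 * m)) : ℝ) : ℂ)) ξ‖ ≤ C := by
  have hg : (fun ξ : EuclideanSpace ℝ (Fin n) => -((‖ξ‖ ^ 2) ^ m)).HasTemperateGrowth :=
    (Function.HasTemperateGrowth.pow
      (Function.hasTemperateGrowth_norm_sq (EuclideanSpace ℝ (Fin n))) m).neg
  obtain ⟨N, C, hC, hb⟩ := hg.norm_iteratedFDeriv_le_uniform j
  refine ⟨(j.factorial : ℝ) * (C + 1) ^ j * ((N * j + k).factorial : ℝ) * Real.exp 2,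
    fun ξ => ?_⟩
  set r := ‖ξ‖ with hr
  have hr0 : 0 ≤ r := norm_nonneg _
  have key : ‖iteratedFDeriv ℝ j
        ((fun x : ℝ => Complex.exp (x : ℂ)) ∘
          (fun ξ : EuclideanSpace ℝ (Fin n) => -((‖ξ‖ ^ 2) ^ m))) ξ‖
      ≤ (j.factorial : ℝ) * Real.exp (-(r ^ 2) ^ m) * ((C + 1) * (1 + r) ^ N) ^ j := by
    have hexp : ContDiff ℝ ((⊤ : ℕ∞) : WithTop ℕ∞) (fun x : ℝ => Complex.exp (x : ℂ)) :=
      Complex.contDiff_exp.comp Complex.ofRealCLM.contDiff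
    refine norm_iteratedFDeriv_comp_le hexp hg.1 (by exact_mod_cast le_top) ξ ?_ ?_
    · intro i _
      rw [norm_iteratedFDeriv_eq_norm_iteratedDeriv, iteratedDeriv_ofReal_cexp]
      exact (Complex.norm_exp_ofReal _).le
    · intro i hi hij
      have h1 : 1 ≤ (C + 1) * (1 + r) ^ N := by
        have := one_le_pow₀ (n := N) (show 1 ≤ 1 + r by linarith)
        nlinarith
      calc _ ≤ C * (1 + r) ^ N := hb i hij ξ
        _ ≤ (C + 1) * (1 + r) ^ N := by gcongr; linarith
        _ ≤ _ := le_self_pow₀ h1 (by omega)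
  have e1 : (fun ξ : EuclideanSpace ℝ (Fin n) => Complex.exp ((-(‖ξ‖ ^ (2 * m)) : ℝ) : ℂ)) =
      ((fun x : ℝ => Complex.exp (x : ℂ)) ∘
          (fun ξ : EuclideanSpace ℝ (Fin n) => -((‖ξ‖ ^ 2) ^ m))) := by
    ext ξ; simp [pow_mul]
  rw [e1]
  have h2 : r ≤ 1 + (r ^ 2) ^ m := by
    rw [← pow_mul]
    rcases le_total r 1 with h | h
    · have : 0 ≤ r ^ (2 * m) := by positivity
      linarith
    · have := le_self_pow₀ h (show 2 * m ≠ 0 by omega)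
      linarith
  have h3 : (1 + r) ^ (N * j + k) ≤ ((N * j + k).factorial : ℝ) * Real.exp (1 + r) := by
    have := Real.pow_div_factorial_le_exp (1 + r) (by linarith) (N * j + k)
    rwa [div_le_iff₀' (by positivity)] at this
  calc r ^ k * _ ≤ (1 + r) ^ k *
        ((j.factorial : ℝ) * Real.exp (-(r ^ 2) ^ m) * ((C + 1) * (1 + r) ^ N) ^ j) := by
        gcongr; linarith
    _ = (j.factorial : ℝ) * (C + 1) ^ j * Real.exp (-(r ^ 2) ^ m) * (1 + r) ^ (N * j + k) := by
        rw [mul_pow, ← pow_mul, pow_add]; ring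
    _ ≤ (j.factorial : ℝ) * (C + 1) ^ j * Real.exp (-(r ^ 2) ^ m) *
          (((N * j + k).factorial : ℝ) * Real.exp (1 + r)) := by gcongr
    _ = (j.factorial : ℝ) * (C + 1) ^ j * ((N * j + k).factorial : ℝ) *
          Real.exp (-(r ^ 2) ^ m + (1 + r)) := by rw [Real.exp_add (-(r ^ 2) ^ m)]; ring
    _ ≤ _ := by gcongr; linarith

/-- The symbol `exp (-|ξ|^{2m})` as a Schwartz function. -/
noncomputable def symbol (n m : ℕ) (hm : 1 ≤ m) : 𝓢(EuclideanSpace ℝ (Fin n), ℂ) where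
  toFun ξ := Complex.exp ((-(‖ξ‖ ^ (2 * m)) : ℝ) : ℂ)
  smooth' := by
    have : ContDiff ℝ ⊤ (fun ξ : EuclideanSpace ℝ (Fin n) => ((-(‖ξ‖ ^ 2) ^ m : ℝ) : ℂ)) :=
      Complex.ofRealCLM.contDiff.comp (((contDiff_norm_sq ℝ).pow m).neg)
    simpa [pow_mul] using this.cexp.of_le le_top
  decay' k j := symbol_decay n m hm k j

lemma heatKern_one_eq (n m : ℕ) (hm : 1 ≤ m) (x : EuclideanSpace ℝ (Fin n)) :
    heatKern n m 1 x = (2 * Real.pi) ^ (-(n : ℤ)) *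
      ((𝓕 (symbol n m hm) : 𝓢(EuclideanSpace ℝ (Fin n), ℂ)) ((2 * Real.pi)⁻¹ • x)).re := by
  rw [heatKern, SchwartzMap.fourier_coe, Real.fourier_eq']
  congr 3
  ext ξ
  rw [smul_eq_mul]
  change _ = _ * Complex.exp ((-(‖ξ‖ ^ (2 * m)) : ℝ) : ℂ)
  rw [← Complex.exp_add]
  congr 1
  rw [inner_smul_right]
  push_cast
  have : (Real.pi : ℂ) ≠ 0 := by exact_mod_cast Real.pi_ne_zero
  field_simp
  ring

lemma integrable_heatKern_one (n m : ℕ) (hm : 1 ≤ m) : Integrable (heatKern n m 1) := by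
  have h := ((𝓕 (symbol n m hm) :
    𝓢(EuclideanSpace ℝ (Fin n), ℂ)).integrable (μ := volume)).comp_smul (R := (2 * Real.pi)⁻¹) (by positivity)
  exact (h.re.const_mul ((2 * Real.pi) ^ (-(n : ℤ)))).congr
    (ae_of_all _ fun x => (heatKern_one_eq n m hm x).symm)

/-- Fourier inversion at the origin: the kernel has total mass one. -/
lemma integral_heatKern_one (n m : ℕ) (hm : 1 ≤ m) : ∫ x, heatKern n m 1 x = 1 := by
  simp_rw [heatKern_one_eq n m hm]
  have h0 := (𝓕 (symbol n m hm) : 𝓢(EuclideanSpace ℝ (Fin n), ℂ)).integrable (μ := volume)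
  have h := h0.comp_smul (R := (2 * Real.pi)⁻¹) (by positivity)
  rw [integral_const_mul]
  have h1 := integral_re h
  simp only [RCLike.re_to_complex] at h1
  rw [h1, Measure.integral_comp_smul]
  have h2 : ∫ x, (𝓕 (symbol n m hm) : 𝓢(EuclideanSpace ℝ (Fin n), ℂ)) x = 1 := by
    have h3 : (𝓕⁻ (𝓕 (symbol n m hm)) : 𝓢(EuclideanSpace ℝ (Fin n), ℂ)) 0 = symbol n m hm 0 := by
      rw [FourierTransform.fourierInv_fourier_eq]
    rw [SchwartzMap.fourierInv_coe, Real.fourierInv_eq'] at h3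
    simp only [inner_zero_right, mul_zero, Complex.ofReal_zero, zero_mul, Complex.exp_zero,
      one_smul] at h3
    rw [h3]
    change Complex.exp ((-(‖(0 : EuclideanSpace ℝ (Fin n))‖ ^ (2 * m)) : ℝ) : ℂ) = 1
    have : m ≠ 0 := by omega
    simp [this]
  rw [h2]
  have hpi : (0 : ℝ) < 2 * Real.pi := by positivity
  simp only [finrank_euclideanSpace, Fintype.card_fin, Complex.real_smul, mul_one,
    Complex.ofReal_re, zpow_neg, zpow_natCast]
  rw [abs_of_pos (by positivity), inv_pow, inv_inv]
  field_simp

/-- Parabolic scaling of the kernel. -/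
lemma heatKern_scaling (n m : ℕ) (a : ℝ) (ha : 0 < a) (x : EuclideanSpace ℝ (Fin n)) :
    heatKern n m (a ^ (2 * m)) (a • x) = (a ^ n)⁻¹ * heatKern n m 1 x := by
  have h := Measure.integral_comp_smul (volume : Measure (EuclideanSpace ℝ (Fin n)))
    (fun ξ : EuclideanSpace ℝ (Fin n) =>
      Complex.exp (-((1 * ‖ξ‖ ^ (2 * m) : ℝ) : ℂ) - Complex.I * ((⟪ξ, x⟫ : ℝ) : ℂ))) a
  simp only [finrank_euclideanSpace, Fintype.card_fin] at h
  rw [abs_of_pos (by positivity)] at h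
  rw [heatKern, heatKern, mul_left_comm, ← smul_eq_mul (a ^ n)⁻¹, ← Complex.smul_re, ← h]
  congr 3
  ext ξ
  congr 1
  rw [norm_smul, inner_smul_left, inner_smul_right, Real.norm_eq_abs, abs_of_pos ha]
  simp [mul_pow]

/-- The convolution defining `S(t)`, rescaled to the kernel at time one; the formula also
covers `t = 0` because the kernel has mass one. -/
lemma Sop_eq (n m : ℕ) (hm : 1 ≤ m) (t : ℝ) (ht : 0 ≤ t) (φ : EuclideanSpace ℝ (Fin n) → ℝ)
    (x : EuclideanSpace ℝ (Fin n)) :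
    Sop n m t φ x = ∫ z, heatKern n m 1 z * φ (x - t ^ ((2 * m : ℝ)⁻¹) • z) := by
  have hm' : (2 * m : ℝ) ≠ 0 := by positivity
  rcases ht.eq_or_lt with rfl | ht
  · simp only [Sop, if_true]
    rw [Real.zero_rpow (inv_ne_zero hm')]
    simp [integral_mul_const, integral_heatKern_one n m hm]
  · set a := t ^ ((2 * m : ℝ)⁻¹) with ha
    have ha0 : 0 < a := Real.rpow_pos_of_pos ht _
    have hat : a ^ (2 * m) = t := by
      rw [ha, ← Real.rpow_natCast, ← Real.rpow_mul ht.le]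
      push_cast
      rw [inv_mul_cancel₀ hm', Real.rpow_one]
    simp only [Sop, if_neg ht.ne']
    have h := Measure.integral_comp_smul (volume : Measure (EuclideanSpace ℝ (Fin n)))
      (fun y => heatKern n m t y * φ (x - y)) a
    simp only [finrank_euclideanSpace, Fintype.card_fin, smul_eq_mul] at h
    rw [abs_of_pos (by positivity)] at h
    rw [← hat] at h ⊢
    simp_rw [heatKern_scaling n m a ha0, mul_assoc] at h
    rw [integral_const_mul] at h
    exact (mul_left_cancel₀ (by positivity) h).symm

/-! ### Translations and the semigroup on `C₀` -/

section Semigroup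

variable {n : ℕ}

lemma C0_norm_le {f : C₀(EuclideanSpace ℝ (Fin n), ℝ)} {C : ℝ} (hC : 0 ≤ C) :
    ‖f‖ ≤ C ↔ ∀ x, |f x| ≤ C := by
  rw [← ZeroAtInftyContinuousMap.norm_toBCF_eq_norm, BoundedContinuousFunction.norm_le hC]
  rfl

lemma C0_abs_le (f : C₀(EuclideanSpace ℝ (Fin n), ℝ)) (x : EuclideanSpace ℝ (Fin n)) :
    |f x| ≤ ‖f‖ := (C0_norm_le (norm_nonneg f)).1 le_rfl x

lemma C0_smul_sub (a : ℝ) (f g : C₀(EuclideanSpace ℝ (Fin n), ℝ)) :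
    a • f - a • g = a • (f - g) := by
  ext x
  simp [mul_sub]

/-- Evaluation at a point, as a continuous linear functional on `C₀`. -/
noncomputable def evalC0 (x : EuclideanSpace ℝ (Fin n)) :
    C₀(EuclideanSpace ℝ (Fin n), ℝ) →L[ℝ] ℝ :=
  LinearMap.mkContinuous
    { toFun := fun f => f x, map_add' := fun _ _ => rfl, map_smul' := fun _ _ => rfl } 1
    (fun f => by simpa using C0_abs_le f x)

lemma evalC0_apply (x : EuclideanSpace ℝ (Fin n)) (f : C₀(EuclideanSpace ℝ (Fin n), ℝ)) :
    evalC0 x f = f x := rfl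

/-- The translate `y ↦ φ (y - h)` of a function vanishing at infinity. -/
def shiftC0 (h : EuclideanSpace ℝ (Fin n)) (φ : C₀(EuclideanSpace ℝ (Fin n), ℝ)) :
    C₀(EuclideanSpace ℝ (Fin n), ℝ) where
  toFun y := φ (y - h)
  continuous_toFun := φ.continuous.comp (continuous_id.sub continuous_const)
  zero_at_infty' := (zero_at_infty φ).comp
    (Homeomorph.subRight h).isClosedEmbedding.tendsto_cocompact

lemma shiftC0_apply (h y : EuclideanSpace ℝ (Fin n)) (φ : C₀(EuclideanSpace ℝ (Fin n), ℝ)) :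
    shiftC0 h φ y = φ (y - h) := rfl

lemma norm_shiftC0_le (h : EuclideanSpace ℝ (Fin n)) (φ : C₀(EuclideanSpace ℝ (Fin n), ℝ)) :
    ‖shiftC0 h φ‖ ≤ ‖φ‖ :=
  (C0_norm_le (norm_nonneg _)).2 fun _ => C0_abs_le φ _

/-- Functions vanishing at infinity are uniformly continuous, so translation is strongly
continuous. -/
lemma continuous_shiftC0 (φ : C₀(EuclideanSpace ℝ (Fin n), ℝ)) :
    Continuous fun h => shiftC0 h φ := by
  have hu := ZeroAtInftyContinuousMap.uniformContinuous φ
  rw [Metric.continuous_iff]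
  intro h ε hε
  obtain ⟨δ, hδ, H⟩ := Metric.uniformContinuous_iff.1 hu (ε / 2) (by linarith)
  refine ⟨δ, hδ, fun k hk => ?_⟩
  rw [dist_eq_norm]
  refine lt_of_le_of_lt ((C0_norm_le (by linarith : 0 ≤ ε / 2)).2 fun x => ?_)
    (by linarith : ε / 2 < ε)
  have := H (a := x - k) (b := x - h) (by rw [dist_sub_left]; exact hk)
  rw [Real.dist_eq] at this
  exact this.le

/-- The operator `S(t)` on `C₀`, as the Bochner integral of translates
`∫ b(1,z) φ(· - |t|^{1/(2m)} z) dz`. The absolute value only serves to make it continuous on the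
whole line; the relevant times are nonnegative. -/
noncomputable def semi (m : ℕ) (t : ℝ) (φ : C₀(EuclideanSpace ℝ (Fin n), ℝ)) :
    C₀(EuclideanSpace ℝ (Fin n), ℝ) :=
  ∫ z, heatKern n m 1 z • shiftC0 (|t| ^ ((2 * m : ℝ)⁻¹) • z) φ

/-- The `L¹` norm of the kernel (independent of time by scaling). -/
noncomputable def kernNorm (n m : ℕ) : ℝ := ∫ z, |heatKern n m 1 z|

lemma kernNorm_nonneg (m : ℕ) : 0 ≤ kernNorm n m := integral_nonneg fun _ => abs_nonneg _

lemma integrable_shiftC0 {m : ℕ} (hm : 1 ≤ m) (a : ℝ) (φ : C₀(EuclideanSpace ℝ (Fin n), ℝ)) :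
    Integrable fun z => heatKern n m 1 z • shiftC0 (a • z) φ := by
  refine (integrable_heatKern_one n m hm).smul_bdd (C := ‖φ‖) ?_ ?_
  · exact ((continuous_shiftC0 φ).comp (continuous_const_smul a)).aestronglyMeasurable
  · exact ae_of_all _ fun z => norm_shiftC0_le _ _

lemma semi_sub {m : ℕ} (hm : 1 ≤ m) (t : ℝ) (φ ψ : C₀(EuclideanSpace ℝ (Fin n), ℝ)) :
    semi m t φ - semi m t ψ = semi m t (φ - ψ) := by
  simp only [semi]
  rw [← integral_sub (integrable_shiftC0 hm _ _) (integrable_shiftC0 hm _ _)]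
  congr with z : 1
  exact C0_smul_sub _ _ _

lemma norm_semi_le {m : ℕ} (hm : 1 ≤ m) (t : ℝ) (φ : C₀(EuclideanSpace ℝ (Fin n), ℝ)) :
    ‖semi m t φ‖ ≤ kernNorm n m * ‖φ‖ := by
  rw [kernNorm, ← integral_mul_const]
  refine norm_integral_le_of_norm_le ((integrable_heatKern_one n m hm).abs.mul_const _)
    (ae_of_all _ fun z => ?_)
  rw [norm_smul, Real.norm_eq_abs]
  gcongr
  exact norm_shiftC0_le _ _

lemma semi_apply {m : ℕ} (hm : 1 ≤ m) {t : ℝ} (ht : 0 ≤ t)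
    (φ : C₀(EuclideanSpace ℝ (Fin n), ℝ)) (x : EuclideanSpace ℝ (Fin n)) :
    semi m t φ x = Sop n m t φ x := by
  rw [Sop_eq n m hm t ht, ← evalC0_apply, semi,
    ← ContinuousLinearMap.integral_comp_comm _ (integrable_shiftC0 hm _ _), abs_of_nonneg ht]
  rfl

lemma continuous_semi {m : ℕ} (hm : 1 ≤ m) :
    Continuous fun q : ℝ × C₀(EuclideanSpace ℝ (Fin n), ℝ) => semi m q.1 q.2 := by
  have hm' : (0 : ℝ) ≤ (2 * m : ℝ)⁻¹ := by positivity
  refine continuous_prod_of_continuous_lipschitzWith' _ (kernNorm n m).toNNReal ?_ ?_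
  · intro t
    refine LipschitzWith.of_dist_le_mul fun φ ψ => ?_
    rw [dist_eq_norm, dist_eq_norm, semi_sub hm, Real.coe_toNNReal _ (kernNorm_nonneg m)]
    exact norm_semi_le hm _ _
  · intro φ
    refine continuous_of_dominated (bound := fun z => |heatKern n m 1 z| * ‖φ‖)
      (fun t => (integrable_shiftC0 hm _ _).aestronglyMeasurable) ?_
      ((integrable_heatKern_one n m hm).abs.mul_const _) ?_
    · intro t
      refine ae_of_all _ fun z => ?_
      rw [norm_smul, Real.norm_eq_abs]
      gcongr
      exact norm_shiftC0_le _ _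
    · refine ae_of_all _ fun z => ?_
      have h : Continuous fun t : ℝ => |t| ^ ((2 * m : ℝ)⁻¹) • z :=
        (continuous_abs.rpow_const fun _ => Or.inr hm').smul continuous_const
      exact ((continuous_shiftC0 φ).comp h).const_smul (heatKern n m 1 z)

end Semigroup

/-! ### The nonlinearity -/

section Nonlinearity

variable {n : ℕ} {p : ℝ}

/-- The Nemytskii operator `φ ↦ |φ|^p` on `C₀`. -/
noncomputable def powC0 (hp : 1 < p) (φ : C₀(EuclideanSpace ℝ (Fin n), ℝ)) :
    C₀(EuclideanSpace ℝ (Fin n), ℝ) where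
  toFun y := |φ y| ^ p
  continuous_toFun := φ.continuous.abs.rpow_const fun _ => Or.inr (by linarith)
  zero_at_infty' := by
    have h := (zero_at_infty φ).abs.rpow_const (p := p) (Or.inr (by linarith))
    simpa [Real.zero_rpow (by linarith : p ≠ 0)] using h

lemma powC0_apply (hp : 1 < p) (φ : C₀(EuclideanSpace ℝ (Fin n), ℝ))
    (x : EuclideanSpace ℝ (Fin n)) : powC0 hp φ x = |φ x| ^ p := rfl

lemma abs_rpow_sub_le (hp : 1 < p) {R a b : ℝ} (ha : |a| ≤ R) (hb : |b| ≤ R) :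
    |(|a| ^ p - |b| ^ p)| ≤ p * R ^ (p - 1) * |a - b| := by
  have h := Convex.norm_image_sub_le_of_norm_hasDerivWithin_le (𝕜 := ℝ)
    (f := fun x : ℝ => x ^ p) (f' := fun x => p * x ^ (p - 1)) (s := Set.Icc 0 R)
    (C := p * R ^ (p - 1)) (x := |b|) (y := |a|)
    (fun x _ => (Real.hasDerivAt_rpow_const (Or.inr hp.le)).hasDerivWithinAt)
    (fun x hx => by
      rw [Real.norm_of_nonneg (mul_nonneg (by linarith) (Real.rpow_nonneg hx.1 _))]
      exact mul_le_mul_of_nonneg_left (Real.rpow_le_rpow hx.1 hx.2 (by linarith)) (by linarith))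
    (convex_Icc 0 R) ⟨abs_nonneg b, hb⟩ ⟨abs_nonneg a, ha⟩
  simp only [Real.norm_eq_abs] at h
  refine h.trans ?_
  have hR : 0 ≤ R := (abs_nonneg a).trans ha
  exact mul_le_mul_of_nonneg_left (abs_abs_sub_abs_le_abs_sub a b) (by positivity)

lemma norm_powC0_sub_le (hp : 1 < p) {R : ℝ} {φ ψ : C₀(EuclideanSpace ℝ (Fin n), ℝ)}
    (hφ : ‖φ‖ ≤ R) (hψ : ‖ψ‖ ≤ R) :
    ‖powC0 hp φ - powC0 hp ψ‖ ≤ p * R ^ (p - 1) * ‖φ - ψ‖ := by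
  have hR : 0 ≤ R := (norm_nonneg φ).trans hφ
  refine (C0_norm_le (by positivity)).2 fun x => ?_
  calc _ ≤ p * R ^ (p - 1) * |φ x - ψ x| :=
        abs_rpow_sub_le hp ((C0_abs_le φ x).trans hφ) ((C0_abs_le ψ x).trans hψ)
    _ ≤ _ := by
        gcongr
        exact C0_abs_le (φ - ψ) x

lemma powC0_zero (hp : 1 < p) : powC0 hp (0 : C₀(EuclideanSpace ℝ (Fin n), ℝ)) = 0 := by
  ext x
  simp [powC0_apply, Real.zero_rpow (by linarith : p ≠ 0)]

lemma norm_powC0_le (hp : 1 < p) {R : ℝ} {φ : C₀(EuclideanSpace ℝ (Fin n), ℝ)}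
    (hφ : ‖φ‖ ≤ R) : ‖powC0 hp φ‖ ≤ p * R ^ (p - 1) * R := by
  have hR : 0 ≤ R := (norm_nonneg φ).trans hφ
  have h := norm_powC0_sub_le hp hφ (ψ := 0) (by simpa using hR)
  rw [powC0_zero, sub_zero, sub_zero] at h
  exact h.trans (by gcongr)

lemma continuous_powC0 (hp : 1 < p) :
    Continuous (powC0 hp : C₀(EuclideanSpace ℝ (Fin n), ℝ) → _) := by
  rw [continuous_iff_continuousAt]
  intro φ
  have h : LipschitzOnWith (p * (‖φ‖ + 1) ^ (p - 1)).toNNReal (powC0 hp)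
      (Metric.closedBall (0 : C₀(EuclideanSpace ℝ (Fin n), ℝ)) (‖φ‖ + 1)) := by
    refine LipschitzOnWith.of_dist_le_mul fun a ha b hb => ?_
    rw [dist_eq_norm, dist_eq_norm, Real.coe_toNNReal _ (by positivity)]
    exact norm_powC0_sub_le hp (by simpa using ha) (by simpa using hb)
  refine h.continuousOn.continuousAt ?_
  refine Filter.mem_of_superset (Metric.ball_mem_nhds φ one_pos) fun a ha => ?_
  rw [mem_closedBall_zero_iff]
  rw [mem_ball_iff_norm] at ha
  have := norm_sub_norm_le a φ
  linarith

end Nonlinearity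

/-! ### The Duhamel operator -/

section Duhamel

variable {n m : ℕ} {γ p : ℝ}

/-- The memory term `∫_0^s (s-σ)^{-γ} |u(σ)|^p dσ` as a Bochner integral in `C₀`, rescaled to the
unit interval by `σ = s θ`. -/
noncomputable def memory (γ : ℝ) (hp : 1 < p) (u : ℝ → C₀(EuclideanSpace ℝ (Fin n), ℝ)) (s : ℝ) :
    C₀(EuclideanSpace ℝ (Fin n), ℝ) :=
  s ^ (1 - γ) • ∫ θ in (0 : ℝ)..1, (1 - θ) ^ (-γ) • powC0 hp (u (s * θ))

/-- The Duhamel term `∫_0^t S(t-s) (memory u)(s) ds` as a Bochner integral in `C₀`, rescaled to the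
unit interval by `s = t θ`. -/
noncomputable def duhamel (m : ℕ) (γ : ℝ) (hp : 1 < p)
    (u : ℝ → C₀(EuclideanSpace ℝ (Fin n), ℝ)) (t : ℝ) : C₀(EuclideanSpace ℝ (Fin n), ℝ) :=
  t • ∫ θ in (0 : ℝ)..1, semi m (t * (1 - θ)) (memory γ hp u (t * θ))

lemma singular_intervalIntegrable (hγ1 : γ < 1) :
    IntervalIntegrable (fun θ : ℝ => (1 - θ) ^ (-γ)) volume 0 1 := by
  have h := (intervalIntegral.intervalIntegrable_rpow' (a := 0) (b := 1)
    (by linarith : -1 < -γ)).comp_sub_left 1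
  simpa using h.symm

lemma singular_integral (hγ1 : γ < 1) : ∫ θ in (0 : ℝ)..1, (1 - θ) ^ (-γ) = (1 - γ)⁻¹ := by
  rw [intervalIntegral.integral_comp_sub_left (fun x => x ^ (-γ)) 1,
    integral_rpow (Or.inl (by linarith))]
  have : -γ + 1 ≠ 0 := by linarith
  rw [sub_self, sub_zero, Real.one_rpow, Real.zero_rpow this, sub_zero, one_div, neg_add_eq_sub]

lemma memory_intervalIntegrable (hγ1 : γ < 1) (hp : 1 < p)
    {u : ℝ → C₀(EuclideanSpace ℝ (Fin n), ℝ)} (hu : Continuous u) (s : ℝ) :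
    IntervalIntegrable (fun θ : ℝ => (1 - θ) ^ (-γ) • powC0 hp (u (s * θ))) volume 0 1 :=
  (singular_intervalIntegrable hγ1).smul_continuousOn
    ((continuous_powC0 hp).comp (hu.comp (continuous_const_mul s))).continuousOn

lemma continuous_memory (hγ1 : γ < 1) (hp : 1 < p) {u : ℝ → C₀(EuclideanSpace ℝ (Fin n), ℝ)}
    (hu : Continuous u) {R : ℝ} (hR : ∀ t, ‖u t‖ ≤ R) : Continuous (memory γ hp u) := by
  refine (Real.continuous_rpow_const (by linarith)).smul ?_
  refine intervalIntegral.continuous_of_dominated_interval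
    (bound := fun θ => (1 - θ) ^ (-γ) * (p * R ^ (p - 1) * R)) ?_ ?_ ?_ ?_
  · intro s
    have h := (memory_intervalIntegrable hγ1 hp hu s).aestronglyMeasurable
    rwa [Set.uIoc_of_le zero_le_one]
  · intro s
    refine ae_of_all _ fun θ hθ => ?_
    rw [Set.uIoc_of_le zero_le_one] at hθ
    have h1 : 0 ≤ (1 - θ) ^ (-γ) := Real.rpow_nonneg (by linarith [hθ.2]) _
    rw [norm_smul, Real.norm_of_nonneg h1]
    exact mul_le_mul_of_nonneg_left (norm_powC0_le hp (hR _)) h1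
  · exact (singular_intervalIntegrable hγ1).mul_const _
  · refine ae_of_all _ fun θ _ => ?_
    have h : Continuous fun s => powC0 hp (u (s * θ)) :=
      (continuous_powC0 hp).comp (hu.comp (continuous_mul_const θ))
    exact h.const_smul ((1 - θ) ^ (-γ))

lemma memory_apply (hγ1 : γ < 1) (hp : 1 < p) {u : ℝ → C₀(EuclideanSpace ℝ (Fin n), ℝ)}
    (hu : Continuous u) {s : ℝ} (hs : 0 ≤ s) (y : EuclideanSpace ℝ (Fin n)) :
    memory γ hp u s y = ∫ σ in Set.Ioc (0 : ℝ) s, (s - σ) ^ (-γ) * |u σ y| ^ p := by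
  have h1 : memory γ hp u s y =
      s ^ (1 - γ) * ∫ θ in (0 : ℝ)..1, (1 - θ) ^ (-γ) * |u (s * θ) y| ^ p := by
    rw [← evalC0_apply, memory, map_smul,
      ← ContinuousLinearMap.intervalIntegral_comp_comm _ (memory_intervalIntegrable hγ1 hp hu s)]
    rfl
  rw [h1, ← intervalIntegral.integral_of_le hs]
  rcases hs.eq_or_lt with rfl | hs
  · rw [Real.zero_rpow (by linarith), zero_mul, intervalIntegral.integral_same]
  · have h2 := intervalIntegral.smul_integral_comp_mul_left (a := 0) (b := 1)
      (fun σ => (s - σ) ^ (-γ) * |u σ y| ^ p) s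
    rw [mul_zero, mul_one] at h2
    rw [← h2, sub_eq_add_neg, Real.rpow_add hs, Real.rpow_one, smul_eq_mul, mul_assoc,
      ← intervalIntegral.integral_const_mul]
    congr 1
    refine intervalIntegral.integral_congr fun θ hθ => ?_
    rw [Set.uIcc_of_le zero_le_one] at hθ
    have : s - s * θ = s * (1 - θ) := by ring
    simp only [this]
    rw [Real.mul_rpow hs.le (by linarith [hθ.2]), mul_assoc]

lemma continuous_duhamel_integrand (hm : 1 ≤ m) (hγ1 : γ < 1) (hp : 1 < p)
    {u : ℝ → C₀(EuclideanSpace ℝ (Fin n), ℝ)} (hu : Continuous u) {R : ℝ} (hR : ∀ t, ‖u t‖ ≤ R) :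
    Continuous (Function.uncurry fun t θ : ℝ =>
      semi m (t * (1 - θ)) (memory γ hp u (t * θ))) := by
  have h : Continuous fun q : ℝ × ℝ => (q.1 * (1 - q.2), memory γ hp u (q.1 * q.2)) :=
    (continuous_fst.mul (continuous_const.sub continuous_snd)).prodMk
      ((continuous_memory hγ1 hp hu hR).comp (continuous_fst.mul continuous_snd))
  exact (continuous_semi hm).comp h

lemma continuous_duhamel (hm : 1 ≤ m) (hγ1 : γ < 1) (hp : 1 < p)
    {u : ℝ → C₀(EuclideanSpace ℝ (Fin n), ℝ)} (hu : Continuous u) {R : ℝ} (hR : ∀ t, ‖u t‖ ≤ R) :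
    Continuous (duhamel m γ hp u) :=
  continuous_id.smul (intervalIntegral.continuous_parametric_intervalIntegral_of_continuous'
    (continuous_duhamel_integrand hm hγ1 hp hu hR) 0 1)

lemma duhamel_intervalIntegrable (hm : 1 ≤ m) (hγ1 : γ < 1) (hp : 1 < p)
    {u : ℝ → C₀(EuclideanSpace ℝ (Fin n), ℝ)} (hu : Continuous u) {R : ℝ} (hR : ∀ t, ‖u t‖ ≤ R)
    (t : ℝ) :
    IntervalIntegrable (fun θ : ℝ => semi m (t * (1 - θ)) (memory γ hp u (t * θ))) volume 0 1 :=
  ((continuous_duhamel_integrand hm hγ1 hp hu hR).comp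
    (Continuous.prodMk_right t)).intervalIntegrable _ _

/-- The Bochner-integral form of the Duhamel term agrees with the pointwise one. -/
lemma duhamel_apply (hm : 1 ≤ m) (hγ1 : γ < 1) (hp : 1 < p)
    {u : ℝ → C₀(EuclideanSpace ℝ (Fin n), ℝ)} (hu : Continuous u) {R : ℝ} (hR : ∀ t, ‖u t‖ ≤ R)
    {t : ℝ} (ht : 0 ≤ t) (x : EuclideanSpace ℝ (Fin n)) :
    duhamel m γ hp u t x = ∫ s in Set.Ioc (0 : ℝ) t,
        Sop n m (t - s)
          (fun y => ∫ σ in Set.Ioc (0 : ℝ) s, (s - σ) ^ (-γ) * |u σ y| ^ p) x := by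
  have h1 : duhamel m γ hp u t x =
      t * ∫ θ in (0 : ℝ)..1, semi m (t - t * θ) (memory γ hp u (t * θ)) x := by
    rw [← evalC0_apply, duhamel, map_smul, ← ContinuousLinearMap.intervalIntegral_comp_comm _
      (duhamel_intervalIntegrable hm hγ1 hp hu hR t), smul_eq_mul]
    simp only [mul_sub, mul_one, evalC0_apply]
  have h2 := intervalIntegral.smul_integral_comp_mul_left (a := 0) (b := 1)
      (fun s => semi m (t - s) (memory γ hp u s) x) t
  rw [mul_zero, mul_one, smul_eq_mul] at h2
  rw [h1, h2, intervalIntegral.integral_of_le ht]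
  refine setIntegral_congr_fun measurableSet_Ioc fun s hs => ?_
  rw [semi_apply hm (by linarith [hs.2])]
  congr 1
  ext y
  exact memory_apply hγ1 hp hu hs.1.le y

lemma norm_memory_sub_le (hγ1 : γ < 1) (hp : 1 < p) {u v : ℝ → C₀(EuclideanSpace ℝ (Fin n), ℝ)}
    (hu : Continuous u) (hv : Continuous v) {R T A : ℝ} {k : ℕ} (hA : 0 ≤ A)
    (huR : ∀ t, ‖u t‖ ≤ R) (hvR : ∀ t, ‖v t‖ ≤ R)
    (huv : ∀ σ ∈ Set.Icc 0 T, ‖u σ - v σ‖ ≤ A * σ ^ k) {s : ℝ} (hs : s ∈ Set.Icc 0 T) :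
    ‖memory γ hp u s - memory γ hp v s‖ ≤
      T ^ (1 - γ) * (1 - γ)⁻¹ * (p * R ^ (p - 1)) * (A * s ^ k) := by
  have hR : 0 ≤ R := (norm_nonneg _).trans (huR 0)
  have hs0 := hs.1
  have hγ : 0 < 1 - γ := by linarith
  have hsub : memory γ hp u s - memory γ hp v s = s ^ (1 - γ) • ∫ θ in (0 : ℝ)..1,
      (1 - θ) ^ (-γ) • (powC0 hp (u (s * θ)) - powC0 hp (v (s * θ))) := by
    rw [memory, memory, C0_smul_sub, ← intervalIntegral.integral_sub
      (memory_intervalIntegrable hγ1 hp hu s) (memory_intervalIntegrable hγ1 hp hv s)]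
    congr 2 with θ : 1
    exact C0_smul_sub _ _ _
  have hint : ‖∫ θ in (0 : ℝ)..1,
      (1 - θ) ^ (-γ) • (powC0 hp (u (s * θ)) - powC0 hp (v (s * θ)))‖ ≤
      ∫ θ in (0 : ℝ)..1, (1 - θ) ^ (-γ) * (p * R ^ (p - 1) * (A * s ^ k)) := by
    refine intervalIntegral.norm_integral_le_of_norm_le zero_le_one (ae_of_all _ fun θ hθ => ?_)
      ((singular_intervalIntegrable hγ1).mul_const _)
    have h1 : 0 ≤ (1 - θ) ^ (-γ) := Real.rpow_nonneg (by linarith [hθ.2]) _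
    have h0 : 0 ≤ s * θ := mul_nonneg hs0 hθ.1.le
    have h2 : s * θ ≤ s := mul_le_of_le_one_right hs0 hθ.2
    rw [norm_smul, Real.norm_of_nonneg h1]
    refine mul_le_mul_of_nonneg_left ?_ h1
    calc _ ≤ p * R ^ (p - 1) * ‖u (s * θ) - v (s * θ)‖ :=
          norm_powC0_sub_le hp (huR _) (hvR _)
      _ ≤ p * R ^ (p - 1) * (A * (s * θ) ^ k) := by
          gcongr
          exact huv _ ⟨h0, h2.trans hs.2⟩
      _ ≤ _ := by gcongr
  rw [intervalIntegral.integral_mul_const, singular_integral hγ1] at hint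
  rw [hsub, norm_smul, Real.norm_of_nonneg (Real.rpow_nonneg hs0 _)]
  calc _ ≤ T ^ (1 - γ) * ((1 - γ)⁻¹ * (p * R ^ (p - 1) * (A * s ^ k))) := by
        refine mul_le_mul (Real.rpow_le_rpow hs0 hs.2 hγ.le) hint (norm_nonneg _)
          (Real.rpow_nonneg (hs0.trans hs.2) _)
    _ = _ := by ring

/-- The constant in the Volterra estimate for the Duhamel operator on `[0,T]`, for functions with
values in the ball of radius `R`. -/
noncomputable def volterraConst (n m : ℕ) (γ p T R : ℝ) : ℝ :=
  kernNorm n m * (T ^ (1 - γ) * (1 - γ)⁻¹ * (p * R ^ (p - 1)))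

lemma volterraConst_nonneg (hγ1 : γ < 1) (hp : 1 < p) {T R : ℝ} (hT : 0 ≤ T) (hR : 0 ≤ R) :
    0 ≤ volterraConst n m γ p T R := by
  have hγ : 0 < 1 - γ := by linarith
  have := kernNorm_nonneg (n := n) m
  unfold volterraConst
  positivity

/-- The Volterra-type estimate behind both contraction and uniqueness: each application of the
Duhamel operator gains one power of time and a factor `1/(k+1)`. -/
lemma norm_duhamel_sub_le (hm : 1 ≤ m) (hγ1 : γ < 1) (hp : 1 < p)
    {u v : ℝ → C₀(EuclideanSpace ℝ (Fin n), ℝ)}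
    (hu : Continuous u) (hv : Continuous v) {R T A : ℝ} {k : ℕ} (hA : 0 ≤ A)
    (huR : ∀ t, ‖u t‖ ≤ R) (hvR : ∀ t, ‖v t‖ ≤ R)
    (huv : ∀ σ ∈ Set.Icc 0 T, ‖u σ - v σ‖ ≤ A * σ ^ k) {t : ℝ} (ht : t ∈ Set.Icc 0 T) :
    ‖duhamel m γ hp u t - duhamel m γ hp v t‖ ≤
      volterraConst n m γ p T R * A * t ^ (k + 1) / (k + 1) := by
  have ht0 := ht.1
  have hK := kernNorm_nonneg (n := n) m
  have hsub : duhamel m γ hp u t - duhamel m γ hp v t = t • ∫ θ in (0 : ℝ)..1,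
      semi m (t * (1 - θ)) (memory γ hp u (t * θ) - memory γ hp v (t * θ)) := by
    rw [duhamel, duhamel, C0_smul_sub, ← intervalIntegral.integral_sub
      (duhamel_intervalIntegrable hm hγ1 hp hu huR t)
      (duhamel_intervalIntegrable hm hγ1 hp hv hvR t)]
    congr 2 with θ : 1
    exact semi_sub hm _ _ _
  have hint : ‖∫ θ in (0 : ℝ)..1,
      semi m (t * (1 - θ)) (memory γ hp u (t * θ) - memory γ hp v (t * θ))‖ ≤
      ∫ θ in (0 : ℝ)..1, volterraConst n m γ p T R * (A * t ^ k) * θ ^ k := by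
    refine intervalIntegral.norm_integral_le_of_norm_le zero_le_one (ae_of_all _ fun θ hθ => ?_)
      ((continuous_const.mul (continuous_pow k)).intervalIntegrable _ _)
    have h0 : 0 ≤ t * θ := mul_nonneg ht0 hθ.1.le
    have h2 : t * θ ≤ t := mul_le_of_le_one_right ht0 hθ.2
    refine (norm_semi_le hm _ _).trans ?_
    calc _ ≤ kernNorm n m * (T ^ (1 - γ) * (1 - γ)⁻¹ * (p * R ^ (p - 1)) * (A * (t * θ) ^ k)) := by
          gcongr
          exact norm_memory_sub_le hγ1 hp hu hv hA huR hvR huv ⟨h0, h2.trans ht.2⟩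
      _ = _ := by rw [volterraConst, mul_pow]; ring
  rw [intervalIntegral.integral_const_mul, integral_pow] at hint
  rw [hsub, norm_smul, Real.norm_of_nonneg ht0]
  calc _ ≤ t * _ := mul_le_mul_of_nonneg_left hint ht0
    _ = _ := by
      rw [one_pow, zero_pow (Nat.succ_ne_zero k), pow_succ]
      ring

end Duhamel

/-! ### Uniqueness and existence -/

section Main

variable {n m : ℕ} {γ p : ℝ}

/-- The retraction of the real line onto `[0,T]`. -/
noncomputable def clamp (T t : ℝ) : ℝ := max 0 (min t T)

lemma continuous_clamp (T : ℝ) : Continuous (clamp T) :=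
  continuous_const.max (continuous_id.min continuous_const)

lemma clamp_mem {T : ℝ} (hT : 0 ≤ T) (t : ℝ) : clamp T t ∈ Set.Icc 0 T :=
  ⟨le_max_left _ _, max_le hT (min_le_right _ _)⟩

lemma clamp_of_mem {T t : ℝ} (ht : t ∈ Set.Icc 0 T) : clamp T t = t := by
  rw [clamp, min_eq_left ht.2, max_eq_right ht.1]

/-- A mild solution on `[0,T]`, extended by constants to a bounded continuous function on the whole
line, satisfies the integral equation in `C₀`. -/
lemma IsMildSolution.exists_extension (hm : 1 ≤ m) (hγ1 : γ < 1) (hp : 1 < p)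
    {u0 : C₀(EuclideanSpace ℝ (Fin n), ℝ)} {T : ℝ} (hT : 0 < T)
    {v : ℝ → C₀(EuclideanSpace ℝ (Fin n), ℝ)} (hv : IsMildSolution n m γ p u0 T v) :
    ∃ V : ℝ → C₀(EuclideanSpace ℝ (Fin n), ℝ), Continuous V ∧ (∃ R, ∀ t, ‖V t‖ ≤ R) ∧
      (∀ t ∈ Set.Icc 0 T, V t = v t) ∧
      ∀ t ∈ Set.Icc 0 T, V t = semi m t u0 + duhamel m γ hp V t := by
  have hc : Continuous fun t => v (clamp T t) :=
    hv.1.comp_continuous (continuous_clamp T) (clamp_mem hT.le)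
  obtain ⟨R, hR⟩ := isCompact_Icc.exists_bound_of_continuousOn hv.1
  have hR' : ∀ t, ‖v (clamp T t)‖ ≤ R := fun t => hR _ (clamp_mem hT.le t)
  refine ⟨fun t => v (clamp T t), hc, ⟨R, hR'⟩, fun t ht => by simp only [clamp_of_mem ht],
    fun t ht => ?_⟩
  ext x
  simp only [clamp_of_mem ht]
  rw [hv.2 t ht x, ZeroAtInftyContinuousMap.add_apply, semi_apply hm ht.1,
    duhamel_apply hm hγ1 hp hc hR' ht.1]
  congr 1
  refine setIntegral_congr_fun measurableSet_Ioc fun s hs => ?_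
  congr 1
  ext y
  refine setIntegral_congr_fun measurableSet_Ioc fun σ hσ => ?_
  rw [clamp_of_mem ⟨hσ.1.le, hσ.2.trans (hs.2.trans ht.2)⟩]

lemma mild_unique (hm : 1 ≤ m) (hγ1 : γ < 1) (hp : 1 < p)
    {u0 : C₀(EuclideanSpace ℝ (Fin n), ℝ)} {T : ℝ} (hT : 0 < T)
    {v w : ℝ → C₀(EuclideanSpace ℝ (Fin n), ℝ)} (hv : IsMildSolution n m γ p u0 T v)
    (hw : IsMildSolution n m γ p u0 T w) : ∀ t ∈ Set.Icc 0 T, v t = w t := by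
  obtain ⟨V, hVc, ⟨R₁, hV⟩, hVv, hVe⟩ := hv.exists_extension hm hγ1 hp hT
  obtain ⟨W, hWc, ⟨R₂, hW⟩, hWw, hWe⟩ := hw.exists_extension hm hγ1 hp hT
  set R := max R₁ R₂ with hRdef
  have hVR : ∀ t, ‖V t‖ ≤ R := fun t => (hV t).trans (le_max_left _ _)
  have hWR : ∀ t, ‖W t‖ ≤ R := fun t => (hW t).trans (le_max_right _ _)
  have hR : 0 ≤ R := (norm_nonneg _).trans (hVR 0)
  set K := volterraConst n m γ p T R with hK
  have hK0 : 0 ≤ K := volterraConst_nonneg hγ1 hp hT.le hR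
  -- Picard iteration of the Volterra estimate, starting from the trivial bound `2R`.
  have key : ∀ k : ℕ, ∀ t ∈ Set.Icc 0 T,
      ‖V t - W t‖ ≤ (2 * R * K ^ k / (k.factorial : ℝ)) * t ^ k := by
    intro k
    induction k with
    | zero =>
      intro t _
      have := norm_sub_le (V t) (W t)
      simp only [pow_zero, Nat.factorial_zero, Nat.cast_one, mul_one, div_one]
      linarith [hVR t, hWR t]
    | succ k ih =>
      intro t ht
      rw [hVe t ht, hWe t ht, add_sub_add_left_eq_sub]
      refine (norm_duhamel_sub_le hm hγ1 hp hVc hWc (by positivity) hVR hWR ih ht).trans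
        (le_of_eq ?_)
      rw [Nat.factorial_succ]
      push_cast
      rw [← hK]
      field_simp
      ring
  intro t ht
  rw [← hVv t ht, ← hWw t ht, ← sub_eq_zero, ← norm_le_zero_iff]
  have hlim : Tendsto (fun k : ℕ => 2 * R * ((K * t) ^ k / (k.factorial : ℝ))) atTop
      (nhds (2 * R * 0)) := (FloorSemiring.tendsto_pow_div_factorial_atTop (K * t)).const_mul _
  rw [mul_zero] at hlim
  refine ge_of_tendsto' hlim fun k => (key k t ht).trans (le_of_eq ?_)
  rw [mul_pow]
  ring

/-- The Picard map on bounded continuous functions on the line, frozen outside `[0,T]`. -/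
noncomputable def picard (hm : 1 ≤ m) (hγ1 : γ < 1) (hp : 1 < p)
    (u0 : C₀(EuclideanSpace ℝ (Fin n), ℝ)) {T : ℝ} (hT : 0 ≤ T)
    (u : BoundedContinuousFunction ℝ C₀(EuclideanSpace ℝ (Fin n), ℝ)) :
    BoundedContinuousFunction ℝ C₀(EuclideanSpace ℝ (Fin n), ℝ) where
  toFun t := semi m (clamp T t) u0 + duhamel m γ hp u (clamp T t)
  continuous_toFun := by
    have h1 : Continuous fun t => semi m (clamp T t) u0 :=
      (continuous_semi hm).comp ((continuous_clamp T).prodMk continuous_const)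
    exact h1.add ((continuous_duhamel hm hγ1 hp u.continuous u.norm_coe_le_norm).comp
      (continuous_clamp T))
  map_bounded' := by
    have hc : Continuous fun t => semi m t u0 + duhamel m γ hp u t :=
      ((continuous_semi hm).comp (continuous_id.prodMk continuous_const)).add
        (continuous_duhamel hm hγ1 hp u.continuous u.norm_coe_le_norm)
    obtain ⟨C, hC⟩ := Metric.isBounded_iff.1
      ((isCompact_Icc (a := (0 : ℝ)) (b := T)).image hc).isBounded
    exact ⟨C, fun s t => hC (Set.mem_image_of_mem _ (clamp_mem hT s))
      (Set.mem_image_of_mem _ (clamp_mem hT t))⟩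

lemma duhamel_zero (hp : 1 < p) (t : ℝ) :
    duhamel m γ hp (fun _ => (0 : C₀(EuclideanSpace ℝ (Fin n), ℝ))) t = 0 := by
  have h : ∀ s, memory γ hp (fun _ => (0 : C₀(EuclideanSpace ℝ (Fin n), ℝ))) s = 0 := by
    intro s
    have h1 : ∀ θ : ℝ, (1 - θ) ^ (-γ) • (0 : C₀(EuclideanSpace ℝ (Fin n), ℝ)) = 0 := by
      intro θ; ext x; simp
    simp only [memory, powC0_zero, h1, intervalIntegral.integral_zero]
    ext x; simp
  have h2 : ∀ s, semi m s (0 : C₀(EuclideanSpace ℝ (Fin n), ℝ)) = 0 := by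
    intro s
    have h3 : ∀ z, heatKern n m 1 z • shiftC0 (|s| ^ ((2 * m : ℝ)⁻¹) • z)
        (0 : C₀(EuclideanSpace ℝ (Fin n), ℝ)) = 0 := by
      intro z; ext x; simp [shiftC0_apply]
    simp only [semi, h3, integral_zero]
  simp only [duhamel, h, h2, intervalIntegral.integral_zero]
  ext x; simp

lemma mild_exists (hm : 1 ≤ m) (hγ1 : γ < 1) (hp : 1 < p)
    (u0 : C₀(EuclideanSpace ℝ (Fin n), ℝ)) :
    ∃ T > (0 : ℝ), ∃ u, IsMildSolution n m γ p u0 T u := by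
  have hN := kernNorm_nonneg (n := n) m
  set R := kernNorm n m * ‖u0‖ + 1 with hRdef
  have hR1 : 1 ≤ R := by
    have : 0 ≤ kernNorm n m * ‖u0‖ := by positivity
    linarith
  have hR0 : 0 ≤ R := by linarith
  set K := volterraConst n m γ p 1 R with hK
  have hK0 : 0 ≤ K := volterraConst_nonneg hγ1 hp zero_le_one hR0
  set T : ℝ := 1 / (2 * (K * R + 1)) with hTdef
  have hKR : 0 ≤ K * R := by positivity
  have hT : 0 < T := by positivity
  have hT1 : T ≤ 1 := by
    rw [hTdef, div_le_one (by positivity)]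
    linarith
  have hKRT : K * R * T ≤ 1 / 2 := by
    rw [hTdef, mul_one_div, div_le_div_iff₀ (by positivity) (by norm_num)]
    linarith
  have hKT : K * T ≤ 1 / 2 := by
    refine le_trans ?_ hKRT
    have : 0 ≤ K * T := by positivity
    nlinarith
  -- Lipschitz estimate for the Duhamel operator on `[0,T] ⊆ [0,1]`
  have hlip : ∀ u v : ℝ → C₀(EuclideanSpace ℝ (Fin n), ℝ), Continuous u → Continuous v →
      (∀ t, ‖u t‖ ≤ R) → (∀ t, ‖v t‖ ≤ R) → ∀ A, 0 ≤ A → (∀ t, ‖u t - v t‖ ≤ A) →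
      ∀ t ∈ Set.Icc 0 T, ‖duhamel m γ hp u t - duhamel m γ hp v t‖ ≤ K * A * T := by
    intro u v hu hv huR hvR A hA huv t ht
    have h := norm_duhamel_sub_le (k := 0) hm hγ1 hp hu hv hA huR hvR (T := 1)
      (fun σ _ => by simpa using huv σ) ⟨ht.1, ht.2.trans hT1⟩
    simp only [zero_add, pow_one, Nat.cast_zero, div_one] at h
    refine h.trans ?_
    rw [← hK]
    gcongr
    exact ht.2
  set Φ := picard hm hγ1 hp u0 hT.le with hΦ
  have hΦapp : ∀ u t, Φ u t = semi m (clamp T t) u0 + duhamel m γ hp u (clamp T t) :=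
    fun _ _ => rfl
  set B := Metric.closedBall
    (0 : BoundedContinuousFunction ℝ C₀(EuclideanSpace ℝ (Fin n), ℝ)) R with hB
  have hBmem : ∀ u, u ∈ B ↔ ∀ t, ‖u t‖ ≤ R := by
    intro u
    rw [hB, Metric.mem_closedBall, BoundedContinuousFunction.dist_le hR0]
    refine forall_congr' fun t => ?_
    rw [dist_eq_norm, BoundedContinuousFunction.coe_zero, Pi.zero_apply, sub_zero]
  have hball : ∀ u ∈ B, ∀ t, ‖u t‖ ≤ R := fun u hu => (hBmem u).1 hu
  have hmaps : Set.MapsTo Φ B B := by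
    intro u hu
    rw [hBmem]
    intro t
    have hd := hlip u (fun _ => 0) u.continuous continuous_const (hball u hu)
      (fun _ => by simpa using hR0) R hR0 (fun s => by simpa using hball u hu s) _
      (clamp_mem hT.le t)
    rw [duhamel_zero, sub_zero] at hd
    rw [hΦapp]
    refine (norm_add_le _ _).trans ?_
    have := norm_semi_le hm (clamp T t) u0
    linarith
  have hcontr : ContractingWith (1 / 2) (hmaps.restrict Φ B B) := by
    refine ⟨by norm_num, LipschitzWith.of_dist_le_mul fun u v => ?_⟩
    change dist (Φ u.1) (Φ v.1) ≤ _ * dist u.1 v.1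
    rw [BoundedContinuousFunction.dist_le (by positivity)]
    intro t
    rw [hΦapp, hΦapp, dist_add_left, dist_eq_norm]
    refine (hlip u.1 v.1 u.1.continuous v.1.continuous (hball _ u.2) (hball _ v.2)
      (dist u.1 v.1) dist_nonneg (fun s => ?_) _ (clamp_mem hT.le t)).trans ?_
    · rw [← dist_eq_norm]
      exact BoundedContinuousFunction.dist_coe_le_dist s
    · calc _ = K * T * dist u.1 v.1 := by ring
        _ ≤ 1 / 2 * dist u.1 v.1 := by gcongr
        _ = _ := by norm_num
  obtain ⟨u, huB, hfix, -⟩ := hcontr.exists_fixedPoint' Metric.isClosed_closedBall.isComplete hmaps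
    (Metric.mem_closedBall_self hR0) (edist_ne_top _ _)
  refine ⟨T, hT, u, u.continuous.continuousOn, fun t ht x => ?_⟩
  have h : u t = semi m t u0 + duhamel m γ hp u t := by
    conv_lhs => rw [← hfix.eq]
    rw [hΦapp, clamp_of_mem ht]
  rw [h, ZeroAtInftyContinuousMap.add_apply, semi_apply hm ht.1,
    duhamel_apply hm hγ1 hp u.continuous u.norm_coe_le_norm ht.1]

end Main

/-- Local existence and uniqueness: there exist `T > 0` and a unique mild
solution on `[0,T]`; moreover any two mild solutions on a common interval coincide. -/
theorem local_existence_and_uniqueness (n m : ℕ) (hn : 1 ≤ n) (hm : 1 ≤ m)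
    (γ p : ℝ) (hγ0 : 0 < γ) (hγ1 : γ < 1) (hp : 1 < p)
    (u0 : C₀(EuclideanSpace ℝ (Fin n), ℝ)) :
    ∃ T > (0 : ℝ), (∃ u, IsMildSolution n m γ p u0 T u) ∧
      ∀ T' > (0 : ℝ), ∀ v w, IsMildSolution n m γ p u0 T' v → IsMildSolution n m γ p u0 T' w →
        ∀ t ∈ Set.Icc (0 : ℝ) T', v t = w t := by
  obtain ⟨T, hT, hu⟩ := mild_exists hm hγ1 hp u0
  exact ⟨T, hT, hu, fun T' hT' v w hv hw => mild_unique hm hγ1 hp hT' hv hw⟩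
end

section
/- Let n≥1, m≥1 be integers, 0<γ<1, p>1, and suppose that either n - 2m + 2mγ ≤ 0, or (n - 2m + 2mγ > 0 and p ≤ 1 + 2m(2-γ)/(n - 2m + 2mγ)). Let v : ℝ × ℝ^n → ℝ be a bounded classical solution of v_t + (-Δ)^m v = ∫_{-∞}^t (t-s)^{-γ} |v(s,·)|^p ds on ℝ × ℝ^n. Then v ≡ 0. -/
/-!
Write `F(t,x)` for the memory term `∫_{-∞}^t (t-s)^{-γ} |v(s,x)|^p ds`. The theorem follows from a
rescaled test function argument once the equation is known in weak form.

**Conclusion from the weak form.** Let `A(R)` be the integral of `|v|^p` over the cylinder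
`[-R^{2m}, R^{2m}) × B_R`. Test the equation with `a(t/R^{2m}) b(x/R)`, where `a = 1` on `[-1,2]`
and `b = 1` on the unit ball. At times in `[R^{2m}, 2R^{2m}]` the memory kernel is at least
`(3R^{2m})^{-γ}` on the cylinder, so the nonlinear term is at least `c R^{2m(1-γ)} A(R)`
(`mass_le_memory`), whereas the linear terms only see the difference of the cylinders of radii `2R`
and `R`; Hölder's inequality bounds them by `C R^{-2m} R^{(n+2m)(1-1/p)} (A(2R) - A(R))^{1/p}`.
The condition on `p` says exactly that the powers of `R` can be dropped (`exponent_le`), hence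
`A(R) ≤ K (A(2R) - A(R))^{1/p}` for `R ≥ 1` (`mass_step`). Thus `A(2^j)` satisfies a superlinear
growth inequality while growing at most geometrically because `v` is bounded, so it vanishes
(`seq_eq_zero`). Using `A(R)^p ≤ K^p (A(2R) - A(R))` handles the critical exponent as well.

**The weak form.** Regularity is assumed in `t` and in `x` separately only: neither `∂_t v` nor
`(-Δ)^m v` is assumed bounded on compact sets of space-time, so integrating the equation against
a test function needs an argument. What is to be shown is that
`t ↦ ∫ v(t,x) ψ(x) dx` has derivative `∫ F ψ - ∫ v (-Δ)^m ψ` at each time (`Sol.weak`).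

* For each `k` the set of times at which `|(-Δ)^m v| ≤ k` on a ball is closed, since the bound can
  be tested against smooth functions (`isClosed_bound`). By Baire's theorem one such set contains an
  interval; the mean value theorem in `t` bounds `F(·,x)` at some time there, and comparing the
  memory term at two times makes `F` locally bounded (`exists_bound_F`).
* Let `E` be the closed set of times without a neighbourhood on which the weak form holds. On a gap
  of `E` the weak form may be tested with a truncated fundamental solution of `∂_s + (-Δ)^m`
  (`exists_kernel`), which yields `|v(t,x) - v(a,x)| ≤ C (t - a)` from a bound on `(-Δ)^m v` at the
  left end `a` and on `F` (`gap`). If `E` were nonempty, Baire's theorem on `E` would provide a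
  portion of `E` with a uniform bound on `(-Δ)^m v`; together with the gap estimate, `v` is
  Lipschitz to the right of each point of this portion (`chain_lipschitz`), so dominated convergence
  gives the right derivative of `∫ v ψ` there. A continuous function with a continuous right
  derivative is differentiable, which contradicts the choice of `E` (`weakSet_eq_univ`).
-/

open MeasureTheory Real

/-- Partial derivative in the `i`-th coordinate direction on `ℝⁿ`. -/
noncomputable def pderivE (n : ℕ) (i : Fin n)
    (f : EuclideanSpace ℝ (Fin n) → ℝ) : EuclideanSpace ℝ (Fin n) → ℝ :=
  fun x => fderiv ℝ f x (EuclideanSpace.single i 1)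

/-- The Laplacian `Δ f = Σᵢ ∂²f/∂xᵢ²` on `ℝⁿ`. -/
noncomputable def lapE (n : ℕ) (f : EuclideanSpace ℝ (Fin n) → ℝ) :
    EuclideanSpace ℝ (Fin n) → ℝ :=
  fun x => ∑ i : Fin n, pderivE n i (pderivE n i f) x

/-- The operator `(-Δ)^m = (-1)^m Δ^m` on functions on `ℝⁿ`. -/
noncomputable def negLapPow (n m : ℕ) (f : EuclideanSpace ℝ (Fin n) → ℝ) :
    EuclideanSpace ℝ (Fin n) → ℝ :=
  fun x => (-1 : ℝ) ^ m * ((lapE n)^[m] f) x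

section

open Set Filter Topology
open scoped ContDiff SchwartzMap FourierTransform LineDeriv Laplacian

/-! ### Calculus of the polyharmonic operator -/

/-- Shorthand for `ℝⁿ` with its Euclidean norm. -/
abbrev Sp (n : ℕ) := EuclideanSpace ℝ (Fin n)

lemma contDiff_pderivE {n : ℕ} {i : Fin n} {f : Sp n → ℝ} {k l : ℕ∞}
    (hf : ContDiff ℝ l f) (hk : k + 1 ≤ l) : ContDiff ℝ k (pderivE n i f) := by
  have h : ContDiff ℝ k (fderiv ℝ f) := hf.fderiv_right (by exact_mod_cast hk)
  exact h.clm_apply contDiff_const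

lemma contDiff_lapE {n : ℕ} {f : Sp n → ℝ} {k l : ℕ∞}
    (hf : ContDiff ℝ l f) (hk : k + 2 ≤ l) : ContDiff ℝ k (lapE n f) := by
  unfold lapE
  refine ContDiff.sum fun i _ => contDiff_pderivE (l := k + 1) (contDiff_pderivE hf ?_) le_rfl
  rwa [add_assoc, one_add_one_eq_two]

lemma contDiff_lapE_iterate {n : ℕ} (m : ℕ) {f : Sp n → ℝ} {k l : ℕ∞}
    (hf : ContDiff ℝ l f) (hk : k + (2 * m : ℕ) ≤ l) : ContDiff ℝ k ((lapE n)^[m] f) := by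
  induction m generalizing k with
  | zero => exact hf.of_le (by simpa using hk)
  | succ m ih =>
    rw [Function.iterate_succ_apply']
    refine contDiff_lapE (l := k + 2) (ih ?_) le_rfl
    refine le_trans (le_of_eq ?_) hk
    push_cast
    ring

lemma contDiff_negLapPow {n m : ℕ} {f : Sp n → ℝ} (hf : ContDiff ℝ ∞ f) :
    ContDiff ℝ ∞ (negLapPow n m f) :=
  contDiff_const.mul (contDiff_lapE_iterate (k := ⊤) (l := ⊤) m hf (by simp))

lemma continuous_negLapPow {n m : ℕ} {f : Sp n → ℝ} (hf : ContDiff ℝ (2 * m : ℕ) f) :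
    Continuous (negLapPow n m f) :=
  continuous_const.mul
    (contDiff_lapE_iterate (k := 0) (l := (2 * m : ℕ)) m hf (by simp)).continuous

lemma tsupport_pderivE {n : ℕ} {i : Fin n} (f : Sp n → ℝ) :
    tsupport (pderivE n i f) ⊆ tsupport f :=
  tsupport_fderiv_apply_subset ℝ _

lemma tsupport_lapE {n : ℕ} (f : Sp n → ℝ) : tsupport (lapE n f) ⊆ tsupport f := by
  refine closure_minimal (fun x hx => ?_) (isClosed_tsupport f)
  by_contra hc
  refine hx (Finset.sum_eq_zero fun i _ => ?_)
  exact image_eq_zero_of_notMem_tsupport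
    (fun h => hc (tsupport_pderivE f (tsupport_pderivE _ h)))

lemma tsupport_lapE_iterate {n : ℕ} (m : ℕ) (f : Sp n → ℝ) :
    tsupport ((lapE n)^[m] f) ⊆ tsupport f := by
  induction m with
  | zero => exact subset_rfl
  | succ m ih =>
    rw [Function.iterate_succ_apply']
    exact (tsupport_lapE _).trans ih

lemma tsupport_negLapPow {n m : ℕ} (f : Sp n → ℝ) :
    tsupport (negLapPow n m f) ⊆ tsupport f :=
  (tsupport_mul_subset_right (f := fun _ => (-1 : ℝ) ^ m)).trans (tsupport_lapE_iterate m f)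

lemma hasCompactSupport_of_tsupport_subset {n : ℕ} {f g : Sp n → ℝ} (hg : HasCompactSupport g)
    (h : tsupport f ⊆ tsupport g) : HasCompactSupport f :=
  hg.of_isClosed_subset (isClosed_tsupport f) h

lemma negLapPow_eq_zero {n m : ℕ} {f : Sp n → ℝ} {x : Sp n} (hx : x ∉ tsupport f) :
    negLapPow n m f x = 0 :=
  image_eq_zero_of_notMem_tsupport fun h => hx (tsupport_negLapPow f h)

lemma integrable_mul_of_compact {n : ℕ} {f g : Sp n → ℝ} (hf : Continuous f) (hg : Continuous g)
    (hc : HasCompactSupport g) : Integrable (fun x => f x * g x) :=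
  (hf.mul hg).integrable_of_hasCompactSupport hc.mul_left

lemma integral_pderivE_mul {n : ℕ} {i : Fin n} {f g : Sp n → ℝ} (hf : ContDiff ℝ 1 f)
    (hg : ContDiff ℝ 1 g) (hc : HasCompactSupport g) :
    ∫ x, pderivE n i f x * g x = - ∫ x, f x * pderivE n i g x := by
  have hf' : Continuous (pderivE n i f) :=
    (contDiff_pderivE (k := 0) (l := 1) hf (by simp)).continuous
  have hg' : Continuous (pderivE n i g) :=
    (contDiff_pderivE (k := 0) (l := 1) hg (by simp)).continuous
  have := integral_mul_fderiv_eq_neg_fderiv_mul_of_integrable (μ := volume) (f := f) (g := g)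
    (v := EuclideanSpace.single i 1)
    (integrable_mul_of_compact hf' hg.continuous hc)
    (integrable_mul_of_compact hf.continuous hg'
      (hasCompactSupport_of_tsupport_subset hc (tsupport_pderivE g)))
    (integrable_mul_of_compact hf.continuous hg.continuous hc)
    (fun x _ => hf.differentiable one_ne_zero x) (fun x _ => hg.differentiable one_ne_zero x)
  unfold pderivE
  rw [this, neg_neg]

lemma integral_lapE_mul {n : ℕ} {f g : Sp n → ℝ} (hf : ContDiff ℝ 2 f)
    (hg : ContDiff ℝ 2 g) (hc : HasCompactSupport g) :
    ∫ x, lapE n f x * g x = ∫ x, f x * lapE n g x := by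
  have hf1 (i) : ContDiff ℝ 1 (pderivE n i f) :=
    contDiff_pderivE (k := 1) (l := 2) hf (by norm_num)
  have hg1 (i) : ContDiff ℝ 1 (pderivE n i g) :=
    contDiff_pderivE (k := 1) (l := 2) hg (by norm_num)
  have hf2 (i) : Continuous (pderivE n i (pderivE n i f)) :=
    (contDiff_pderivE (k := 0) (l := 1) (hf1 i) (by simp)).continuous
  have hg2 (i) : Continuous (pderivE n i (pderivE n i g)) :=
    (contDiff_pderivE (k := 0) (l := 1) (hg1 i) (by simp)).continuous
  have hc1 (i) : HasCompactSupport (pderivE n i g) :=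
    hasCompactSupport_of_tsupport_subset hc (tsupport_pderivE g)
  have hc2 (i) : HasCompactSupport (pderivE n i (pderivE n i g)) :=
    hasCompactSupport_of_tsupport_subset (hc1 i) (tsupport_pderivE _)
  unfold lapE
  simp_rw [Finset.sum_mul, Finset.mul_sum]
  rw [integral_finsetSum _ fun i _ => integrable_mul_of_compact (hf2 i) hg.continuous hc,
    integral_finsetSum _ fun i _ => integrable_mul_of_compact hf.continuous (hg2 i) (hc2 i)]
  refine Finset.sum_congr rfl fun i _ => ?_
  rw [integral_pderivE_mul (hf1 i) (hg.of_le (by norm_num)) hc,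
    integral_pderivE_mul (hf.of_le (by norm_num)) (hg1 i) (hc1 i), neg_neg]

/-- `(-Δ)^m` is symmetric against test functions. -/
lemma integral_negLapPow_mul {n m : ℕ} {f g : Sp n → ℝ} (hf : ContDiff ℝ (2 * m : ℕ) f)
    (hg : ContDiff ℝ ∞ g) (hc : HasCompactSupport g) :
    ∫ x, negLapPow n m f x * g x = ∫ x, f x * negLapPow n m g x := by
  have key : ∀ (j : ℕ) (f g : Sp n → ℝ), ContDiff ℝ (2 * j : ℕ) f → ContDiff ℝ ∞ g →
      HasCompactSupport g →
      ∫ x, (lapE n)^[j] f x * g x = ∫ x, f x * (lapE n)^[j] g x := by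
    intro j
    induction j with
    | zero => intro f g _ _ _; rfl
    | succ j ih =>
      intro f g hf hg hc
      rw [Function.iterate_succ_apply', Function.iterate_succ_apply]
      have h2 : ContDiff ℝ 2 ((lapE n)^[j] f) :=
        contDiff_lapE_iterate (k := 2) (l := (2 * (j + 1) : ℕ)) j hf
          (le_of_eq (by push_cast; ring))
      rw [integral_lapE_mul h2 (contDiff_infty.1 hg 2) hc]
      exact ih f (lapE n g) (hf.of_le (by norm_cast; lia))
        (contDiff_lapE (k := ⊤) (l := ⊤) hg (by simp))
        (hasCompactSupport_of_tsupport_subset hc (tsupport_lapE g))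
  unfold negLapPow
  have e1 : ∀ x, (-1 : ℝ) ^ m * (lapE n)^[m] f x * g x
      = (-1 : ℝ) ^ m * ((lapE n)^[m] f x * g x) := fun x => by ring
  have e2 : ∀ x, f x * ((-1 : ℝ) ^ m * (lapE n)^[m] g x)
      = (-1 : ℝ) ^ m * (f x * (lapE n)^[m] g x) := fun x => by ring
  simp_rw [e1, e2, integral_const_mul, key m f g hf hg hc]

lemma pderivE_affine {n : ℕ} {i : Fin n} {f : Sp n → ℝ} (hf : Differentiable ℝ f)
    (b c : ℝ) (a : Sp n) :
    pderivE n i (fun y => b * f (c • (y - a))) =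
      fun y => b * c * pderivE n i f (c • (y - a)) := by
  funext y
  have h1 : HasFDerivAt (fun y : Sp n => c • (y - a)) (c • ContinuousLinearMap.id ℝ (Sp n)) y :=
    ((hasFDerivAt_id y).sub_const a).const_smul c
  have h2 := ((hf (c • (y - a))).hasFDerivAt.comp y h1).const_mul b
  have h3 : fderiv ℝ (fun y => b * f (c • (y - a))) y = _ := h2.fderiv
  unfold pderivE
  rw [h3]
  simp
  ring

lemma lapE_affine {n : ℕ} {f : Sp n → ℝ} (hf : ContDiff ℝ ∞ f) (b c : ℝ) (a : Sp n) :
    lapE n (fun y => b * f (c • (y - a))) = fun y => b * c ^ 2 * lapE n f (c • (y - a)) := by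
  funext y
  unfold lapE
  rw [Finset.mul_sum]
  refine Finset.sum_congr rfl fun i _ => ?_
  have h1 : ContDiff ℝ ∞ (pderivE n i f) := contDiff_pderivE (k := ⊤) (l := ⊤) hf (by simp)
  rw [pderivE_affine (hf.differentiable (by simp)),
    pderivE_affine (h1.differentiable (by simp))]
  ring

lemma negLapPow_affine {n m : ℕ} {f : Sp n → ℝ} (hf : ContDiff ℝ ∞ f) (b c : ℝ) (a : Sp n) :
    negLapPow n m (fun y => b * f (c • (y - a))) =
      fun y => b * c ^ (2 * m) * negLapPow n m f (c • (y - a)) := by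
  have key : ∀ j : ℕ, (lapE n)^[j] (fun y => b * f (c • (y - a))) =
      fun y => b * c ^ (2 * j) * (lapE n)^[j] f (c • (y - a)) := by
    intro j
    induction j with
    | zero => simp
    | succ j ih =>
      rw [Function.iterate_succ_apply', Function.iterate_succ_apply', ih,
        lapE_affine (contDiff_lapE_iterate (k := ⊤) (l := ⊤) j hf (by simp))]
      funext y
      ring
  funext y
  unfold negLapPow
  rw [key]
  ring

lemma negLapPow_comp_sub {n m : ℕ} {f : Sp n → ℝ} (hf : ContDiff ℝ ∞ f) (a y : Sp n) :
    negLapPow n m (fun y => f (y - a)) y = negLapPow n m f (y - a) := by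
  simpa using congrFun (negLapPow_affine (m := m) hf 1 1 a) y

lemma negLapPow_congr {n m : ℕ} {f g : Sp n → ℝ} {x : Sp n} (h : f =ᶠ[𝓝 x] g) :
    negLapPow n m f x = negLapPow n m g x := by
  have hp : ∀ (i : Fin n) (f g : Sp n → ℝ), f =ᶠ[𝓝 x] g →
      pderivE n i f =ᶠ[𝓝 x] pderivE n i g := by
    intro i f g h
    filter_upwards [h.fderiv (𝕜 := ℝ)] with y hy
    simp [pderivE, hy]
  have hl : ∀ (f g : Sp n → ℝ), f =ᶠ[𝓝 x] g → lapE n f =ᶠ[𝓝 x] lapE n g := by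
    intro f g h
    have : ∀ᶠ y in 𝓝 x, ∀ i : Fin n,
        pderivE n i (pderivE n i f) y = pderivE n i (pderivE n i g) y :=
      eventually_all.2 fun i => hp i _ _ (hp i _ _ h)
    filter_upwards [this] with y hy
    exact Finset.sum_congr rfl fun i _ => hy i
  have hi : ∀ j : ℕ, (lapE n)^[j] f =ᶠ[𝓝 x] (lapE n)^[j] g := by
    intro j
    induction j with
    | zero => exact h
    | succ j ih => simpa only [Function.iterate_succ_apply'] using hl _ _ ih
  simp only [negLapPow, (hi m).eq_of_nhds]

lemma norm_iteratedFDeriv_pderivE {n : ℕ} {i : Fin n} {f : Sp n → ℝ} (hf : ContDiff ℝ ∞ f)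
    (k : ℕ) (x : Sp n) :
    ‖iteratedFDeriv ℝ k (pderivE n i f) x‖ ≤ ‖iteratedFDeriv ℝ (k + 1) f x‖ := by
  have h1 : ContDiff ℝ ∞ (fderiv ℝ f) := hf.fderiv_right (by simp)
  have := ContinuousLinearMap.norm_iteratedFDeriv_comp_left
    (ContinuousLinearMap.apply ℝ ℝ (EuclideanSpace.single i (1 : ℝ)))
    (h1.contDiffAt (x := x)) (n := k) (by exact_mod_cast le_top)
  rw [norm_iteratedFDeriv_fderiv] at this
  refine (this.trans ?_)
  refine mul_le_of_le_one_left (norm_nonneg _) ?_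
  refine ContinuousLinearMap.opNorm_le_bound _ zero_le_one fun T => ?_
  simpa using T.le_opNorm (EuclideanSpace.single i (1 : ℝ))

lemma abs_negLapPow_le {n m : ℕ} {f : Sp n → ℝ} (hf : ContDiff ℝ ∞ f) (x : Sp n) :
    |negLapPow n m f x| ≤ (n : ℝ) ^ m * ‖iteratedFDeriv ℝ (2 * m) f x‖ := by
  have hl : ∀ (g : Sp n → ℝ), ContDiff ℝ ∞ g → ∀ k, ‖iteratedFDeriv ℝ k (lapE n g) x‖ ≤
      n * ‖iteratedFDeriv ℝ (k + 2) g x‖ := by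
    intro g hg k
    have h1 (i) : ContDiff ℝ ∞ (pderivE n i g) := contDiff_pderivE (k := ⊤) (l := ⊤) hg (by simp)
    have h2 (i) : ContDiff ℝ ∞ (pderivE n i (pderivE n i g)) :=
      contDiff_pderivE (k := ⊤) (l := ⊤) (h1 i) (by simp)
    unfold lapE
    rw [iteratedFDeriv_fun_sum_apply fun i _ => (contDiff_infty.1 (h2 i) k).contDiffAt]
    refine (norm_sum_le _ _).trans ?_
    refine (Finset.sum_le_card_nsmul _ _ ‖iteratedFDeriv ℝ (k + 2) g x‖ fun i _ => ?_).trans ?_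
    · exact (norm_iteratedFDeriv_pderivE (h1 i) k x).trans
        (norm_iteratedFDeriv_pderivE hg (k + 1) x)
    · simp
  have hi : ∀ j k : ℕ, ‖iteratedFDeriv ℝ k ((lapE n)^[j] f) x‖ ≤
      (n : ℝ) ^ j * ‖iteratedFDeriv ℝ (k + 2 * j) f x‖ := by
    intro j
    induction j with
    | zero => simp
    | succ j ih =>
      intro k
      rw [Function.iterate_succ_apply']
      refine (hl _ (contDiff_lapE_iterate (k := ⊤) (l := ⊤) j hf (by simp)) k).trans ?_
      have := ih (k + 2)
      rw [show k + 2 + 2 * j = k + 2 * (j + 1) by ring] at this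
      calc _ ≤ (n : ℝ) * ((n : ℝ) ^ j * ‖iteratedFDeriv ℝ (k + 2 * (j + 1)) f x‖) := by gcongr
        _ = _ := by ring
  have := hi m 0
  rw [zero_add, norm_iteratedFDeriv_zero] at this
  simpa [negLapPow, abs_mul] using this

/-! ### The profile of the fundamental solution -/

/-- A Schwartz function on `ℝ` agreeing with `u ↦ exp (-u)` on `[0, ∞)`. -/
lemma exists_schwartz_exp : ∃ h : 𝓢(ℝ, ℝ), ∀ u, 0 ≤ u → h u = Real.exp (-u) := by
  let f : ℝ → ℝ := fun u => Real.smoothTransition (u + 1) * Real.exp (-u)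
  have hf : ContDiff ℝ ∞ f := by
    refine ContDiff.mul (Real.smoothTransition.contDiff.comp (contDiff_id.add contDiff_const)) ?_
    exact Real.contDiff_exp.comp contDiff_neg
  have hpos : ∀ u, 0 ≤ u → f u = Real.exp (-u) := by
    intro u hu
    simp [f, Real.smoothTransition.one_of_one_le (show 1 ≤ u + 1 by linarith)]
  refine ⟨⟨f, hf, fun k j => ?_⟩, hpos⟩
  have hcont : Continuous fun u => ‖u‖ ^ k * ‖iteratedFDeriv ℝ j f u‖ :=
    (continuous_norm.pow k).mul (contDiff_infty.1 hf j).continuous_iteratedFDeriv'.norm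
  obtain ⟨C, hC⟩ := (isCompact_Icc (a := (-1 : ℝ)) (b := 1)).exists_bound_of_continuousOn
    hcont.continuousOn
  refine ⟨max C (k.factorial), fun u => ?_⟩
  rcases lt_or_ge u (-1) with h1 | h1
  · have : f =ᶠ[𝓝 u] fun _ => 0 := by
      filter_upwards [Iio_mem_nhds h1] with w hw
      have hw : w < -1 := hw
      simp [f, Real.smoothTransition.zero_of_nonpos (show w + 1 ≤ 0 by linarith)]
    rw [(this.iteratedFDeriv ℝ j).eq_of_nhds]
    have h0 : iteratedFDeriv ℝ j (fun _ : ℝ => (0 : ℝ)) u = 0 := by simp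
    rw [h0]
    simp only [norm_zero, mul_zero]
    exact le_max_of_le_right (by positivity)
  rcases le_or_gt u 1 with h2 | h2
  · refine le_max_of_le_left ?_
    have := hC u ⟨h1, h2⟩
    rwa [Real.norm_of_nonneg (by positivity)] at this
  · have : f =ᶠ[𝓝 u] fun s => Real.exp ((-1) * s) := by
      filter_upwards [Ioi_mem_nhds h2] with w hw
      have hw : 1 < w := hw
      rw [hpos w (by linarith)]
      simp
    refine le_max_of_le_right ?_
    rw [(this.iteratedFDeriv ℝ j).eq_of_nhds, norm_iteratedFDeriv_eq_norm_iteratedDeriv,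
      iteratedDeriv_exp_const_mul]
    have hu : 0 ≤ u := by linarith
    have h3 := Real.pow_div_factorial_le_exp u hu k
    rw [div_le_iff₀ (by positivity)] at h3
    have : ‖(-1 : ℝ) ^ j * Real.exp (-1 * u)‖ = Real.exp (-u) := by simp
    rw [this, Real.norm_of_nonneg hu, Real.exp_neg]
    rw [← div_eq_mul_inv, div_le_iff₀ (Real.exp_pos u)]
    linarith

/-- The Fourier symbol `(2π|ξ|)^{2m}` of `(-Δ)^m`. -/
noncomputable def symb (n m : ℕ) (ξ : Sp n) : ℝ := ((2 * π) ^ 2 * ‖ξ‖ ^ 2) ^ m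

lemma symb_nonneg {n m : ℕ} (ξ : Sp n) : 0 ≤ symb n m ξ := by unfold symb; positivity

lemma symb_smul {n m : ℕ} (c : ℝ) (ξ : Sp n) : symb n m (c • ξ) = c ^ (2 * m) * symb n m ξ := by
  unfold symb
  rw [norm_smul, mul_pow ‖c‖, Real.norm_eq_abs, sq_abs, pow_mul c 2 m, ← mul_pow]
  ring

lemma symb_tg {n m : ℕ} : (symb n m).HasTemperateGrowth := by
  unfold symb
  fun_prop

lemma continuous_symb {n m : ℕ} : Continuous (symb n m) := by
  unfold symb
  fun_prop

lemma lapE_re {n : ℕ} (f : 𝓢(Sp n, ℂ)) :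
    lapE n (fun x => (f x).re) = fun x => ((Δ f : 𝓢(Sp n, ℂ)) x).re := by
  have hp : ∀ (f : 𝓢(Sp n, ℂ)) (i : Fin n), pderivE n i (fun x => (f x).re) =
      fun x => ((∂_{EuclideanSpace.single i (1 : ℝ)} f : 𝓢(Sp n, ℂ)) x).re := by
    intro f i
    funext x
    have h1 := (Complex.reCLM.hasFDerivAt (x := f x)).comp x (f.differentiableAt (x := x)).hasFDerivAt
    have h2 : fderiv ℝ (fun x => (f x).re) x = _ := h1.fderiv
    unfold pderivE
    rw [h2, SchwartzMap.lineDerivOp_apply_eq_fderiv]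
    simp
  funext x
  rw [SchwartzMap.laplacian_eq_sum (EuclideanSpace.basisFun (Fin n) ℝ)]
  unfold lapE
  simp_rw [hp]
  simp

lemma laplacian_fourierInv {n : ℕ} (f : 𝓢(Sp n, ℂ)) :
    (Δ (𝓕⁻ f) : 𝓢(Sp n, ℂ)) =
      𝓕⁻ (SchwartzMap.smulLeftCLM ℂ (fun ξ : Sp n => -((2 * π) ^ 2 * ‖ξ‖ ^ 2)) f) := by
  rw [SchwartzMap.laplacian_eq_fourierMultiplierCLM, SchwartzMap.fourierMultiplierCLM_apply]
  rw [FourierInvPair.fourier_fourierInv_eq]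
  rw [← FourierTransform.fourierInv_smul]
  congr 1
  ext ξ
  rw [smul_apply, SchwartzMap.smulLeftCLM_apply_apply (by fun_prop),
    SchwartzMap.smulLeftCLM_apply_apply (by fun_prop)]
  simp
  ring

/-- `(-Δ)^m` acts on inverse Fourier transforms as multiplication by the symbol. -/
lemma negLapPow_re_fourierInv {n : ℕ} (m : ℕ) (f : 𝓢(Sp n, ℂ)) :
    negLapPow n m (fun x => ((𝓕⁻ f : 𝓢(Sp n, ℂ)) x).re) =
      fun x => ((𝓕⁻ (SchwartzMap.smulLeftCLM ℂ (symb n m) f) : 𝓢(Sp n, ℂ)) x).re := by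
  have key : ∀ j : ℕ, (lapE n)^[j] (fun x => ((𝓕⁻ f : 𝓢(Sp n, ℂ)) x).re) =
      fun x => ((𝓕⁻ (SchwartzMap.smulLeftCLM ℂ
        (fun ξ : Sp n => (-((2 * π) ^ 2 * ‖ξ‖ ^ 2)) ^ j) f) : 𝓢(Sp n, ℂ)) x).re := by
    intro j
    induction j with
    | zero => simp
    | succ j ih =>
      rw [Function.iterate_succ_apply', ih, lapE_re, laplacian_fourierInv,
        SchwartzMap.smulLeftCLM_smulLeftCLM_apply (by fun_prop) (by fun_prop)]
      simp only [pow_succ', Pi.mul_def]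
  funext x
  unfold negLapPow
  rw [key]
  have h : SchwartzMap.smulLeftCLM ℂ (symb n m) f = (-1 : ℝ) ^ m • SchwartzMap.smulLeftCLM ℂ
        (fun ξ : Sp n => (-((2 * π) ^ 2 * ‖ξ‖ ^ 2)) ^ m) f := by
    ext ξ
    rw [smul_apply, SchwartzMap.smulLeftCLM_apply_apply symb_tg,
      SchwartzMap.smulLeftCLM_apply_apply (by fun_prop), smul_smul, ← mul_pow]
    simp [symb]
  rw [h, FourierTransform.fourierInv_smul, smul_apply, Complex.smul_re, smul_eq_mul]

lemma re_fourierInv_apply {n : ℕ} (f : 𝓢(Sp n, ℂ)) (g : Sp n → ℝ) (hg : ∀ ξ, f ξ = (g ξ : ℂ))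
    (x : Sp n) :
    ((𝓕⁻ f : 𝓢(Sp n, ℂ)) x).re = ∫ ξ, g ξ * Real.cos (2 * π * inner ℝ ξ x) := by
  rw [SchwartzMap.fourierInv_coe, Real.fourierInv_eq']
  have hi : Integrable fun ξ : Sp n => Complex.exp (↑(2 * π * inner ℝ ξ x) * Complex.I) • f ξ := by
    refine f.integrable.norm.mono' ?_ ?_
    · exact (Continuous.aestronglyMeasurable (by fun_prop))
    · refine Eventually.of_forall fun ξ => ?_
      rw [norm_smul, Complex.norm_exp_ofReal_mul_I, one_mul]
  have := integral_re hi
  simp only [RCLike.re_to_complex] at this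
  rw [← this]
  refine integral_congr_ae (Eventually.of_forall fun ξ => ?_)
  simp only [hg, smul_eq_mul, Complex.re_mul_ofReal, Complex.exp_ofReal_mul_I_re]
  ring

/-- The profile `K` of the fundamental solution of `∂ₛ + (-Δ)^m`: a Schwartz function with Fourier
transform `exp (-(2π|ξ|)^{2m})`. -/
lemma exists_profile (n m : ℕ) (hm : 1 ≤ m) : ∃ K : 𝓢(Sp n, ℝ), ∫ x, K x = 1 ∧
    (∀ x, K x = ∫ ξ, Real.exp (-symb n m ξ) * Real.cos (2 * π * inner ℝ ξ x)) ∧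
    (∀ x, negLapPow n m K x =
      ∫ ξ, symb n m ξ * Real.exp (-symb n m ξ) * Real.cos (2 * π * inner ℝ ξ x)) ∧
    Integrable (fun ξ => Real.exp (-symb n m ξ)) ∧
    Integrable (fun ξ => symb n m ξ * Real.exp (-symb n m ξ)) := by
  obtain ⟨h, hh⟩ := exists_schwartz_exp
  have hup : ∃ (k : ℕ) (C : ℝ), ∀ x : Sp n, ‖x‖ ≤ C * (1 + ‖symb n m x‖) ^ k := by
    refine ⟨1, 1, fun x => ?_⟩
    rw [one_mul, pow_one, Real.norm_of_nonneg (symb_nonneg x)]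
    rcases le_total ‖x‖ 1 with h1 | h1
    · linarith [symb_nonneg (m := m) x]
    · have h2 : ‖x‖ ≤ (2 * π) ^ 2 * ‖x‖ ^ 2 := by
        have : (1 : ℝ) ≤ (2 * π) ^ 2 := by nlinarith [Real.pi_gt_three]
        nlinarith [sq_nonneg ‖x‖]
      have h3 : (2 * π) ^ 2 * ‖x‖ ^ 2 ≤ symb n m x :=
        le_self_pow₀ (h1.trans h2) (by lia)
      linarith
  let G0 : 𝓢(Sp n, ℝ) := SchwartzMap.compCLM ℝ symb_tg hup h
  have hG0 : ∀ ξ, G0 ξ = Real.exp (-symb n m ξ) := fun ξ => hh _ (symb_nonneg ξ)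
  let G : 𝓢(Sp n, ℂ) := SchwartzMap.postcompCLM Complex.ofRealCLM G0
  have hG : ∀ ξ, G ξ = (Real.exp (-symb n m ξ) : ℝ) := by
    intro ξ
    rw [← hG0]
    rfl
  let K : 𝓢(Sp n, ℝ) := SchwartzMap.postcompCLM Complex.reCLM (𝓕⁻ G)
  have hK : (K : Sp n → ℝ) = fun x => ((𝓕⁻ G : 𝓢(Sp n, ℂ)) x).re := rfl
  have hG1 : ∀ ξ, SchwartzMap.smulLeftCLM ℂ (symb n m) G ξ =
      ((symb n m ξ * Real.exp (-symb n m ξ) : ℝ) : ℂ) := by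
    intro ξ
    rw [SchwartzMap.smulLeftCLM_apply_apply symb_tg, hG]
    simp
  refine ⟨K, ?_, ?_, ?_, ?_, ?_⟩
  · have h1 : (𝓕 (𝓕⁻ G) : 𝓢(Sp n, ℂ)) 0 = 1 := by
      rw [FourierInvPair.fourier_fourierInv_eq, hG]
      simp [symb, show m ≠ 0 by lia]
    rw [SchwartzMap.fourier_coe, Real.fourier_eq'] at h1
    simp only [inner_zero_right, mul_zero, Complex.ofReal_zero, zero_mul,
      Complex.exp_zero, one_smul] at h1
    have h2 := integral_re (𝓕⁻ G : 𝓢(Sp n, ℂ)).integrable (μ := volume)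
    rw [h1] at h2
    simpa [hK] using h2
  · intro x
    rw [hK]
    exact re_fourierInv_apply G _ hG x
  · intro x
    rw [hK, negLapPow_re_fourierInv]
    exact re_fourierInv_apply _ _ hG1 x
  · exact (G0.integrable).congr (Eventually.of_forall hG0)
  · refine ((SchwartzMap.smulLeftCLM ℝ (symb n m) G0).integrable (μ := volume)).congr
      (Eventually.of_forall fun ξ => ?_)
    rw [SchwartzMap.smulLeftCLM_apply_apply symb_tg, hG0]
    rfl

/-! ### The fundamental solution -/

/-- The spatial dilation factor `s^{-1/(2m)}` of the fundamental solution at time `s`. -/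
noncomputable def lam (m : ℕ) (s : ℝ) : ℝ := s ^ (-(1 / (2 * m : ℝ)))

lemma lam_pos {m : ℕ} {s : ℝ} (hs : 0 < s) : 0 < lam m s := Real.rpow_pos_of_pos hs _

lemma lam_inv_pow {m : ℕ} (hm : 1 ≤ m) {s : ℝ} (hs : 0 < s) : (lam m s)⁻¹ ^ (2 * m) = s := by
  have h0 : (2 * m : ℝ) ≠ 0 := by positivity
  unfold lam
  rw [← Real.rpow_neg hs.le, neg_neg, ← Real.rpow_natCast, ← Real.rpow_mul hs.le]
  push_cast
  rw [one_div, inv_mul_cancel₀ h0, Real.rpow_one]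

lemma lam_le {m : ℕ} {s₀ s : ℝ} (hs : 0 < s₀) (h : s₀ ≤ s) : lam m s ≤ lam m s₀ :=
  Real.rpow_le_rpow_of_nonpos hs h (by simp only [Left.neg_nonpos_iff]; positivity)

lemma tendsto_lam_inv {m : ℕ} (hm : 1 ≤ m) : Tendsto (fun s => (lam m s)⁻¹) (𝓝[>] 0) (𝓝 0) := by
  have h : 0 < 1 / (2 * m : ℝ) := by positivity
  have h1 : Tendsto (fun s : ℝ => s ^ (1 / (2 * m : ℝ))) (𝓝[>] 0) (𝓝 0) := by
    have := (Real.continuousAt_rpow_const 0 (1 / (2 * m : ℝ)) (Or.inr h.le)).tendsto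
    rw [Real.zero_rpow h.ne'] at this
    exact this.mono_left nhdsWithin_le_nhds
  refine h1.congr' ?_
  filter_upwards [self_mem_nhdsWithin] with s hs
  unfold lam
  rw [← Real.rpow_neg (le_of_lt hs), neg_neg]

lemma integral_cos_scale {n : ℕ} (g : Sp n → ℝ) {c : ℝ} (hc : 0 < c) (x : Sp n) :
    c ^ n * ∫ ξ, g ξ * Real.cos (2 * π * inner ℝ ξ (c • x)) =
      ∫ ξ, g (c⁻¹ • ξ) * Real.cos (2 * π * inner ℝ ξ x) := by
  have := Measure.integral_comp_inv_smul (μ := (volume : Measure (Sp n)))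
    (fun ξ => g ξ * Real.cos (2 * π * inner ℝ ξ (c • x))) c
  rw [finrank_euclideanSpace_fin, abs_of_pos (by positivity), smul_eq_mul] at this
  rw [← this]
  refine integral_congr_ae (Eventually.of_forall fun ξ => ?_)
  simp only [inner_smul_left, inner_smul_right]
  congr 4
  simp [hc.ne']

lemma integrable_symb_exp {n m : ℕ} (hm : 1 ≤ m)
    (h : Integrable (fun ξ : Sp n => symb n m ξ * Real.exp (-symb n m ξ))) {c : ℝ} (hc : 0 < c) :
    Integrable (fun ξ : Sp n => symb n m ξ * Real.exp (-(c * symb n m ξ))) := by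
  have h1 := (h.comp_smul (R := (lam m c)⁻¹) (inv_pos.2 (lam_pos hc)).ne').const_mul c⁻¹
  refine h1.congr (Eventually.of_forall fun ξ => ?_)
  simp only [symb_smul, lam_inv_pow hm hc]
  field_simp

/-- The dilates `λⁿ K(λ x)`, `λ = s^{-1/(2m)}`, of the profile solve `∂ₛ k + (-Δ)^m k = 0`. -/
lemma hasDerivAt_heat {n m : ℕ} (hm : 1 ≤ m) {K : 𝓢(Sp n, ℝ)}
    (hK : ∀ x, K x = ∫ ξ, Real.exp (-symb n m ξ) * Real.cos (2 * π * inner ℝ ξ x))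
    (hLK : ∀ x, negLapPow n m K x =
      ∫ ξ, symb n m ξ * Real.exp (-symb n m ξ) * Real.cos (2 * π * inner ℝ ξ x))
    (hi : Integrable (fun ξ => Real.exp (-symb n m ξ)))
    (hi1 : Integrable (fun ξ => symb n m ξ * Real.exp (-symb n m ξ)))
    {s : ℝ} (hs : 0 < s) (x : Sp n) :
    HasDerivAt (fun s => lam m s ^ n * K (lam m s • x))
      (-(lam m s ^ n * lam m s ^ (2 * m) * negLapPow n m K (lam m s • x))) s := by
  have e1 : ∀ s, 0 < s → lam m s ^ n * K (lam m s • x) =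
      ∫ ξ, Real.exp (-(s * symb n m ξ)) * Real.cos (2 * π * inner ℝ ξ x) := by
    intro s hs
    rw [hK, integral_cos_scale _ (lam_pos hs)]
    simp only [symb_smul, lam_inv_pow hm hs]
  have e2 : -(lam m s ^ n * lam m s ^ (2 * m) * negLapPow n m K (lam m s • x)) =
      ∫ ξ, (Real.exp (-(s * symb n m ξ)) * (-symb n m ξ)) * Real.cos (2 * π * inner ℝ ξ x) := by
    rw [hLK, mul_right_comm, integral_cos_scale _ (lam_pos hs)]
    simp only [symb_smul, lam_inv_pow hm hs]
    rw [← integral_mul_const, ← integral_neg]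
    refine integral_congr_ae (Eventually.of_forall fun ξ => ?_)
    have h1 : s * lam m s ^ (2 * m) = 1 := by
      have := lam_inv_pow hm hs
      rw [inv_pow] at this
      have h2 : lam m s ^ (2 * m) ≠ 0 := (pow_pos (lam_pos hs) _).ne'
      nth_rewrite 1 [← this]
      exact inv_mul_cancel₀ h2
    linear_combination (-(symb n m ξ * Real.exp (-(s * symb n m ξ)) *
      Real.cos (2 * π * inner ℝ ξ x))) * h1
  rw [e2]
  have hev : (fun s => lam m s ^ n * K (lam m s • x)) =ᶠ[𝓝 s] fun s =>
      ∫ ξ, Real.exp (-(s * symb n m ξ)) * Real.cos (2 * π * inner ℝ ξ x) := by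
    filter_upwards [Ioi_mem_nhds hs] with s hs using e1 s hs
  refine HasDerivAt.congr_of_eventuallyEq ?_ hev
  have hint : Integrable (fun ξ : Sp n => Real.exp (-(s * symb n m ξ))) := by
    refine (hi.comp_smul (R := (lam m s)⁻¹) (inv_pos.2 (lam_pos hs)).ne').congr
      (Eventually.of_forall fun ξ => ?_)
    simp only [symb_smul, lam_inv_pow hm hs]
  have hcs := continuous_symb (n := n) (m := m)
  refine (hasDerivAt_integral_of_dominated_loc_of_deriv_le (μ := volume)
    (F := fun s ξ => Real.exp (-(s * symb n m ξ)) * Real.cos (2 * π * inner ℝ ξ x))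
    (F' := fun s ξ => Real.exp (-(s * symb n m ξ)) * (-symb n m ξ) *
      Real.cos (2 * π * inner ℝ ξ x))
    (bound := fun ξ : Sp n => symb n m ξ * Real.exp (-(s / 2 * symb n m ξ)))
    (Ioi_mem_nhds (show s / 2 < s by linarith))
    (Eventually.of_forall fun s => Continuous.aestronglyMeasurable (by fun_prop))
    ?_ (Continuous.aestronglyMeasurable (by fun_prop)) ?_
    (integrable_symb_exp hm hi1 (half_pos hs)) ?_).2
  · refine hint.mono' (Continuous.aestronglyMeasurable (by fun_prop)) ?_
    refine Eventually.of_forall fun ξ => ?_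
    rw [norm_mul, Real.norm_eq_abs, Real.norm_eq_abs, Real.abs_exp]
    exact mul_le_of_le_one_right (Real.exp_pos _).le (Real.abs_cos_le_one _)
  · refine Eventually.of_forall fun ξ u hu => ?_
    have hu : s / 2 < u := hu
    have h0 := symb_nonneg (m := m) ξ
    rw [norm_mul, norm_mul, norm_neg, Real.norm_of_nonneg h0, Real.norm_of_nonneg (Real.exp_pos _).le,
      Real.norm_eq_abs, mul_comm (Real.exp _)]
    refine (mul_le_of_le_one_right (by positivity) (Real.abs_cos_le_one _)).trans ?_
    gcongr
  · refine Eventually.of_forall fun ξ u _ => ?_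
    refine HasDerivAt.mul_const ?_ _
    have := ((hasDerivAt_id u).mul_const (symb n m ξ)).neg.exp
    simpa using this

/-! ### A compactly supported parametrix -/

/-- Away from the origin all derivatives of the dilates `λⁿ K(λ x)` are bounded uniformly in `λ`. -/
lemma norm_iteratedFDeriv_dilate_le {n : ℕ} (K : 𝓢(Sp n, ℝ)) (j : ℕ) {ρ : ℝ} (hρ : 0 < ρ) :
    ∃ C, 0 ≤ C ∧ ∀ c : ℝ, 0 < c → ∀ x : Sp n, ρ ≤ ‖x‖ →
      ‖iteratedFDeriv ℝ j (fun x => c ^ n * K (c • x)) x‖ ≤ C := by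
  obtain ⟨C, hC⟩ := K.decay' (n + j) j
  have hC0 : 0 ≤ C := le_trans (by positivity) (hC 0)
  refine ⟨C / ρ ^ (n + j), by positivity, fun c hc x hx => ?_⟩
  have hKs : ContDiff ℝ ∞ K := K.smooth ⊤
  have h1 : ContDiff ℝ ∞ (fun x => K (c • x)) := hKs.comp (contDiff_const_smul c)
  have h2 : iteratedFDeriv ℝ j (fun x => c ^ n * K (c • x)) x =
      c ^ n • c ^ j • iteratedFDeriv ℝ j K (c • x) := by
    have := iteratedFDeriv_const_smul_apply (a := c ^ n) (contDiff_infty.1 h1 j).contDiffAt (x := x)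
    rw [iteratedFDeriv_comp_const_smul c (contDiff_infty.1 hKs j)] at this
    exact this
  rw [h2, norm_smul, norm_smul, Real.norm_of_nonneg (by positivity),
    Real.norm_of_nonneg (by positivity), le_div_iff₀ (by positivity)]
  refine le_trans ?_ (hC (c • x))
  rw [norm_smul, Real.norm_of_nonneg hc.le]
  calc c ^ n * (c ^ j * ‖iteratedFDeriv ℝ j K (c • x)‖) * ρ ^ (n + j)
      = (c * ρ) ^ (n + j) * ‖iteratedFDeriv ℝ j K (c • x)‖ := by ring
    _ ≤ _ := by gcongr; rfl

/-- A compactly supported parametrix for `∂ₛ + (-Δ)^m`: an approximate identity `Q s`, supported in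
`closedBall 0 r`, satisfying the equation up to a bounded error. -/
lemma exists_kernel (n m : ℕ) (hm : 1 ≤ m) {r : ℝ} (hr : 0 < r) :
    ∃ (Q Q' : ℝ → Sp n → ℝ) (C : ℝ), 0 ≤ C ∧
      (∀ s, ContDiff ℝ ∞ (Q s)) ∧
      (∀ s, tsupport (Q s) ⊆ Metric.closedBall 0 r) ∧
      (∀ s, Continuous (Q' s)) ∧
      (∀ s x, x ∉ Metric.closedBall (0 : Sp n) r → Q' s x = 0) ∧
      (∀ s, 0 < s → ∀ x, HasDerivAt (fun s => Q s x) (Q' s x) s) ∧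
      (∀ s, 0 < s → ∀ x, |Q' s x + negLapPow n m (Q s) x| ≤ C) ∧
      (∀ s, 0 < s → ∫ x, |Q s x| ≤ C) ∧
      (∀ s₀, 0 < s₀ → ∃ B, ∀ s, s₀ ≤ s → ∀ x, |Q' s x| ≤ B) ∧
      (∀ (g : Sp n → ℝ) (x : Sp n), Continuous g → (∃ M, ∀ y, |g y| ≤ M) →
        Tendsto (fun s => ∫ y, g y * Q s (y - x)) (𝓝[>] 0) (𝓝 (g x))) := by
  obtain ⟨K, hK1, hK, hLK, hi, hi1⟩ := exists_profile n m hm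
  let η : ContDiffBump (0 : Sp n) := ⟨r / 2, r, half_pos hr, half_lt_self hr⟩
  have hηs : ContDiff ℝ ∞ η := η.contDiff
  have hKs : ContDiff ℝ ∞ K := K.smooth ⊤
  let k : ℝ → Sp n → ℝ := fun s x => lam m s ^ n * K (lam m s • x)
  have hks (s) : ContDiff ℝ ∞ (k s) :=
    contDiff_const.mul (hKs.comp (contDiff_const_smul _))
  have hLk (s) (x : Sp n) : negLapPow n m (k s) x =
      lam m s ^ n * lam m s ^ (2 * m) * negLapPow n m K (lam m s • x) := by
    simpa using congrFun (negLapPow_affine (m := m) hKs (lam m s ^ n) (lam m s) 0) x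
  have hLKc : Continuous (negLapPow n m K) := (contDiff_negLapPow hKs).continuous
  let Q : ℝ → Sp n → ℝ := fun s x => η x * k s x
  let Q' : ℝ → Sp n → ℝ := fun s x => η x * (-negLapPow n m (k s) x)
  have hQs (s) : ContDiff ℝ ∞ (Q s) := hηs.mul (hks s)
  obtain ⟨B0, hB0⟩ := K.decay' 0 (2 * m)
  have hLKb : ∀ x, |negLapPow n m K x| ≤ n ^ m * B0 := by
    intro x
    refine (abs_negLapPow_le hKs x).trans ?_
    have := hB0 x
    rw [pow_zero, one_mul] at this
    gcongr
    exact this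
  -- Where the cutoff `η` is `1` the equation holds exactly; elsewhere `‖x‖ ≥ r / 2`, where all
  -- derivatives of the dilated profile are bounded uniformly in `s`.
  have herr : ∃ C, 0 ≤ C ∧ ∀ s, 0 < s → ∀ x, |Q' s x + negLapPow n m (Q s) x| ≤ C := by
    choose A hA0 hA using fun j => norm_iteratedFDeriv_dilate_le K j (half_pos hr)
    have hηb : ∀ j, ∃ D, ∀ x, ‖iteratedFDeriv ℝ j η x‖ ≤ D := by
      intro j
      exact (η.hasCompactSupport.iteratedFDeriv (𝕜 := ℝ) j).exists_bound_of_continuous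
        (contDiff_infty.1 hηs j).continuous_iteratedFDeriv'
    choose D hD using hηb
    have hD0 : ∀ j, 0 ≤ D j := fun j => (norm_nonneg _).trans (hD j 0)
    refine ⟨n ^ m * A (2 * m) + n ^ m * ∑ i ∈ Finset.range (2 * m + 1),
      ((2 * m).choose i : ℝ) * D i * A (2 * m - i), ?_, ?_⟩
    · have := hA0 (2 * m)
      have : 0 ≤ ∑ i ∈ Finset.range (2 * m + 1), ((2 * m).choose i : ℝ) * D i * A (2 * m - i) :=
        Finset.sum_nonneg fun i _ => mul_nonneg (mul_nonneg (by positivity) (hD0 i)) (hA0 _)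
      positivity
    intro s hs x
    rcases lt_or_ge ‖x‖ (r / 2) with hx | hx
    · have h1 : Q s =ᶠ[𝓝 x] k s := by
        filter_upwards [Metric.isOpen_ball.mem_nhds
          (show x ∈ Metric.ball (0 : Sp n) (r / 2) by simpa using hx)] with y hy
        have : η y = 1 := η.one_of_mem_closedBall (Metric.ball_subset_closedBall hy)
        simp [Q, this]
      have h2 : η x = 1 := η.one_of_mem_closedBall (by simpa using hx.le)
      rw [negLapPow_congr h1]
      simp only [Q', h2, one_mul, neg_add_cancel, abs_zero]
      have := hA0 (2 * m)
      have : 0 ≤ ∑ i ∈ Finset.range (2 * m + 1), ((2 * m).choose i : ℝ) * D i * A (2 * m - i) :=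
        Finset.sum_nonneg fun i _ => mul_nonneg (mul_nonneg (by positivity) (hD0 i)) (hA0 _)
      positivity
    · refine (abs_add_le _ _).trans (add_le_add ?_ ?_)
      · simp only [Q', abs_mul, abs_neg]
        refine (mul_le_of_le_one_left (abs_nonneg _) ?_).trans ?_
        · rw [abs_of_nonneg η.nonneg]
          exact η.le_one
        · refine (abs_negLapPow_le (hks s) x).trans ?_
          gcongr
          exact hA _ _ (lam_pos hs) x hx
      · refine (abs_negLapPow_le (hQs s) x).trans ?_
        gcongr
        refine (norm_iteratedFDeriv_mul_le (contDiff_infty.1 hηs (2 * m))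
          (contDiff_infty.1 (hks s) (2 * m)) x le_rfl).trans ?_
        refine Finset.sum_le_sum fun i _ => ?_
        gcongr
        · exact mul_nonneg (by positivity) (hD0 i)
        · exact hD i x
        · exact hA _ _ (lam_pos hs) x hx
  obtain ⟨C, hC0, hC⟩ := herr
  have hKi : Integrable K := K.integrable
  have hη1 : ∀ x, |η x| ≤ 1 := fun x => by rw [abs_of_nonneg η.nonneg]; exact η.le_one
  refine ⟨Q, Q', max C (∫ x, |K x|), le_max_of_le_left hC0, hQs, ?_, ?_, ?_, ?_, ?_, ?_, ?_, ?_⟩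
  · intro s
    refine (tsupport_mul_subset_left).trans ?_
    exact η.tsupport_eq.subset
  · intro s
    exact hηs.continuous.mul (contDiff_negLapPow (hks s)).continuous.neg
  · intro s x hx
    have : η x = 0 := η.zero_of_le_dist (by simpa using (not_le.1 (by simpa using hx)).le)
    simp [Q', this]
  · intro s hs x
    have := (hasDerivAt_heat hm hK hLK hi hi1 hs x).const_mul (η x)
    simpa only [Q', hLk] using this
  · exact fun s hs x => (hC s hs x).trans (le_max_left _ _)
  · intro s hs
    refine le_max_of_le_right ?_
    have hc := lam_pos (m := m) hs
    have e : ∫ x, |K x| = ∫ x, |k s x| := by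
      have := Measure.integral_comp_smul (μ := (volume : Measure (Sp n))) (fun x => |K x|) (lam m s)
      rw [finrank_euclideanSpace_fin, abs_of_pos (by positivity), smul_eq_mul,
        eq_inv_mul_iff_mul_eq₀ (by positivity)] at this
      rw [← this, ← integral_const_mul]
      simp only [k, abs_mul, abs_of_pos (pow_pos hc n)]
    rw [e]
    have hki : Integrable (k s) := (hKi.comp_smul hc.ne').const_mul _
    refine integral_mono_of_nonneg (Eventually.of_forall fun x => abs_nonneg _) hki.abs
      (Eventually.of_forall fun x => ?_)
    simp only [Q, abs_mul]
    exact mul_le_of_le_one_left (abs_nonneg _) (hη1 x)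
  · intro s₀ hs₀
    refine ⟨lam m s₀ ^ n * lam m s₀ ^ (2 * m) * (n ^ m * B0), fun s hs x => ?_⟩
    have hc := lam_pos (m := m) (hs₀.trans_le hs)
    have hle := lam_le (m := m) hs₀ hs
    simp only [Q', abs_mul, abs_neg, hLk]
    refine (mul_le_of_le_one_left (by positivity) (hη1 x)).trans ?_
    rw [abs_of_pos (pow_pos hc n), abs_of_pos (pow_pos hc (2 * m))]
    have h0 := lam_pos (m := m) hs₀
    gcongr
    exact hLKb _
  · rintro g x hg ⟨M, hM⟩
    have hM0 : 0 ≤ M := (abs_nonneg _).trans (hM 0)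
    -- the substitution `y = x + λ⁻¹ z` reduces the limit to dominated convergence
    have e : ∀ s, 0 < s → ∫ y, g y * Q s (y - x) =
        ∫ z, g (x + (lam m s)⁻¹ • z) * (η ((lam m s)⁻¹ • z) * K z) := by
      intro s hs
      have hc := lam_pos (m := m) hs
      have h1 : ∫ y, g y * Q s (y - x) = ∫ y, g (x + y) * Q s y := by
        have := integral_add_right_eq_self (μ := (volume : Measure (Sp n)))
          (fun y => g y * Q s (y - x)) x
        rw [← this]
        refine integral_congr_ae (Eventually.of_forall fun y => ?_)
        simp only [add_comm y x, add_sub_cancel_left]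
      have h2 := Measure.integral_comp_inv_smul (μ := (volume : Measure (Sp n)))
        (fun y => g (x + y) * (η y * K (lam m s • y))) (lam m s)
      rw [finrank_euclideanSpace_fin, abs_of_pos (by positivity), smul_eq_mul,
        ← integral_const_mul] at h2
      simp only [smul_smul, mul_inv_cancel₀ hc.ne', one_smul] at h2
      rw [h1, h2]
      refine integral_congr_ae (Eventually.of_forall fun y => ?_)
      simp only [Q, k]
      ring
    have hev : (fun s => ∫ z, g (x + (lam m s)⁻¹ • z) * (η ((lam m s)⁻¹ • z) * K z)) =ᶠ[𝓝[>] 0]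
        fun s => ∫ y, g y * Q s (y - x) := by
      filter_upwards [self_mem_nhdsWithin] with s hs using (e s hs).symm
    refine Tendsto.congr' hev ?_
    have hlim : g x = ∫ z, g x * (η 0 * K z) := by
      rw [integral_const_mul, integral_const_mul, hK1, η.one_of_mem_closedBall (by simp [η.rIn_pos.le])]
      ring
    rw [show 𝓝 (g x) = 𝓝 (∫ z, g x * (η 0 * K z)) from congrArg 𝓝 hlim]
    refine tendsto_integral_filter_of_dominated_convergence (fun z => M * |K z|) ?_ ?_
      (hKi.abs.const_mul M) ?_
    · refine Eventually.of_forall fun s => Continuous.aestronglyMeasurable ?_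
      have h3 := hηs.continuous
      have h4 := K.continuous
      fun_prop
    · refine Eventually.of_forall fun s => Eventually.of_forall fun z => ?_
      rw [norm_mul, norm_mul, Real.norm_eq_abs, Real.norm_eq_abs, Real.norm_eq_abs]
      gcongr
      · exact hM _
      · exact mul_le_of_le_one_left (abs_nonneg _) (hη1 _)
    · refine Eventually.of_forall fun z => ?_
      have h5 : Tendsto (fun s => (lam m s)⁻¹ • z) (𝓝[>] 0) (𝓝 0) := by
        simpa using (tendsto_lam_inv hm).smul_const z
      have h6 : Tendsto (fun s => g (x + (lam m s)⁻¹ • z)) (𝓝[>] 0) (𝓝 (g x)) := by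
        have : Tendsto (fun s => x + (lam m s)⁻¹ • z) (𝓝[>] 0) (𝓝 x) := by
          simpa using h5.const_add x
        exact (hg.tendsto x).comp this
      exact h6.mul (((hηs.continuous.tendsto 0).comp h5).mul_const _)

/-! ### Solutions, test functions and the memory term -/

/-- The memory term `∫_{-∞}^t (t-s)^{-γ} |v(s,x)|^p ds`. -/
noncomputable def memF {n : ℕ} (γ p : ℝ) (v : ℝ → Sp n → ℝ) (t : ℝ) (x : Sp n) : ℝ :=
  ∫ s in Iio t, (t - s) ^ (-γ) * |v s x| ^ p

/-- `v` is a classical solution with `|v| ≤ M`, regular in `t` and in `x` separately. -/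
structure Sol (n m : ℕ) (γ p M : ℝ) (v : ℝ → Sp n → ℝ) : Prop where
  hm : 1 ≤ m
  hγ0 : 0 < γ
  hγ1 : γ < 1
  hp : 1 < p
  bdd : ∀ t x, |v t x| ≤ M
  ct : ∀ x, ContDiff ℝ 1 (fun t => v t x)
  cx : ∀ t, ContDiff ℝ (2 * m : ℕ) (v t)
  int : ∀ t x, IntegrableOn (fun s => (t - s) ^ (-γ) * |v s x| ^ p) (Iio t)
  eq : ∀ t x, deriv (fun s => v s x) t + negLapPow n m (v t) x = memF γ p v t x

/-- A smooth function with closed support in the open ball of radius `R` around the origin. -/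
structure Test {n : ℕ} (R : ℝ) (ψ : Sp n → ℝ) : Prop where
  smooth : ContDiff ℝ ∞ ψ
  supp : tsupport ψ ⊆ Metric.ball 0 R

lemma Test.compact {n : ℕ} {R : ℝ} {ψ : Sp n → ℝ} (h : Test R ψ) : HasCompactSupport ψ :=
  (isCompact_closedBall (0 : Sp n) R).of_isClosed_subset (isClosed_tsupport ψ)
    (h.supp.trans Metric.ball_subset_closedBall)

lemma Test.continuous {n : ℕ} {R : ℝ} {ψ : Sp n → ℝ} (h : Test R ψ) : Continuous ψ :=
  h.smooth.continuous

lemma Test.integrable {n : ℕ} {R : ℝ} {ψ : Sp n → ℝ} (h : Test R ψ) : Integrable ψ :=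
  h.continuous.integrable_of_hasCompactSupport h.compact

lemma Test.eq_zero {n : ℕ} {R : ℝ} {ψ : Sp n → ℝ} (h : Test R ψ) {x : Sp n}
    (hx : x ∉ Metric.ball 0 R) : ψ x = 0 :=
  image_eq_zero_of_notMem_tsupport fun h' => hx (h.supp h')

lemma Test.negLapPow {n m : ℕ} {R : ℝ} {ψ : Sp n → ℝ} (h : Test R ψ) :
    Test R (negLapPow n m ψ) :=
  ⟨contDiff_negLapPow h.smooth, (tsupport_negLapPow ψ).trans h.supp⟩

section singular

lemma integrableOn_sing {γ : ℝ} (hγ1 : γ < 1) {a T : ℝ} (h : a ≤ T) :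
    IntegrableOn (fun s => (T - s) ^ (-γ)) (Ico a T) := by
  rw [integrableOn_Ico_iff_integrableOn_Ioo, ← integrableOn_Ioc_iff_integrableOn_Ioo,
    ← intervalIntegrable_iff_integrableOn_Ioc_of_le h]
  have := (intervalIntegral.intervalIntegrable_rpow' (a := T - a) (b := 0) (r := -γ)
    (by linarith)).comp_sub_left T
  simpa using this

lemma integral_sing {γ : ℝ} (hγ1 : γ < 1) {a T : ℝ} (h : a ≤ T) :
    ∫ s in Ico a T, (T - s) ^ (-γ) = (T - a) ^ (1 - γ) / (1 - γ) := by
  rw [integral_Ico_eq_integral_Ioc, ← intervalIntegral.integral_of_le h]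
  have := intervalIntegral.integral_comp_sub_left (a := a) (b := T) (fun u => u ^ (-γ)) T
  rw [this, integral_rpow (Or.inl (by linarith))]
  rw [sub_self, Real.zero_rpow (by linarith), show -γ + 1 = 1 - γ by ring, sub_zero]

end singular

namespace Sol
variable {n m : ℕ} {γ p M : ℝ} {v : ℝ → Sp n → ℝ}

lemma M_nonneg (S : Sol n m γ p M v) : 0 ≤ M := (abs_nonneg _).trans (S.bdd 0 0)

lemma cont_t (S : Sol n m γ p M v) (x : Sp n) : Continuous fun t => v t x := (S.ct x).continuous

lemma cont_x (S : Sol n m γ p M v) (t : ℝ) : Continuous (v t) := (S.cx t).continuous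

lemma cont_L (S : Sol n m γ p M v) (t : ℝ) : Continuous (negLapPow n m (v t)) :=
  continuous_negLapPow (S.cx t)

lemma hasDerivAt (S : Sol n m γ p M v) (t : ℝ) (x : Sp n) :
    HasDerivAt (fun s => v s x) (memF γ p v t x - negLapPow n m (v t) x) t := by
  rw [← S.eq t x, add_sub_cancel_right]
  exact ((S.ct x).differentiable one_ne_zero t).hasDerivAt

lemma pow_bdd (S : Sol n m γ p M v) (t : ℝ) (x : Sp n) : |v t x| ^ p ≤ M ^ p :=
  Real.rpow_le_rpow (abs_nonneg _) (S.bdd t x) (by linarith [S.hp])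

lemma F_nonneg (t : ℝ) (x : Sp n) : 0 ≤ memF γ p v t x :=
  setIntegral_nonneg measurableSet_Iio fun s hs => by
    have : 0 ≤ t - s := sub_nonneg.2 (le_of_lt hs)
    positivity

lemma integrable_mul (S : Sol n m γ p M v) (t : ℝ) {ψ : Sp n → ℝ} (hψ : Integrable ψ) :
    Integrable fun x => v t x * ψ x :=
  hψ.bdd_mul (S.cont_x t).aestronglyMeasurable (Eventually.of_forall fun x => S.bdd t x)

lemma continuous_V (S : Sol n m γ p M v) {ψ : Sp n → ℝ} (hψ : Integrable ψ) :
    Continuous fun t => ∫ x, v t x * ψ x := by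
  refine continuous_of_dominated (bound := fun x => M * |ψ x|)
    (fun t => (S.integrable_mul t hψ).aestronglyMeasurable)
    (fun t => Eventually.of_forall fun x => ?_) (hψ.abs.const_mul M)
    (Eventually.of_forall fun x => (S.cont_t x).mul continuous_const)
  rw [norm_mul, Real.norm_eq_abs, Real.norm_eq_abs]
  exact mul_le_mul_of_nonneg_right (S.bdd t x) (abs_nonneg _)

/-- Comparison of the memory term at two times: the kernels are comparable on the past of
`min T ξ - 1`, and the remaining part is bounded because `v` is. -/
lemma F_compare (S : Sol n m γ p M v) (T ξ : ℝ) (x : Sp n) :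
    memF γ p v T x ≤ (1 + |ξ - T|) ^ γ * memF γ p v ξ x +
      M ^ p * ((1 + |ξ - T|) ^ (1 - γ) / (1 - γ)) := by
  set τ := min T ξ - 1 with hτ
  have hτT : τ ≤ T := by linarith [min_le_left T ξ]
  have hτξ : τ ≤ ξ := by linarith [min_le_right T ξ]
  have hsplit : Iio T = Iio τ ∪ Ico τ T := (Iio_union_Ico_eq_Iio hτT).symm
  have hdisj : Disjoint (Iio τ) (Ico τ T) :=
    Set.disjoint_left.2 fun s h1 h2 => absurd h2.1 (not_le.2 h1)
  have hiT := S.int T x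
  have e1 : memF γ p v T x = (∫ s in Iio τ, (T - s) ^ (-γ) * |v s x| ^ p) +
      ∫ s in Ico τ T, (T - s) ^ (-γ) * |v s x| ^ p := by
    unfold memF
    rw [hsplit]
    exact setIntegral_union hdisj measurableSet_Ico (hiT.mono_set (hsplit ▸ subset_union_left))
      (hiT.mono_set (hsplit ▸ subset_union_right))
  rw [e1]
  refine add_le_add ?_ ?_
  · have h1 : ∫ s in Iio τ, (T - s) ^ (-γ) * |v s x| ^ p ≤
        ∫ s in Iio τ, (1 + |ξ - T|) ^ γ * ((ξ - s) ^ (-γ) * |v s x| ^ p) := by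
      refine setIntegral_mono_on (hiT.mono_set (Iio_subset_Iio hτT))
        (((S.int ξ x).mono_set (Iio_subset_Iio hτξ)).const_mul _) measurableSet_Iio fun s hs => ?_
      have hs : s < τ := hs
      rw [← mul_assoc]
      refine mul_le_mul_of_nonneg_right ?_ (by positivity)
      have a1 : 1 ≤ T - s := by linarith [min_le_left T ξ]
      have a2 : 1 ≤ ξ - s := by linarith [min_le_right T ξ]
      have a3 : ξ - s ≤ (1 + |ξ - T|) * (T - s) := by
        nlinarith [le_abs_self (ξ - T), abs_nonneg (ξ - T)]
      have a4 : (ξ - s) ^ γ ≤ (1 + |ξ - T|) ^ γ * (T - s) ^ γ := by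
        rw [← Real.mul_rpow (by positivity) (by linarith)]
        exact Real.rpow_le_rpow (by linarith) a3 S.hγ0.le
      rw [Real.rpow_neg (by linarith), Real.rpow_neg (by linarith), ← div_eq_mul_inv,
        le_div_iff₀ (Real.rpow_pos_of_pos (by linarith) _), inv_mul_le_iff₀
        (Real.rpow_pos_of_pos (by linarith) _)]
      linarith
    refine h1.trans ?_
    rw [integral_const_mul]
    refine mul_le_mul_of_nonneg_left ?_ (by positivity)
    refine setIntegral_mono_set (S.int ξ x) ?_ (Iio_subset_Iio hτξ).eventuallyLE
    refine (ae_restrict_mem measurableSet_Iio).mono fun s hs => ?_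
    have : 0 ≤ ξ - s := sub_nonneg.2 (le_of_lt hs)
    simp only [Pi.zero_apply]
    positivity
  · have h1 : ∫ s in Ico τ T, (T - s) ^ (-γ) * |v s x| ^ p ≤
        ∫ s in Ico τ T, M ^ p * (T - s) ^ (-γ) := by
      refine setIntegral_mono_on (hiT.mono_set (hsplit ▸ subset_union_right))
        ((integrableOn_sing S.hγ1 hτT).const_mul _) measurableSet_Ico fun s hs => ?_
      have : 0 ≤ T - s := sub_nonneg.2 hs.2.le
      rw [mul_comm]
      exact mul_le_mul_of_nonneg_right (S.pow_bdd s x) (by positivity)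
    refine h1.trans ?_
    rw [integral_const_mul, integral_sing S.hγ1 hτT]
    have hM := S.M_nonneg
    have h1γ : 0 < 1 - γ := by linarith [S.hγ1]
    refine mul_le_mul_of_nonneg_left ?_ (by positivity)
    have : T - τ ≤ 1 + |ξ - T| := by
      rcases min_choice T ξ with h | h <;> rw [hτ, h] <;>
        linarith [neg_abs_le (ξ - T), abs_nonneg (ξ - T)]
    exact div_le_div_of_nonneg_right
      (Real.rpow_le_rpow (by linarith) this h1γ.le) h1γ.le

lemma measurable_F (S : Sol n m γ p M v) (t : ℝ) : Measurable (memF γ p v t) := by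
  have h1 : Measurable fun x => deriv (fun s => v s x) t := by
    have hlim : ∀ x, Tendsto (fun k : ℕ => (k + 1 : ℝ) * (v (t + (k + 1 : ℝ)⁻¹) x - v t x)) atTop
        (𝓝 (deriv (fun s => v s x) t)) := by
      intro x
      have hd := ((S.ct x).differentiable one_ne_zero t).hasDerivAt
      have h0 : Tendsto (fun k : ℕ => ((k : ℝ) + 1)⁻¹) atTop (𝓝[≠] 0) := by
        refine tendsto_nhdsWithin_iff.2 ⟨?_, Eventually.of_forall fun k => ?_⟩
        · simpa using tendsto_one_div_add_atTop_nhds_zero_nat (𝕜 := ℝ)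
        · simp only [mem_compl_iff, mem_singleton_iff]
          positivity
      have := (hasDerivAt_iff_tendsto_slope_zero.1 hd).comp h0
      simpa [Function.comp_def] using this
    refine measurable_of_tendsto_metrizable (fun k => ?_) (tendsto_pi_nhds.2 hlim)
    exact ((continuous_const.mul ((S.cont_x _).sub (S.cont_x t)))).measurable
  have h2 : memF γ p v t = fun x => deriv (fun s => v s x) t + negLapPow n m (v t) x :=
    funext fun x => (S.eq t x).symm
  rw [h2]
  exact h1.add (S.cont_L t).measurable

lemma continuous_F (S : Sol n m γ p M v) (x : Sp n) : Continuous fun t => memF γ p v t x := by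
  have hM := S.M_nonneg
  have hvp : Continuous fun s => |v s x| ^ p :=
    (S.cont_t x).abs.rpow_const fun _ => Or.inr (by linarith [S.hp])
  refine continuous_iff_continuousAt.2 fun T => ?_
  have key : (fun t => memF γ p v t x) =ᶠ[𝓝 T] fun t =>
      (∫ s in Iio (T - 2), (t - s) ^ (-γ) * |v s x| ^ p) +
      ∫ u in Ioo (0 : ℝ) 3, (Iic (t - (T - 2))).indicator
        (fun u => u ^ (-γ) * |v (t - u) x| ^ p) u := by
    filter_upwards [Ioo_mem_nhds (show T - 1 < T by linarith) (show T < T + 1 by linarith)]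
      with t ht
    have ht2 : T - 2 ≤ t := by linarith [ht.1]
    have hsplit : Iio t = Iio (T - 2) ∪ Ico (T - 2) t := (Iio_union_Ico_eq_Iio ht2).symm
    have hdisj : Disjoint (Iio (T - 2)) (Ico (T - 2) t) :=
      Set.disjoint_left.2 fun s h1 h2 => absurd h2.1 (not_le.2 h1)
    unfold memF
    rw [hsplit, setIntegral_union hdisj measurableSet_Ico
      ((S.int t x).mono_set (hsplit ▸ subset_union_left))
      ((S.int t x).mono_set (hsplit ▸ subset_union_right))]
    congr 1
    have h3 : Ioo (0 : ℝ) 3 ∩ Iic (t - (T - 2)) = Ioc 0 (t - (T - 2)) := by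
      ext u
      simp only [mem_inter_iff, mem_Ioo, mem_Iic, mem_Ioc]
      have := ht.2
      constructor
      · rintro ⟨⟨a, b⟩, c⟩; exact ⟨a, c⟩
      · rintro ⟨a, c⟩; exact ⟨⟨a, by linarith⟩, c⟩
    rw [setIntegral_indicator measurableSet_Iic, h3, integral_Ico_eq_integral_Ioc,
      ← intervalIntegral.integral_of_le ht2,
      ← intervalIntegral.integral_of_le (by linarith)]
    have := intervalIntegral.integral_comp_sub_left (a := T - 2) (b := t)
      (fun u => u ^ (-γ) * |v (t - u) x| ^ p) t
    simp only [sub_sub_cancel, sub_self] at this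
    exact this
  refine ContinuousAt.congr ?_ key.symm
  refine ContinuousAt.add ?_ ?_
  · refine continuousAt_of_dominated (bound := fun s => (T - 1 - s) ^ (-γ) * |v s x| ^ p) ?_ ?_
      ((S.int (T - 1) x).mono_set (Iio_subset_Iio (by linarith))) ?_
    · refine Eventually.of_forall fun t => ?_
      refine Measurable.aestronglyMeasurable ?_
      exact ((measurable_const.sub measurable_id).pow_const _).mul hvp.measurable
    · filter_upwards [Ioi_mem_nhds (show T - 1 < T by linarith)] with t ht
      refine (ae_restrict_mem measurableSet_Iio).mono fun s hs => ?_
      have hs : s < T - 2 := hs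
      have ht : T - 1 < t := ht
      rw [Real.norm_of_nonneg (mul_nonneg (Real.rpow_nonneg (by linarith) _) (by positivity))]
      refine mul_le_mul_of_nonneg_right ?_ (by positivity)
      exact Real.rpow_le_rpow_of_nonpos (by linarith) (by linarith) (by linarith [S.hγ0])
    · refine (ae_restrict_mem measurableSet_Iio).mono fun s hs => ?_
      have hs : s < T - 2 := hs
      refine ContinuousAt.mul ?_ continuousAt_const
      exact (continuousAt_id.sub continuousAt_const).rpow_const (Or.inl (by simp; linarith))
  · refine continuousAt_of_dominated (bound := fun u => M ^ p * u ^ (-γ)) ?_ ?_ ?_ ?_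
    · refine Eventually.of_forall fun t => ?_
      refine (Measurable.indicator ?_ measurableSet_Iic).aestronglyMeasurable
      exact (measurable_id.pow_const _).mul
        (hvp.comp (continuous_const.sub continuous_id)).measurable
    · refine Eventually.of_forall fun t => ?_
      refine (ae_restrict_mem measurableSet_Ioo).mono fun u hu => ?_
      have hu0 := hu.1.le
      refine (norm_indicator_le_norm_self _ _).trans ?_
      rw [Real.norm_of_nonneg (by positivity), mul_comm]
      exact mul_le_mul_of_nonneg_right (S.pow_bdd _ x) (by positivity)
    · refine Integrable.const_mul ?_ _
      rw [← IntegrableOn, ← integrableOn_Ioc_iff_integrableOn_Ioo,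
        ← intervalIntegrable_iff_integrableOn_Ioc_of_le (by norm_num)]
      exact intervalIntegral.intervalIntegrable_rpow' (by linarith [S.hγ1])
    · have hne : ∀ᵐ u ∂(volume.restrict (Ioo (0 : ℝ) 3)), u ≠ 2 :=
        ae_restrict_of_ae (Measure.ae_ne volume 2)
      filter_upwards [hne] with u hu
      rcases lt_or_gt_of_ne hu with h | h
      · have : (fun t => (Iic (t - (T - 2))).indicator (fun u => u ^ (-γ) * |v (t - u) x| ^ p) u)
            =ᶠ[𝓝 T] fun t => u ^ (-γ) * |v (t - u) x| ^ p := by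
          filter_upwards [Ioi_mem_nhds (show T - (2 - u) < T by linarith)] with t ht
          have ht : T - (2 - u) < t := ht
          exact indicator_of_mem (show u ∈ Iic (t - (T - 2)) from mem_Iic.2 (by linarith)) _
        refine ContinuousAt.congr ?_ this.symm
        exact (continuous_const.mul (hvp.comp (continuous_id.sub continuous_const))).continuousAt
      · have : (fun t => (Iic (t - (T - 2))).indicator (fun u => u ^ (-γ) * |v (t - u) x| ^ p) u)
            =ᶠ[𝓝 T] fun t => 0 := by
          filter_upwards [Iio_mem_nhds (show T < T + (u - 2) by linarith)] with t ht
          have ht : t < T + (u - 2) := ht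
          exact indicator_of_notMem (show u ∉ Iic (t - (T - 2)) from fun h' => by
            linarith [mem_Iic.1 h']) _
        exact ContinuousAt.congr continuousAt_const this.symm

end Sol

/-! ### Local boundedness of the memory term -/

lemma le_of_test {n : ℕ} {R k : ℝ} {g : Sp n → ℝ} (hg : Continuous g)
    (h : ∀ ψ : Sp n → ℝ, Test R ψ → (∀ x, 0 ≤ ψ x) → ∫ x, g x * ψ x ≤ k * ∫ x, ψ x) :
    ∀ x ∈ Metric.ball (0 : Sp n) R, g x ≤ k := by
  intro x₀ hx₀
  by_contra hk
  push Not at hk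
  have hU : IsOpen (Metric.ball (0 : Sp n) R ∩ {x | k < g x}) :=
    Metric.isOpen_ball.inter (isOpen_lt continuous_const hg)
  obtain ⟨ε, hε, hsub⟩ := Metric.isOpen_iff.1 hU x₀ ⟨hx₀, hk⟩
  let f : ContDiffBump x₀ := ⟨ε / 4, ε / 2, by linarith, by linarith⟩
  have hts : tsupport f ⊆ Metric.ball (0 : Sp n) R ∩ {x | k < g x} := by
    rw [f.tsupport_eq]
    exact (Metric.closedBall_subset_ball (show ε / 2 < ε by linarith)).trans hsub
  have hT : Test R f := ⟨f.contDiff, hts.trans inter_subset_left⟩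
  have h1 := h f hT fun x => f.nonneg
  have hi : Integrable fun x => g x * f x := integrable_mul_of_compact hg hT.continuous hT.compact
  have h2 : 0 < ∫ x, (g x - k) * f x := by
    refine Continuous.integral_pos_of_hasCompactSupport_nonneg_nonzero (x := x₀)
      ((hg.sub continuous_const).mul hT.continuous) hT.compact.mul_left (fun x => ?_) ?_
    · by_cases hx : x ∈ tsupport f
      · have : k < g x := (hts hx).2
        exact mul_nonneg (by linarith) f.nonneg
      · simp [image_eq_zero_of_notMem_tsupport hx]
    · have : f x₀ = 1 := f.one_of_mem_closedBall (Metric.mem_closedBall_self (by positivity))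
      rw [this]
      linarith
  have h3 : ∫ x, (g x - k) * f x = (∫ x, g x * f x) - k * ∫ x, f x := by
    simp_rw [sub_mul]
    rw [integral_sub hi (hT.integrable.const_mul k), integral_const_mul]
  linarith

namespace Sol
variable {n m : ℕ} {γ p M : ℝ} {v : ℝ → Sp n → ℝ}

lemma integral_L (S : Sol n m γ p M v) {R : ℝ} {ψ : Sp n → ℝ} (h : Test R ψ) (t : ℝ) :
    ∫ x, negLapPow n m (v t) x * ψ x = ∫ x, v t x * negLapPow n m ψ x :=
  integral_negLapPow_mul (S.cx t) h.smooth h.compact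

/-- Although `(-Δ)^m v(t,x)` is not assumed to depend continuously on `t`, bounds on it pass to
limits in `t`, since they can be tested against smooth functions. -/
lemma isClosed_bound (S : Sol n m γ p M v) (R k : ℝ) :
    IsClosed {t | ∀ x ∈ Metric.ball (0 : Sp n) R, |negLapPow n m (v t) x| ≤ k} := by
  have key : {t | ∀ x ∈ Metric.ball (0 : Sp n) R, |negLapPow n m (v t) x| ≤ k} =
      ⋂ (ψ : Sp n → ℝ) (_ : Test R ψ) (_ : ∀ x, 0 ≤ ψ x),
        {t | |∫ x, v t x * negLapPow n m ψ x| ≤ k * ∫ x, ψ x} := by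
    ext t
    simp only [mem_ofPred_eq, mem_iInter]
    constructor
    · intro h ψ hψ h0
      rw [← S.integral_L hψ, ← integral_const_mul]
      refine (abs_integral_le_integral_abs).trans ?_
      refine integral_mono
        (integrable_mul_of_compact (S.cont_L t) hψ.continuous hψ.compact).abs
        (hψ.integrable.const_mul k) fun x => ?_
      simp only [abs_mul, abs_of_nonneg (h0 x)]
      by_cases hx : x ∈ Metric.ball (0 : Sp n) R
      · exact mul_le_mul_of_nonneg_right (h x hx) (h0 x)
      · simp [hψ.eq_zero hx]
    · intro h x hx
      refine abs_le'.2 ⟨?_, ?_⟩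
      · refine le_of_test (S.cont_L t) (fun ψ hψ h0 => ?_) x hx
        rw [S.integral_L hψ]
        exact (le_abs_self _).trans (h ψ hψ h0)
      · refine le_of_test (S.cont_L t).neg (fun ψ hψ h0 => ?_) x hx
        have e : ∫ x, -negLapPow n m (v t) x * ψ x = -∫ x, v t x * negLapPow n m ψ x := by
          simp_rw [neg_mul]
          rw [integral_neg, S.integral_L hψ]
        exact e.le.trans ((neg_le_abs _).trans (h ψ hψ h0))
  rw [key]
  refine isClosed_iInter fun ψ => isClosed_iInter fun hψ => isClosed_iInter fun h0 => ?_
  exact isClosed_le (S.continuous_V hψ.negLapPow.integrable).abs continuous_const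

lemma exists_bound_L (S : Sol n m γ p M v) (R t : ℝ) :
    ∃ k : ℕ, ∀ x ∈ Metric.ball (0 : Sp n) R, |negLapPow n m (v t) x| ≤ k := by
  obtain ⟨C, hC⟩ := (isCompact_closedBall (0 : Sp n) R).exists_bound_of_continuousOn
    (S.cont_L t).continuousOn
  obtain ⟨k, hk⟩ := exists_nat_ge C
  exact ⟨k, fun x hx => (hC x (Metric.ball_subset_closedBall hx)).trans hk⟩

/-- Local boundedness of the memory term. Baire's theorem yields a time interval on which
`(-Δ)^m v` is bounded on the ball; the mean value theorem then bounds the memory term at one time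
for each `x`, and `F_compare` transports the bound to all times. -/
lemma exists_bound_F (S : Sol n m γ p M v) (R b : ℝ) :
    ∃ C, 0 ≤ C ∧ ∀ t, |t| ≤ b → ∀ x ∈ Metric.ball (0 : Sp n) R, memF γ p v t x ≤ C := by
  obtain ⟨k, t₀, ht₀⟩ := nonempty_interior_of_iUnion_of_closed
    (fun k : ℕ => S.isClosed_bound R k)
    (eq_univ_of_forall fun t => mem_iUnion.2 (S.exists_bound_L R t))
  obtain ⟨ε, hε, hball⟩ := Metric.isOpen_iff.1 isOpen_interior t₀ ht₀
  have hM := S.M_nonneg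
  have h1γ : 0 < 1 - γ := by linarith [S.hγ1]
  set D : ℝ := 2 * M / (ε / 2) + k with hD
  have hD0 : 0 ≤ D := by positivity
  set q : ℝ := |t₀| + ε + |b| with hq
  have hq0 : 0 ≤ q := by positivity
  refine ⟨(1 + q) ^ γ * D + M ^ p * ((1 + q) ^ (1 - γ) / (1 - γ)), by positivity,
    fun t ht x hx => ?_⟩
  obtain ⟨ξ, hξ, hslope⟩ := exists_hasDerivAt_eq_slope (fun s => v s x)
    (fun s => memF γ p v s x - negLapPow n m (v s) x) (show t₀ < t₀ + ε / 2 by linarith)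
    (S.cont_t x).continuousOn (fun s _ => S.hasDerivAt s x)
  have hξk : |negLapPow n m (v ξ) x| ≤ k := by
    refine interior_subset (hball ?_) x hx
    rw [Metric.mem_ball, Real.dist_eq, abs_lt]
    constructor <;> linarith [hξ.1, hξ.2]
  have hFξ : memF γ p v ξ x ≤ D := by
    have h1 : (v (t₀ + ε / 2) x - v t₀ x) / (t₀ + ε / 2 - t₀) ≤ 2 * M / (ε / 2) := by
      rw [add_sub_cancel_left]
      refine div_le_div_of_nonneg_right ?_ (by positivity)
      linarith [(abs_le.1 (S.bdd (t₀ + ε / 2) x)).2, (abs_le.1 (S.bdd t₀ x)).1]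
    have h2 := (abs_le.1 hξk).2
    rw [hD]
    linarith
  refine (S.F_compare t ξ x).trans ?_
  have hdist : |ξ - t| ≤ q := by
    rw [abs_le]
    have := abs_le.1 ht
    constructor <;> linarith [hξ.1, hξ.2, neg_abs_le t₀, le_abs_self t₀, le_abs_self b]
  have hF0 : 0 ≤ memF γ p v ξ x := F_nonneg ξ x
  have hγ0 := S.hγ0
  gcongr

lemma integrable_F_mul (S : Sol n m γ p M v) {R : ℝ} {ψ : Sp n → ℝ} (h : Test R ψ) (t : ℝ) :
    Integrable fun x => memF γ p v t x * ψ x := by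
  obtain ⟨C, hC, hb⟩ := S.exists_bound_F R |t|
  refine (h.integrable.abs.const_mul C).mono'
    ((S.measurable_F t).mul h.continuous.measurable).aestronglyMeasurable
    (Eventually.of_forall fun x => ?_)
  rw [norm_mul, Real.norm_of_nonneg (F_nonneg t x), Real.norm_eq_abs]
  by_cases hx : x ∈ Metric.ball (0 : Sp n) R
  · exact mul_le_mul_of_nonneg_right (hb t le_rfl x hx) (abs_nonneg _)
  · simp [h.eq_zero hx]

lemma continuous_F_mul (S : Sol n m γ p M v) {R : ℝ} {ψ : Sp n → ℝ} (h : Test R ψ) :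
    Continuous fun t => ∫ x, memF γ p v t x * ψ x := by
  refine continuous_iff_continuousAt.2 fun T => ?_
  obtain ⟨C, hC, hb⟩ := S.exists_bound_F R (|T| + 1)
  refine continuousAt_of_dominated (bound := fun x => C * |ψ x|)
    (Eventually.of_forall fun t => (S.integrable_F_mul h t).aestronglyMeasurable) ?_
    (h.integrable.abs.const_mul C)
    (Eventually.of_forall fun x => ((S.continuous_F x).mul continuous_const).continuousAt)
  filter_upwards [Metric.ball_mem_nhds T one_pos] with t ht
  refine Eventually.of_forall fun x => ?_
  rw [norm_mul, Real.norm_of_nonneg (F_nonneg t x), Real.norm_eq_abs]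
  by_cases hx : x ∈ Metric.ball (0 : Sp n) R
  · refine mul_le_mul_of_nonneg_right (hb t ?_ x hx) (abs_nonneg _)
    rw [Metric.mem_ball, Real.dist_eq] at ht
    linarith [abs_sub_abs_le_abs_sub t T]
  · simp [h.eq_zero hx]

/-- The time derivative `∫ F(t,x) ψ(x) dx - ∫ v(t,x) (-Δ)^m ψ(x) dx` which the equation prescribes
for `∫ v(t,x) ψ(x) dx`, with `F` the memory term. -/
noncomputable def N (γ p : ℝ) (m : ℕ) (v : ℝ → Sp n → ℝ) (ψ : Sp n → ℝ) (t : ℝ) : ℝ :=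
  (∫ x, memF γ p v t x * ψ x) - ∫ x, v t x * negLapPow n m ψ x

lemma continuous_N (S : Sol n m γ p M v) {R : ℝ} {ψ : Sp n → ℝ} (h : Test R ψ) :
    Continuous (N γ p m v ψ) :=
  (S.continuous_F_mul h).sub (S.continuous_V h.negLapPow.integrable)

lemma N_eq (S : Sol n m γ p M v) {R : ℝ} {ψ : Sp n → ℝ} (h : Test R ψ) (t : ℝ) :
    N γ p m v ψ t = ∫ x, (memF γ p v t x - negLapPow n m (v t) x) * ψ x := by
  simp_rw [sub_mul]
  rw [integral_sub (S.integrable_F_mul h t)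
    (integrable_mul_of_compact (S.cont_L t) h.continuous h.compact), S.integral_L h]
  rfl

end Sol

/-! ### Lipschitz estimate across gaps -/

section pairing
variable {n : ℕ} {w q : ℝ → Sp n → ℝ} {q' G : Sp n → ℝ} {τ A K : ℝ}

lemma pairing_split (hwb : ∀ s y, |w s y| ≤ K) (hwm : ∀ s, Continuous (w s))
    (hqi : ∀ s, Integrable (q s)) (s : ℝ) :
    ∫ y, w s y * q s y = (∫ y, w s y * q τ y) + ∫ y, w s y * (q s y - q τ y) := by
  have hi : ∀ s', Integrable fun y => w s y * q s' y := fun s' =>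
    (hqi s').bdd_mul (hwm s).aestronglyMeasurable (Eventually.of_forall fun x => hwb s x)
  simp_rw [mul_sub]
  rw [integral_sub (hi s) (hi τ)]
  ring

/-- Product rule for the pairing of two families, the second one differentiable pointwise
with a dominated difference quotient. -/
lemma hasDerivAt_pairing (hwb : ∀ s y, |w s y| ≤ K) (hwm : ∀ s, Continuous (w s))
    (hwc : ∀ y, Continuous fun s => w s y) (hqi : ∀ s, Integrable (q s))
    (hA : HasDerivAt (fun s => ∫ y, w s y * q τ y) A τ)
    (hqd : ∀ y, HasDerivAt (fun s => q s y) (q' y) τ)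
    (hlip : ∀ᶠ s in 𝓝 τ, ∀ y, |q s y - q τ y| ≤ |s - τ| * G y) (hG : Integrable G) :
    HasDerivAt (fun s => ∫ y, w s y * q s y) (A + ∫ y, w τ y * q' y) τ := by
  have e : (fun s => ∫ y, w s y * q s y) =
      fun s => (∫ y, w s y * q τ y) + ∫ y, w s y * (q s y - q τ y) :=
    funext fun s => pairing_split hwb hwm hqi s
  have hK : 0 ≤ K := (abs_nonneg _).trans (hwb 0 0)
  rw [e]
  refine hA.add ?_
  rw [hasDerivAt_iff_tendsto_slope_zero]
  simp only [sub_self, mul_zero, integral_zero, sub_zero, smul_eq_mul]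
  simp_rw [← integral_const_mul]
  have hshift : Tendsto (fun h : ℝ => τ + h) (𝓝[≠] 0) (𝓝 τ) := by
    have : Tendsto (fun h : ℝ => τ + h) (𝓝 0) (𝓝 (τ + 0)) :=
      (continuous_const.add continuous_id).tendsto 0
    rw [add_zero] at this
    exact this.mono_left nhdsWithin_le_nhds
  refine tendsto_integral_filter_of_dominated_convergence (fun y => K * |G y|) ?_ ?_
    (hG.abs.const_mul K) ?_
  · refine Eventually.of_forall fun h => ?_
    exact ((hwm _).aestronglyMeasurable.mul
      ((hqi _).aestronglyMeasurable.sub (hqi _).aestronglyMeasurable)).const_mul _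
  · filter_upwards [hshift.eventually hlip, self_mem_nhdsWithin] with h hh h0
    refine Eventually.of_forall fun y => ?_
    have h1 := hh y
    rw [add_sub_cancel_left] at h1
    have h0' : 0 < |h| := abs_pos.2 h0
    rw [norm_mul, norm_mul, norm_inv, Real.norm_eq_abs, Real.norm_eq_abs, Real.norm_eq_abs,
      inv_mul_le_iff₀ h0']
    calc |w (τ + h) y| * |q (τ + h) y - q τ y| ≤ K * (|h| * |G y|) := by
          refine mul_le_mul (hwb _ _) (h1.trans ?_) (abs_nonneg _) hK
          exact mul_le_mul_of_nonneg_left (le_abs_self _) h0'.le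
      _ = |h| * (K * |G y|) := by ring
  · refine Eventually.of_forall fun y => ?_
    have h1 := hasDerivAt_iff_tendsto_slope_zero.1 (hqd y)
    have h2 := (((hwc y).tendsto τ).comp hshift).mul h1
    refine h2.congr fun h => ?_
    simp only [Function.comp_def, smul_eq_mul]
    ring

lemma continuousAt_pairing (hwb : ∀ s y, |w s y| ≤ K) (hwm : ∀ s, Continuous (w s))
    (hqi : ∀ s, Integrable (q s))
    (hA : ContinuousAt (fun s => ∫ y, w s y * q τ y) τ)
    (hlip : ∀ᶠ s in 𝓝 τ, ∀ y, |q s y - q τ y| ≤ |s - τ| * G y) (hG : Integrable G) :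
    ContinuousAt (fun s => ∫ y, w s y * q s y) τ := by
  have e : (fun s => ∫ y, w s y * q s y) =
      fun s => (∫ y, w s y * q τ y) + ∫ y, w s y * (q s y - q τ y) :=
    funext fun s => pairing_split hwb hwm hqi s
  have hK : 0 ≤ K := (abs_nonneg _).trans (hwb 0 0)
  rw [e]
  refine hA.add ?_
  unfold ContinuousAt
  simp only [sub_self, mul_zero, integral_zero]
  have hlim : Tendsto (fun s => |s - τ| * (K * ∫ y, |G y|)) (𝓝 τ) (𝓝 0) := by
    have : Continuous fun s => |s - τ| * (K * ∫ y, |G y|) := by fun_prop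
    simpa using this.tendsto τ
  refine squeeze_zero_norm' ?_ hlim
  filter_upwards [hlip] with s hs
  rw [← integral_const_mul, ← integral_const_mul]
  refine norm_integral_le_of_norm_le ((hG.abs.const_mul K).const_mul _)
    (Eventually.of_forall fun y => ?_)
  rw [norm_mul, Real.norm_eq_abs, Real.norm_eq_abs]
  calc |w s y| * |q s y - q τ y| ≤ K * (|s - τ| * |G y|) := by
        refine mul_le_mul (hwb _ _) ((hs y).trans ?_) (abs_nonneg _) hK
        exact mul_le_mul_of_nonneg_left (le_abs_self _) (abs_nonneg _)
    _ = |s - τ| * (K * |G y|) := by ring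

end pairing

namespace Sol
variable {n m : ℕ} {γ p M : ℝ} {v : ℝ → Sp n → ℝ}

/-- The times at which the weak formulation holds against all test functions in the ball of
radius `R`. -/
def weakSet (γ p : ℝ) (m : ℕ) (v : ℝ → Sp n → ℝ) (R : ℝ) : Set ℝ :=
  {τ | ∀ ψ : Sp n → ℝ, Test R ψ → HasDerivAt (fun s => ∫ x, v s x * ψ x) (N γ p m v ψ τ) τ}

/-- Lipschitz estimate across a time interval on which the weak formulation holds: test with
a truncated backward heat kernel of `∂_t + (-Δ)^m` and let it concentrate. -/
lemma gap (S : Sol n m γ p M v) {R R' : ℝ} (hR : R' < R) :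
    ∃ C, 0 ≤ C ∧ ∀ k CF a t : ℝ, 0 ≤ k → 0 ≤ CF → a < t →
      (∀ τ ∈ Ioo a t, τ ∈ weakSet γ p m v R) →
      (∀ x ∈ Metric.ball (0 : Sp n) R, |negLapPow n m (v a) x| ≤ k) →
      (∀ τ ∈ Ioo a t, ∀ x ∈ Metric.ball (0 : Sp n) R, memF γ p v τ x ≤ CF) →
      ∀ x ∈ Metric.ball (0 : Sp n) R', |v t x - v a x| ≤ C * (1 + k + CF) * (t - a) := by
  have hr : 0 < (R - R') / 2 := by linarith
  set r := (R - R') / 2 with hrdef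
  obtain ⟨Q, Q', C, hC, hQs, hQt, hQ'c, hQ'0, hQd, hQe, hQ1, hQ'b, hQlim⟩ :=
    exists_kernel n m S.hm hr
  have hM := S.M_nonneg
  set V : ℝ := volume.real (Metric.closedBall (0 : Sp n) r) with hV
  have hV0 : 0 ≤ V := measureReal_nonneg
  refine ⟨C + 2 * M * C * V, by positivity, ?_⟩
  intro k CF a t hk hCF hat hweak hLa hF x hx
  have hsub : ∀ y : Sp n, y - x ∈ Metric.closedBall (0 : Sp n) r → y ∈ Metric.ball (0 : Sp n) R := by
    intro y hy
    rw [mem_closedBall_zero_iff] at hy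
    rw [mem_ball_zero_iff] at hx ⊢
    have := norm_add_le (y - x) x
    rw [sub_add_cancel] at this
    linarith
  have hQz : ∀ s z, z ∉ Metric.closedBall (0 : Sp n) r → Q s z = 0 := fun s z hz =>
    image_eq_zero_of_notMem_tsupport fun h => hz (hQt s h)
  have hTest : ∀ s, Test R fun y => Q s (y - x) := by
    intro s
    refine ⟨(hQs s).comp (contDiff_id.sub contDiff_const), ?_⟩
    have hcl : IsClosed {y : Sp n | y - x ∈ Metric.closedBall (0 : Sp n) r} :=
      Metric.isClosed_closedBall.preimage (continuous_id.sub continuous_const)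
    refine (closure_minimal (fun y hy => ?_) hcl).trans fun y hy => hsub y hy
    by_contra hc
    exact hy (hQz s _ hc)
  have hLQ : ∀ s y, negLapPow n m (fun y => Q s (y - x)) y = negLapPow n m (Q s) (y - x) :=
    fun s y => negLapPow_comp_sub (hQs s) x y
  have hw : ∀ s y, |v s y - v a y| ≤ 2 * M := fun s y => by
    have h1 := abs_le.1 (S.bdd s y)
    have h2 := abs_le.1 (S.bdd a y)
    rw [abs_le]
    constructor <;> linarith
  have hwm : ∀ s, Continuous fun y => v s y - v a y := fun s => (S.cont_x s).sub (S.cont_x a)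
  have key : ∀ σ : ℝ, 0 < σ → |∫ y, (v t y - v a y) * Q σ (y - x)| ≤
      (C + 2 * M * C * V) * (1 + k + CF) * (t - a) := by
    intro σ hσ
    obtain ⟨B, hB⟩ := hQ'b (σ / 2) (by linarith)
    have hLip : ∀ s₁ s₂ : ℝ, σ / 2 ≤ s₁ → σ / 2 ≤ s₂ → ∀ z,
        |Q s₁ z - Q s₂ z| ≤ |s₁ - s₂| * (Metric.closedBall (0 : Sp n) r).indicator
          (fun _ => B) z := by
      intro s₁ s₂ h1 h2 z
      by_cases hz : z ∈ Metric.closedBall (0 : Sp n) r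
      · rw [indicator_of_mem hz, mul_comm]
        exact (convex_Ici (σ / 2)).norm_image_sub_le_of_norm_hasDerivWithin_le
          (f := fun s => Q s z) (f' := fun s => Q' s z)
          (fun s hs => (hQd s (lt_of_lt_of_le (by linarith) (mem_Ici.1 hs)) z).hasDerivWithinAt)
          (fun s hs => hB s hs z) h2 h1
      · rw [hQz _ _ hz, hQz _ _ hz]
        simp [indicator_of_notMem hz]
    set q : ℝ → Sp n → ℝ := fun τ y => Q (t + σ - τ) (y - x) with hq
    set G : Sp n → ℝ := fun y => (Metric.closedBall (0 : Sp n) r).indicator (fun _ => B) (y - x)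
      with hG
    have hGi : Integrable G :=
      (((integrable_indicator_iff measurableSet_closedBall).2
        (integrableOn_const measure_closedBall_lt_top.ne)).comp_sub_right x)
    have hqi : ∀ τ, Integrable (q τ) := fun τ => (hTest _).integrable
    have hqlip : ∀ τ, τ ≤ t → ∀ᶠ s in 𝓝 τ, ∀ y, |q s y - q τ y| ≤ |s - τ| * G y := by
      intro τ hτ
      filter_upwards [Iio_mem_nhds (show τ < τ + σ / 2 by linarith)] with s hs y
      have hs : s < τ + σ / 2 := hs
      have := hLip (t + σ - s) (t + σ - τ) (by linarith) (by linarith) (y - x)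
      rwa [show t + σ - s - (t + σ - τ) = -(s - τ) by ring, abs_neg] at this
    have hVi : ∀ τ s, ∫ y, (v s y - v a y) * q τ y =
        (∫ y, v s y * q τ y) - ∫ y, v a y * q τ y := by
      intro τ s
      simp_rw [sub_mul]
      exact integral_sub (S.integrable_mul s (hqi τ)) (S.integrable_mul a (hqi τ))
    have hcont : ContinuousOn (fun τ => ∫ y, (v τ y - v a y) * q τ y) (Icc a t) := by
      intro τ hτ
      refine (continuousAt_pairing (w := fun s y => v s y - v a y) (q := q) hw hwm hqi ?_
        (hqlip τ hτ.2) hGi).continuousWithinAt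
      simp_rw [hVi]
      exact ((S.continuous_V (hqi τ)).sub continuous_const).continuousAt
    have hder : ∀ τ ∈ Ioo a t, HasDerivAt (fun τ => ∫ y, (v τ y - v a y) * q τ y)
        (N γ p m v (q τ) τ + ∫ y, (v τ y - v a y) * (-Q' (t + σ - τ) (y - x))) τ := by
      intro τ hτ
      refine hasDerivAt_pairing (w := fun s y => v s y - v a y) (q := q) hw hwm
        (fun y => (S.cont_t y).sub continuous_const) hqi ?_ (fun y => ?_) (hqlip τ hτ.2.le) hGi
      · simp_rw [hVi]
        exact (hweak τ hτ _ (hTest _)).sub_const _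
      · have h1 := hQd (t + σ - τ) (by linarith [hτ.2]) (y - x)
        have h2 : HasDerivAt (fun s => t + σ - s) (-1) τ := by
          simpa using (hasDerivAt_id τ).const_sub (t + σ)
        have h3 := h1.comp τ h2
        rw [mul_neg, mul_one] at h3
        exact h3
    -- The pairing of `v(τ) - v(a)` with the kernel at backward time `t + σ - τ` vanishes at `τ = a`,
    -- so it suffices to bound its derivative.
    obtain ⟨ξ, hξ, hslope⟩ := exists_hasDerivAt_eq_slope _ _ hat hcont hder
    have hbound : |N γ p m v (q ξ) ξ + ∫ y, (v ξ y - v a y) * (-Q' (t + σ - ξ) (y - x))| ≤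
        (C + 2 * M * C * V) * (1 + k + CF) := by
      have hs : 0 < t + σ - ξ := by linarith [hξ.2]
      set s := t + σ - ξ with hsdef
      have hT := hTest s
      have hQ'cont : Continuous fun y => Q' s (y - x) :=
        (hQ'c s).comp (continuous_id.sub continuous_const)
      have hQ'supp : HasCompactSupport fun y => Q' s (y - x) := by
        refine HasCompactSupport.intro (isCompact_closedBall x r) fun y hy => hQ'0 s _ fun h => hy ?_
        rw [mem_closedBall_zero_iff] at h
        rwa [Metric.mem_closedBall, dist_eq_norm]
      have hQ'i : Integrable fun y => Q' s (y - x) :=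
        hQ'cont.integrable_of_hasCompactSupport hQ'supp
      have hLi : Integrable fun y => negLapPow n m (Q s) (y - x) := by
        have := (hT.negLapPow (m := m)).integrable
        simpa only [funext (hLQ s)] using this
      have hwi : ∀ {g : Sp n → ℝ}, Integrable g → Integrable fun y => (v ξ y - v a y) * g y :=
        fun hg => hg.bdd_mul (hwm ξ).aestronglyMeasurable (Eventually.of_forall fun y => hw ξ y)
      -- Subtracting `v(a)` moves `(-Δ)^m` onto the bounded function `(-Δ)^m v(a)`, and leaves the
      -- difference `v(ξ) - v(a)` paired with the bounded error of the kernel.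
      have e1 : N γ p m v (q ξ) ξ + ∫ y, (v ξ y - v a y) * (-Q' s (y - x)) =
          (∫ y, (memF γ p v ξ y - negLapPow n m (v a) y) * Q s (y - x)) -
            ∫ y, (v ξ y - v a y) * (Q' s (y - x) + negLapPow n m (Q s) (y - x)) := by
        have h1 : ∫ y, (v ξ y - v a y) * (-Q' s (y - x)) =
            -∫ y, (v ξ y - v a y) * Q' s (y - x) := by
          simp_rw [mul_neg]
          exact integral_neg _
        have h2 : ∫ y, (v ξ y - v a y) * (Q' s (y - x) + negLapPow n m (Q s) (y - x)) =
            (∫ y, (v ξ y - v a y) * Q' s (y - x)) +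
              ((∫ y, v ξ y * negLapPow n m (Q s) (y - x)) -
                ∫ y, v a y * negLapPow n m (Q s) (y - x)) := by
          simp_rw [mul_add]
          rw [integral_add (hwi hQ'i) (hwi hLi)]
          congr 1
          simp_rw [sub_mul]
          exact integral_sub (S.integrable_mul ξ hLi) (S.integrable_mul a hLi)
        have h3 : ∫ y, (memF γ p v ξ y - negLapPow n m (v a) y) * Q s (y - x) =
            (∫ y, memF γ p v ξ y * Q s (y - x)) - ∫ y, v a y * negLapPow n m (Q s) (y - x) := by
          simp_rw [sub_mul]
          rw [integral_sub (S.integrable_F_mul hT ξ)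
            (integrable_mul_of_compact (S.cont_L a) hT.continuous hT.compact),
            S.integral_L hT]
          simp_rw [hLQ]
        have h4 : N γ p m v (q ξ) ξ = (∫ y, memF γ p v ξ y * Q s (y - x)) -
            ∫ y, v ξ y * negLapPow n m (Q s) (y - x) := by
          unfold N
          simp only [hq, ← hsdef, hLQ]
        rw [h1, h2, h3, h4]
        ring
      have hqint : ∫ y, |Q s (y - x)| ≤ C := by
        have := integral_sub_right_eq_self (μ := (volume : Measure (Sp n))) (fun y => |Q s y|) x
        rw [this]
        exact hQ1 s hs
      have b1 : |∫ y, (memF γ p v ξ y - negLapPow n m (v a) y) * Q s (y - x)| ≤ (CF + k) * C := by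
        rw [← Real.norm_eq_abs]
        refine le_trans (norm_integral_le_of_norm_le (hT.integrable.abs.const_mul (CF + k))
          (Eventually.of_forall fun y => ?_)) ?_
        · rw [norm_mul, Real.norm_eq_abs, Real.norm_eq_abs]
          by_cases hy : y ∈ Metric.ball (0 : Sp n) R
          · refine mul_le_mul_of_nonneg_right ?_ (abs_nonneg _)
            have h1 := abs_le.1 (hLa y hy)
            have h2 := hF ξ hξ y hy
            have h3 : 0 ≤ memF γ p v ξ y := F_nonneg ξ y
            rw [abs_le]
            constructor <;> linarith
          · have h0 : Q s (y - x) = 0 := hT.eq_zero hy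
            simp [h0]
        · rw [integral_const_mul]
          exact mul_le_mul_of_nonneg_left hqint (by linarith)
      have b2 : |∫ y, (v ξ y - v a y) * (Q' s (y - x) + negLapPow n m (Q s) (y - x))| ≤
          2 * M * C * V := by
        have hi : Integrable fun y => (Metric.closedBall (0 : Sp n) r).indicator
            (fun _ => 2 * M * C) (y - x) :=
          (((integrable_indicator_iff measurableSet_closedBall).2
            (integrableOn_const measure_closedBall_lt_top.ne)).comp_sub_right x)
        rw [← Real.norm_eq_abs]
        refine le_trans (norm_integral_le_of_norm_le hi (Eventually.of_forall fun y => ?_)) ?_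
        · by_cases hy : y - x ∈ Metric.closedBall (0 : Sp n) r
          · rw [indicator_of_mem hy, norm_mul]
            exact mul_le_mul (hw ξ y) (hQe s hs _) (norm_nonneg _) (by positivity)
          · have h1 : negLapPow n m (Q s) (y - x) = 0 :=
              negLapPow_eq_zero fun h => hy (hQt s h)
            rw [hQ'0 s _ hy, h1]
            simp [indicator_of_notMem hy]
        · rw [integral_sub_right_eq_self (μ := (volume : Measure (Sp n)))
            (fun y => (Metric.closedBall (0 : Sp n) r).indicator (fun _ => 2 * M * C) y) x,
            integral_indicator measurableSet_closedBall, setIntegral_const, smul_eq_mul, mul_comm]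
      rw [e1]
      refine (abs_sub _ _).trans ((add_le_add b1 b2).trans ?_)
      have h5 : 0 ≤ 2 * M * C * V := by positivity
      nlinarith [mul_nonneg h5 hk, mul_nonneg h5 hCF]
    rw [hslope] at hbound
    simp only [sub_self, zero_mul, integral_zero, sub_zero] at hbound
    rw [abs_div, abs_of_pos (sub_pos.2 hat), div_le_iff₀ (sub_pos.2 hat)] at hbound
    simpa [hq] using hbound
  have hlim := (hQlim (fun y => v t y - v a y) x (hwm t) ⟨2 * M, hw t⟩).abs
  exact le_of_tendsto hlim (by filter_upwards [self_mem_nhdsWithin] with σ hσ using key σ hσ)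

end Sol

/-! ### The weak formulation at all times -/

/-- If `f` has slope less than `K` at the points of a closed set `E`, and is `K`-Lipschitz across
the gaps of `E`, then it is `K`-Lipschitz to the right of each point of `E`. -/
lemma chain_lipschitz {f f' : ℝ → ℝ} {E : Set ℝ} (hE : IsClosed E) {K t t' : ℝ} (ht : t ∈ E)
    (htt : t ≤ t') (hf : Continuous f) (hd : ∀ s ∈ E ∩ Icc t t', HasDerivAt f (f' s) s)
    (hd' : ∀ s ∈ E ∩ Icc t t', |f' s| < K)
    (hgap : ∀ a b, a ∈ E → t ≤ a → a < b → b ≤ t' → (∀ s ∈ Ioo a b, s ∉ E) →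
      |f b - f a| ≤ K * (b - a)) :
    |f t' - f t| ≤ K * (t' - t) := by
  -- Take the last point `σ` of `E` up to which the bound holds; beyond it the derivative at `σ`
  -- leaves a gap of `E`, which the gap estimate crosses.
  have hcomp : IsCompact (E ∩ Icc t t' ∩ {s | |f s - f t| ≤ K * (s - t)}) :=
    ((isCompact_Icc.inter_left hE)).inter_right
      (isClosed_le (hf.sub continuous_const).abs
        (continuous_const.mul (continuous_id.sub continuous_const)))
  obtain ⟨σ, ⟨⟨hσE, hσ1, hσ2⟩, hσb⟩, hmax⟩ := hcomp.exists_isGreatest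
    ⟨t, ⟨ht, left_mem_Icc.2 htt⟩, by simp⟩
  have hσb : |f σ - f t| ≤ K * (σ - t) := hσb
  have htri : ∀ u, |f u - f σ| ≤ K * (u - σ) → |f u - f t| ≤ K * (u - t) := by
    intro u hu
    have := abs_add_le (f u - f σ) (f σ - f t)
    rw [sub_add_sub_cancel] at this
    linarith
  rcases hσ2.eq_or_lt with h | hlt
  · rwa [← h]
  by_cases hemp : ∀ s ∈ Ioo σ t', s ∉ E
  · exact htri t' (hgap σ t' hσE hσ1 hlt le_rfl hemp)
  exfalso
  push Not at hemp
  obtain ⟨e, he, heE⟩ := hemp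
  have hslope := (hd σ ⟨hσE, hσ1, hσ2⟩).hasDerivWithinAt (s := Ioi σ) |>.limsup_norm_slope_le
    (r := K) (hd' σ ⟨hσE, hσ1, hσ2⟩)
  obtain ⟨b₀, hb₀, hsub⟩ := (mem_nhdsGT_iff_exists_Ioo_subset).1 hslope
  have hb₀ : σ < b₀ := hb₀
  have hnear : ∀ s ∈ Ioo σ b₀, s ≤ t' → s ∉ E := by
    intro s hs hst hsE
    have h1 : ‖s - σ‖⁻¹ * ‖f s - f σ‖ < K := hsub hs
    have h0 : 0 < s - σ := sub_pos.2 hs.1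
    rw [Real.norm_of_nonneg h0.le, inv_mul_lt_iff₀ h0, Real.norm_eq_abs] at h1
    have h2 := htri s (by linarith)
    exact absurd (hmax ⟨⟨hsE, hσ1.trans hs.1.le, hst⟩, h2⟩) (not_le.2 hs.1)
  have heb : b₀ ≤ e := by
    by_contra hc
    exact hnear e ⟨he.1, not_le.1 hc⟩ he.2.le heE
  obtain ⟨b, ⟨hbE, hb1, hb2⟩, hmin⟩ := (isCompact_Icc.inter_left hE).exists_isLeast
    (⟨e, heE, heb, he.2.le⟩ : (E ∩ Icc b₀ t').Nonempty)
  have hσb' : σ < b := hb₀.trans_le hb1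
  have h1 := htri b (hgap σ b hσE hσ1 hσb' hb2 fun s hs hsE => by
    rcases lt_or_ge s b₀ with h | h
    · exact hnear s ⟨hs.1, h⟩ (hs.2.le.trans hb2) hsE
    · exact absurd (hmin ⟨hsE, h, hs.2.le.trans hb2⟩) (not_le.2 hs.2))
  exact absurd (hmax ⟨⟨hbE, hσ1.trans hσb'.le, hb2⟩, h1⟩) (not_le.2 hσb')

namespace Sol
variable {n m : ℕ} {γ p M : ℝ} {v : ℝ → Sp n → ℝ}

/-- Dominated convergence: a Lipschitz bound to the right of `t` gives the weak formulation at `t`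
from the right. -/
lemma right_deriv (S : Sol n m γ p M v) {R t K t₁ : ℝ} {ψ : Sp n → ℝ} (hψ : Test R ψ)
    (ht₁ : t < t₁)
    (hK : ∀ s ∈ Ioo t t₁, ∀ x ∈ Metric.ball (0 : Sp n) R, |v s x - v t x| ≤ K * (s - t)) :
    HasDerivWithinAt (fun s => ∫ x, v s x * ψ x) (N γ p m v ψ t) (Ici t) t := by
  rw [← hasDerivWithinAt_Ioi_iff_Ici, hasDerivWithinAt_iff_tendsto_slope' (by simp), S.N_eq hψ]
  have e : ∀ s, slope (fun s => ∫ x, v s x * ψ x) t s =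
      ∫ x, slope (fun s => v s x) t s * ψ x := by
    intro s
    simp only [slope_def_field]
    rw [← integral_sub (S.integrable_mul s hψ.integrable) (S.integrable_mul t hψ.integrable),
      ← integral_div]
    congr 1
    funext x
    ring
  simp_rw [funext e]
  refine tendsto_integral_filter_of_dominated_convergence (fun x => K * |ψ x|) ?_ ?_
    (hψ.integrable.abs.const_mul K) ?_
  · refine Eventually.of_forall fun s => ?_
    simp only [slope_def_field]
    exact ((((S.cont_x s).sub (S.cont_x t)).div_const _).mul hψ.continuous).aestronglyMeasurable
  · filter_upwards [Ioo_mem_nhdsGT ht₁] with s hs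
    refine Eventually.of_forall fun x => ?_
    have h0 : 0 < s - t := sub_pos.2 hs.1
    by_cases hx : x ∈ Metric.ball (0 : Sp n) R
    · rw [norm_mul, slope_def_field, norm_div, Real.norm_of_nonneg h0.le, Real.norm_eq_abs,
        Real.norm_eq_abs]
      refine mul_le_mul_of_nonneg_right ?_ (abs_nonneg _)
      rw [div_le_iff₀ h0]
      exact hK s hs x hx
    · simp [hψ.eq_zero hx]
  · refine Eventually.of_forall fun x => Tendsto.mul_const _ ?_
    exact (hasDerivWithinAt_iff_tendsto_slope' (by simp)).1
      (S.hasDerivAt t x).hasDerivWithinAt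

/-- The weak formulation of the equation holds at all times. The complement `E` of the interior of
the set of good times is closed; if it were nonempty, `(-Δ)^m v` would by Baire's theorem be
bounded on some portion of `E`, hence `v` would be Lipschitz in time there, and dominated
convergence would give the weak formulation on that portion. -/
lemma weakSet_eq_univ (S : Sol n m γ p M v) (R : ℝ) : weakSet γ p m v R = univ := by
  by_contra hne
  set E : Set ℝ := (interior (weakSet γ p m v R))ᶜ with hEdef
  have hEc : IsClosed E := isOpen_interior.isClosed_compl
  have hEne : E.Nonempty := by
    by_contra h
    rw [not_nonempty_iff_eq_empty, hEdef, compl_empty_iff] at h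
    exact hne (eq_univ_of_univ_subset (h ▸ interior_subset))
  have hO : ∀ s, s ∉ E → s ∈ weakSet γ p m v R := fun s hs =>
    interior_subset (not_not.1 hs)
  have : Nonempty E := hEne.to_subtype
  have : CompleteSpace E := hEc.completeSpace_coe
  obtain ⟨k, e₀, he₀⟩ := nonempty_interior_of_iUnion_of_closed
    (f := fun k : ℕ => (Subtype.val : E → ℝ) ⁻¹'
      {t | ∀ x ∈ Metric.ball (0 : Sp n) R, |negLapPow n m (v t) x| ≤ k})
    (fun k => (S.isClosed_bound R k).preimage continuous_subtype_val)
    (eq_univ_of_forall fun t => mem_iUnion.2 (S.exists_bound_L R t))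
  obtain ⟨ε, hε, hball⟩ := Metric.isOpen_iff.1 isOpen_interior e₀ he₀
  have hk : ∀ s ∈ E, s ∈ Ioo ((e₀ : ℝ) - ε) (e₀ + ε) →
      ∀ x ∈ Metric.ball (0 : Sp n) R, |negLapPow n m (v s) x| ≤ k := by
    intro s hs hsI
    refine interior_subset (hball (show (⟨s, hs⟩ : E) ∈ Metric.ball e₀ ε from ?_))
    rw [Metric.mem_ball, Subtype.dist_eq, Real.dist_eq, abs_lt]
    constructor <;> linarith [hsI.1, hsI.2]
  obtain ⟨CF, hCF, hF⟩ := S.exists_bound_F R (|(e₀ : ℝ)| + ε)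
  have hFI : ∀ s ∈ Ioo ((e₀ : ℝ) - ε) (e₀ + ε), ∀ x ∈ Metric.ball (0 : Sp n) R,
      memF γ p v s x ≤ CF := by
    intro s hs
    refine hF s (abs_le.2 ⟨?_, ?_⟩) <;>
      linarith [hs.1, hs.2, le_abs_self (e₀ : ℝ), neg_abs_le (e₀ : ℝ)]
  suffices hI : Ioo ((e₀ : ℝ) - ε) (e₀ + ε) ⊆ weakSet γ p m v R by
    exact e₀.2 (mem_interior.2 ⟨_, hI, isOpen_Ioo, by constructor <;> linarith⟩)
  intro τ hτ ψ hψ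
  obtain ⟨R', hR', hsupp⟩ := exists_lt_subset_ball (isClosed_tsupport ψ) hψ.supp
  have hψ' : Test R' ψ := ⟨hψ.smooth, hsupp⟩
  obtain ⟨C, hC, hgap⟩ := S.gap hR'
  set K : ℝ := C * (1 + k + CF) + (CF + k) + 1 with hKdef
  have hk0 : (0 : ℝ) ≤ k := Nat.cast_nonneg k
  have hCk : 0 ≤ C * (1 + k + CF) := by positivity
  have hLip : ∀ t ∈ E, t ∈ Ioo ((e₀ : ℝ) - ε) (e₀ + ε) → ∀ s ∈ Ioo t (e₀ + ε),
      ∀ x ∈ Metric.ball (0 : Sp n) R', |v s x - v t x| ≤ K * (s - t) := by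
    intro t htE htI s hs x hx
    have hI : ∀ u ∈ Icc t s, u ∈ Ioo ((e₀ : ℝ) - ε) (e₀ + ε) := fun u hu =>
      ⟨htI.1.trans_le hu.1, hu.2.trans_lt hs.2⟩
    have hxR : x ∈ Metric.ball (0 : Sp n) R := Metric.ball_subset_ball hR'.le hx
    refine chain_lipschitz (f := fun u => v u x)
      (f' := fun u => memF γ p v u x - negLapPow n m (v u) x) hEc htE hs.1.le (S.cont_t x)
      (fun u _ => S.hasDerivAt u x) (fun u hu => ?_) fun a b haE hta hab hbs hgapE => ?_
    · have h1 := abs_le.1 (hk u hu.1 (hI u hu.2) x hxR)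
      have h2 := hFI u (hI u hu.2) x hxR
      have h3 : 0 ≤ memF γ p v u x := F_nonneg u x
      rw [abs_lt]
      constructor <;> linarith
    · have hsubI : ∀ u ∈ Icc a b, u ∈ Ioo ((e₀ : ℝ) - ε) (e₀ + ε) := fun u hu =>
        hI u ⟨hta.trans hu.1, hu.2.trans hbs⟩
      refine (hgap k CF a b hk0 hCF hab (fun u hu => hO u (hgapE u hu))
        (hk a haE (hsubI a (left_mem_Icc.2 hab.le)))
        (fun u hu => hFI u (hsubI u (Ioo_subset_Icc_self hu))) x hx).trans ?_
      refine mul_le_mul_of_nonneg_right ?_ (by linarith)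
      linarith
  have hright : ∀ t ∈ Ioo ((e₀ : ℝ) - ε) (e₀ + ε),
      HasDerivWithinAt (fun s => ∫ x, v s x * ψ x) (N γ p m v ψ t) (Ici t) t := by
    intro t ht
    by_cases htE : t ∈ E
    · exact S.right_deriv hψ' ht.2 (hLip t htE ht)
    · exact (hO t htE ψ hψ).hasDerivWithinAt
  -- a continuous function with continuous right derivative is a primitive of that derivative
  have hNc : Continuous (N γ p m v ψ) := S.continuous_N hψ
  obtain ⟨a, ha1, ha2⟩ := exists_between hτ.1
  obtain ⟨b, hb1, hb2⟩ := exists_between hτ.2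
  have hprim : ∀ t, HasDerivAt (fun t => ∫ s in a..t, N γ p m v ψ s) (N γ p m v ψ t) t :=
    fun t => hNc.integral_hasStrictDerivAt a t |>.hasDerivAt
  have hconst := constant_of_has_deriv_right_zero
    (f := fun t => (∫ x, v t x * ψ x) - ∫ s in a..t, N γ p m v ψ s) (a := a) (b := b)
    ((S.continuous_V hψ.integrable).sub
      (continuous_iff_continuousAt.2 fun t => (hprim t).continuousAt)).continuousOn
    (fun t ht => by
      have := (hright t ⟨ha1.trans_le ht.1, ht.2.trans hb2⟩).sub (hprim t).hasDerivWithinAt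
      rwa [sub_self] at this)
  have hev : (fun t => ∫ x, v t x * ψ x) =ᶠ[𝓝 τ] fun t =>
      (∫ s in a..t, N γ p m v ψ s) + ((∫ x, v a x * ψ x) - ∫ s in a..a, N γ p m v ψ s) := by
    filter_upwards [Ioo_mem_nhds ha2 hb1] with t ht
    have := hconst t (Ioo_subset_Icc_self ht)
    linarith
  exact ((hprim τ).add_const _).congr_of_eventuallyEq hev

lemma weak (S : Sol n m γ p M v) {R : ℝ} {ψ : Sp n → ℝ} (hψ : Test R ψ) (t : ℝ) :
    HasDerivAt (fun s => ∫ x, v s x * ψ x) (N γ p m v ψ t) t := by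
  have : t ∈ weakSet γ p m v R := by rw [S.weakSet_eq_univ R]; trivial
  exact this ψ hψ

end Sol

/-! ### A growth lemma and cutoff functions -/

/-- A nonnegative sequence of at most geometric growth cannot satisfy a superlinear growth
inequality unless it vanishes: a positive term forces divergence to infinity, after which the
ratio of consecutive terms exceeds `1 + B`. -/
lemma seq_eq_zero {A : ℕ → ℝ} {c p C B : ℝ} (hc : 0 < c) (hp : 1 < p) (hB : 1 ≤ B)
    (h0 : ∀ j, 0 ≤ A j) (hstep : ∀ j, A j + c * A j ^ p ≤ A (j + 1))
    (hgrow : ∀ j, A j ≤ C * B ^ j) (j : ℕ) : A j = 0 := by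
  by_contra hj
  have hpos : 0 < A j := lt_of_le_of_ne (h0 j) (Ne.symm hj)
  have hmono : Monotone A := monotone_nat_of_le_succ fun i => by
    have := Real.rpow_nonneg (h0 i) p
    nlinarith [hstep i]
  set d : ℝ := c * A j ^ p with hd
  have hd0 : 0 < d := by positivity
  have hlin : ∀ i : ℕ, i * d ≤ A (j + i) := by
    intro i
    induction i with
    | zero => simpa using h0 j
    | succ i ih =>
      have h1 := hstep (j + i)
      have h2 : A j ^ p ≤ A (j + i) ^ p :=
        Real.rpow_le_rpow hpos.le (hmono (Nat.le_add_right j i)) (by linarith)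
      have h3 := mul_le_mul_of_nonneg_left h2 hc.le
      push_cast
      rw [← add_assoc]
      linarith
  have hAtop : Tendsto A atTop atTop := by
    refine (tendsto_add_atTop_iff_nat j).1 ?_
    refine tendsto_atTop_mono (f := fun i : ℕ => (i : ℝ) * d) (fun i => ?_)
      (tendsto_natCast_atTop_atTop.atTop_mul_const hd0)
    rw [add_comm]
    exact hlin i
  have hpow : Tendsto (fun i => A i ^ (p - 1)) atTop atTop :=
    (tendsto_rpow_atTop (by linarith)).comp hAtop
  obtain ⟨k, hk⟩ := eventually_atTop.1
    ((hpow.eventually_ge_atTop (B / c)).and (hAtop.eventually_gt_atTop 0))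
  have hk0 : 0 < A k := (hk k le_rfl).2
  have hgeo : ∀ i : ℕ, (1 + B) ^ i * A k ≤ A (k + i) := by
    intro i
    induction i with
    | zero => simp
    | succ i ih =>
      obtain ⟨h1, h2⟩ := hk (k + i) (Nat.le_add_right k i)
      have h3 : B * A (k + i) ≤ c * A (k + i) ^ p := by
        have e : A (k + i) ^ p = A (k + i) ^ (p - 1) * A (k + i) := by
          rw [← Real.rpow_add_one h2.ne']
          congr 1
          ring
        rw [e, ← mul_assoc]
        rw [div_le_iff₀ hc] at h1
        exact mul_le_mul_of_nonneg_right (by linarith) h2.le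
      have h4 := hstep (k + i)
      rw [← add_assoc, pow_succ]
      nlinarith [mul_le_mul_of_nonneg_left ih (show 0 ≤ 1 + B by linarith)]
  have hB0 : 0 < B := by linarith
  have hle : ∀ i : ℕ, ((1 + B) / B) ^ i ≤ C * B ^ k / A k := by
    intro i
    rw [div_pow, div_le_div_iff₀ (by positivity) hk0]
    calc (1 + B) ^ i * A k ≤ A (k + i) := hgeo i
      _ ≤ C * B ^ (k + i) := hgrow _
      _ = C * B ^ k * B ^ i := by rw [pow_add]; ring
  have htop : Tendsto (fun i : ℕ => ((1 + B) / B) ^ i) atTop atTop :=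
    tendsto_pow_atTop_atTop_of_one_lt (by rw [lt_div_iff₀ hB0]; linarith)
  obtain ⟨i, hi⟩ := (htop.eventually_gt_atTop (C * B ^ k / A k)).exists
  exact absurd (hle i) (not_le.2 hi)

/-- A cutoff function of one variable, equal to `1` around `[-1,2]` and supported in `[-2,3]`. -/
lemma exists_time_cutoff : ∃ (a : ℝ → ℝ) (C : ℝ), ContDiff ℝ ∞ a ∧ (∀ t, 0 ≤ a t) ∧
    (∀ t ∈ Icc (-1 : ℝ) 2, a t = 1) ∧ (∀ t, t ∉ Icc (-2 : ℝ) 3 → a t = 0) ∧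
    (∀ t ∈ Icc (-1 : ℝ) 2, deriv a t = 0) ∧ (∀ t, t ∉ Icc (-2 : ℝ) 3 → deriv a t = 0) ∧
    HasCompactSupport a ∧ 0 ≤ C ∧ (∀ t, |a t| ≤ C) ∧ ∀ t, |deriv a t| ≤ C := by
  let f : ContDiffBump (1 / 2 : ℝ) := ⟨2, 5 / 2, by norm_num, by norm_num⟩
  have hin : ∀ t ∈ Ioo (-3 / 2 : ℝ) (5 / 2), f t = 1 := fun t ht =>
    f.one_of_mem_closedBall (by
      rw [Metric.mem_closedBall, Real.dist_eq, abs_le]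
      constructor <;> linarith [ht.1, ht.2])
  have hts : ∀ t, t ∉ Icc (-2 : ℝ) 3 → t ∉ tsupport f := by
    intro t ht h
    rw [f.tsupport_eq, Metric.mem_closedBall, Real.dist_eq, abs_le] at h
    have h1 : -(5 / 2) ≤ t - 1 / 2 := h.1
    have h2 : t - 1 / 2 ≤ 5 / 2 := h.2
    exact ht ⟨by linarith, by linarith⟩
  have hcd : Continuous (deriv f) := (f.contDiff (n := 1)).continuous_deriv le_rfl
  obtain ⟨C₁, hC₁⟩ := hcd.bounded_above_of_compact_support f.hasCompactSupport.deriv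
  obtain ⟨C₂, hC₂⟩ := f.continuous.bounded_above_of_compact_support f.hasCompactSupport
  refine ⟨f, max C₁ C₂, f.contDiff, fun t => f.nonneg, fun t ht => hin t ⟨?_, ?_⟩,
    fun t ht => image_eq_zero_of_notMem_tsupport (hts t ht), fun t ht => ?_,
    fun t ht => ?_, f.hasCompactSupport, ?_, fun t => (hC₂ t).trans (le_max_right _ _),
    fun t => (hC₁ t).trans (le_max_left _ _)⟩
  · linarith [ht.1]
  · linarith [ht.2]
  · have : f =ᶠ[𝓝 t] fun _ => (1 : ℝ) := by
      filter_upwards [Ioo_mem_nhds (show (-3 / 2 : ℝ) < t by linarith [ht.1])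
        (show t < 5 / 2 by linarith [ht.2])] with s hs using hin s hs
    rw [this.deriv_eq, deriv_const]
  · exact image_eq_zero_of_notMem_tsupport fun h => hts t ht (tsupport_deriv_subset h)
  · exact ((norm_nonneg _).trans (hC₁ 0)).trans (le_max_left _ _)

lemma negLapPow_const {n m : ℕ} (hm : 1 ≤ m) (c : ℝ) (x : Sp n) :
    negLapPow n m (fun _ => c) x = 0 := by
  have := congrFun (negLapPow_affine (n := n) (m := m) (f := fun _ => (1 : ℝ)) contDiff_const c 0 0) x
  simp only [mul_one] at this
  rw [this, zero_pow (by lia)]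
  ring

/-- A spatial cutoff function, equal to `1` on the unit ball and supported in the ball of
radius `2`. -/
lemma exists_space_cutoff (n m : ℕ) (hm : 1 ≤ m) : ∃ (b : Sp n → ℝ) (C : ℝ), Test 2 b ∧
    (∀ x, 0 ≤ b x) ∧ (∀ x ∈ Metric.ball (0 : Sp n) 1, b x = 1) ∧
    (∀ x ∈ Metric.ball (0 : Sp n) 1, negLapPow n m b x = 0) ∧ 0 ≤ C ∧ (∀ x, |b x| ≤ C) ∧
    ∀ x, |negLapPow n m b x| ≤ C := by
  let f : ContDiffBump (0 : Sp n) := ⟨1, 3 / 2, by norm_num, by norm_num⟩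
  have hT : Test 2 f := by
    refine ⟨f.contDiff, ?_⟩
    rw [f.tsupport_eq]
    exact Metric.closedBall_subset_ball (show (3 / 2 : ℝ) < 2 by norm_num)
  have hin : ∀ x ∈ Metric.ball (0 : Sp n) 1, f x = 1 := fun x hx =>
    f.one_of_mem_closedBall (Metric.ball_subset_closedBall hx)
  obtain ⟨C₁, hC₁⟩ := hT.continuous.bounded_above_of_compact_support hT.compact
  obtain ⟨C₂, hC₂⟩ := (hT.negLapPow (m := m)).continuous.bounded_above_of_compact_support
    (hT.negLapPow (m := m)).compact
  refine ⟨f, max C₁ C₂, hT, fun x => f.nonneg, hin, fun x hx => ?_,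
    ((norm_nonneg _).trans (hC₁ 0)).trans (le_max_left _ _),
    fun x => (hC₁ x).trans (le_max_left _ _), fun x => (hC₂ x).trans (le_max_right _ _)⟩
  have : f =ᶠ[𝓝 x] fun _ => (1 : ℝ) := by
    filter_upwards [Metric.isOpen_ball.mem_nhds hx] with y hy using hin y hy
  rw [negLapPow_congr this, negLapPow_const hm]

/-! ### Mass of parabolic cylinders -/

/-- The parabolic cylinder `[-ρ^{2m}, ρ^{2m}) × B_ρ`. -/
def cyl (n m : ℕ) (ρ : ℝ) : Set (ℝ × Sp n) :=
  Ico (-ρ ^ (2 * m)) (ρ ^ (2 * m)) ×ˢ Metric.ball (0 : Sp n) ρ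

lemma measurableSet_cyl {n m : ℕ} {ρ : ℝ} : MeasurableSet (cyl n m ρ) :=
  measurableSet_Ico.prod measurableSet_ball

lemma cyl_mono {n m : ℕ} {ρ ρ' : ℝ} (h0 : 0 ≤ ρ) (h : ρ ≤ ρ') : cyl n m ρ ⊆ cyl n m ρ' := by
  have := pow_le_pow_left₀ h0 h (2 * m)
  exact Set.prod_mono (Ico_subset_Ico (by linarith) this) (Metric.ball_subset_ball h)

lemma volume_cyl_lt_top {n m : ℕ} {ρ : ℝ} : volume (cyl n m ρ) < ⊤ := by
  rw [cyl, Measure.volume_eq_prod, Measure.prod_prod]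
  exact ENNReal.mul_lt_top (by simp) measure_ball_lt_top

lemma volume_real_cyl {n m : ℕ} {ρ : ℝ} (hρ : 0 < ρ) : volume.real (cyl n m ρ) =
    2 * volume.real (Metric.ball (0 : Sp n) 1) * ρ ^ (n + 2 * m) := by
  have h1 : volume.real (Metric.ball (0 : Sp n) ρ) =
      ρ ^ n * volume.real (Metric.ball (0 : Sp n) 1) := by
    rw [measureReal_def, Measure.addHaar_ball_of_pos _ _ hρ, ENNReal.toReal_mul,
      ENNReal.toReal_ofReal (by positivity), finrank_euclideanSpace_fin, measureReal_def]
  have h2 : volume.real (cyl n m ρ) =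
      volume.real (Ico (-ρ ^ (2 * m)) (ρ ^ (2 * m))) * volume.real (Metric.ball (0 : Sp n) ρ) := by
    rw [cyl, Measure.volume_eq_prod, measureReal_prod_prod]
  rw [h2, h1, Real.volume_real_Ico_of_le (by linarith [pow_pos hρ (2 * m)]), pow_add]
  ring

namespace Sol
variable {n m : ℕ} {γ p M : ℝ} {v : ℝ → Sp n → ℝ}

/-- The integral of `|v|^p` over the parabolic cylinder of radius `ρ`. -/
noncomputable def mass (m : ℕ) (p : ℝ) (v : ℝ → Sp n → ℝ) (ρ : ℝ) : ℝ :=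
  ∫ z in cyl n m ρ, |v z.1 z.2| ^ p

lemma measurable_v (S : Sol n m γ p M v) : Measurable fun z : ℝ × Sp n => v z.1 z.2 :=
  measurable_uncurry_of_continuous_of_measurable (fun x => S.cont_t x)
    fun t => (S.cont_x t).measurable

lemma measurable_pow (S : Sol n m γ p M v) : Measurable fun z : ℝ × Sp n => |v z.1 z.2| ^ p :=
  (measurable_norm.comp S.measurable_v).pow_const p

lemma integrableOn_pow (S : Sol n m γ p M v) (ρ : ℝ) :
    IntegrableOn (fun z : ℝ × Sp n => |v z.1 z.2| ^ p) (cyl n m ρ) := by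
  refine IntegrableOn.of_bound volume_cyl_lt_top S.measurable_pow.aestronglyMeasurable (M ^ p)
    (Eventually.of_forall fun z => ?_)
  rw [Real.norm_of_nonneg (by positivity)]
  exact S.pow_bdd _ _

lemma mass_nonneg (ρ : ℝ) : 0 ≤ mass m p v ρ :=
  integral_nonneg fun z => by positivity

lemma mass_le (S : Sol n m γ p M v) {ρ : ℝ} :
    mass m p v ρ ≤ M ^ p * volume.real (cyl n m ρ) := by
  have h := setIntegral_mono (S.integrableOn_pow ρ)
    (integrableOn_const (C := M ^ p) volume_cyl_lt_top.ne) (fun z => S.pow_bdd _ _)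
  rw [setIntegral_const, smul_eq_mul, mul_comm] at h
  exact h

/-- Space-time weak formulation against `α(t) ψ(x)`. -/
lemma weak_identity (S : Sol n m γ p M v) {R : ℝ} {ψ : Sp n → ℝ} (hψ : Test R ψ) {α : ℝ → ℝ}
    (hα : ContDiff ℝ ∞ α) (hαc : HasCompactSupport α) :
    ∫ t, α t * ∫ x, memF γ p v t x * ψ x =
      ∫ t, ∫ x, v t x * (α t * negLapPow n m ψ x - deriv α t * ψ x) := by
  have hV := S.continuous_V hψ.integrable
  have hVL := S.continuous_V (hψ.negLapPow (m := m)).integrable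
  have hα' : Continuous (deriv α) := (contDiff_infty.1 hα 1).continuous_deriv le_rfl
  have hic : ∀ {f g : ℝ → ℝ}, Continuous f → Continuous g → HasCompactSupport f →
      Integrable fun t => f t * g t := fun hf hg hc =>
    (hf.mul hg).integrable_of_hasCompactSupport hc.mul_right
  have hparts := integral_mul_deriv_eq_deriv_mul_of_integrable (u := α) (u' := deriv α)
    (v := fun t => ∫ x, v t x * ψ x) (v' := N γ p m v ψ)
    (fun t _ => ((contDiff_infty.1 hα 1).differentiable one_ne_zero t).hasDerivAt)
    (fun t _ => S.weak hψ t)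
    (hic hα.continuous (S.continuous_N hψ) hαc) (hic hα' hV hαc.deriv) (hic hα.continuous hV hαc)
  have e1 : ∀ t, α t * ∫ x, memF γ p v t x * ψ x =
      α t * N γ p m v ψ t + α t * ∫ x, v t x * negLapPow n m ψ x := fun t => by
    unfold N
    ring
  have e2 : ∀ t, ∫ x, v t x * (α t * negLapPow n m ψ x - deriv α t * ψ x) =
      α t * (∫ x, v t x * negLapPow n m ψ x) - deriv α t * ∫ x, v t x * ψ x := by
    intro t
    rw [← integral_const_mul, ← integral_const_mul, ← integral_sub
      ((S.integrable_mul t hψ.negLapPow.integrable).const_mul _)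
      ((S.integrable_mul t hψ.integrable).const_mul _)]
    congr 1
    funext x
    ring
  simp_rw [e1, e2]
  rw [integral_add (hic hα.continuous (S.continuous_N hψ) hαc) (hic hα.continuous hVL hαc),
    integral_sub (hic hα.continuous hVL hαc) (hic hα' hV hαc.deriv), hparts]
  ring

/-- The memory term at times in `[T, 2T]`, `T = R^{2m}`, controls the mass of the cylinder. -/
lemma mass_le_memory (S : Sol n m γ p M v) {R R' : ℝ} (hR : 0 < R) {ψ : Sp n → ℝ}
    (hψ : Test R' ψ) (hψ0 : ∀ x, 0 ≤ ψ x) (hψ1 : ∀ x ∈ Metric.ball (0 : Sp n) R, ψ x = 1)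
    {t : ℝ} (ht : t ∈ Icc (R ^ (2 * m)) (2 * R ^ (2 * m))) :
    (3 * R ^ (2 * m)) ^ (-γ) * mass m p v R ≤ ∫ x, memF γ p v t x * ψ x := by
  set T := R ^ (2 * m) with hT
  have hT0 : 0 < T := by positivity
  have hprod : mass m p v R =
      ∫ x in Metric.ball (0 : Sp n) R, ∫ s in Ico (-T) T, |v s x| ^ p := by
    have hi := S.integrableOn_pow R
    unfold mass
    rw [cyl] at hi ⊢
    rw [Measure.volume_eq_prod, ← Measure.prod_restrict] at *
    rw [IntegrableOn, ← Measure.prod_restrict] at hi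
    exact integral_prod_symm _ hi
  have hint2 : IntegrableOn (fun x => ∫ s in Ico (-T) T, |v s x| ^ p)
      (Metric.ball (0 : Sp n) R) := by
    have hi := S.integrableOn_pow R
    rw [IntegrableOn, cyl, Measure.volume_eq_prod, ← Measure.prod_restrict] at hi
    exact hi.integral_prod_right
  rw [hprod, ← integral_const_mul]
  have hFi := S.integrable_F_mul hψ t
  refine le_trans (setIntegral_mono_on (hint2.const_mul _) hFi.integrableOn measurableSet_ball
    fun x hx => ?_)
    (setIntegral_le_integral hFi (Eventually.of_forall fun x =>
      mul_nonneg (F_nonneg t x) (hψ0 x)))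
  rw [hψ1 x hx, mul_one, ← integral_const_mul]
  have hsub : Ico (-T) T ⊆ Iio t := fun s hs => hs.2.trans_le ht.1
  have hvi : IntegrableOn (fun s => |v s x| ^ p) (Ico (-T) T) :=
    (((S.cont_t x).abs.rpow_const fun _ => Or.inr (by linarith [S.hp])).integrableOn_Icc).mono_set
      Ico_subset_Icc_self
  refine (setIntegral_mono_on (hvi.const_mul _) ((S.int t x).mono_set hsub) measurableSet_Ico
    fun s hs => ?_).trans ?_
  · refine mul_le_mul_of_nonneg_right ?_ (by positivity)
    exact Real.rpow_le_rpow_of_nonpos (sub_pos.2 (hsub hs)) (by linarith [hs.1, ht.2])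
      (by linarith [S.hγ0])
  · refine setIntegral_mono_set (S.int t x) ?_ hsub.eventuallyLE
    refine (ae_restrict_mem measurableSet_Iio).mono fun s hs => ?_
    have : 0 ≤ t - s := sub_nonneg.2 (le_of_lt hs)
    simp only [Pi.zero_apply]
    positivity

/-- Hölder's inequality on the difference of two cylinders. -/
lemma integral_annulus_le (S : Sol n m γ p M v) {R : ℝ} (hR : 0 < R) :
    ∫ z in cyl n m (2 * R) \ cyl n m R, |v z.1 z.2| ≤
      (mass m p v (2 * R) - mass m p v R) ^ (1 / p) *
        volume.real (cyl n m (2 * R)) ^ (1 - 1 / p) := by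
  have hp := S.hp
  have hp0 : 0 < p := by linarith
  have hsub : cyl n m R ⊆ cyl n m (2 * R) := cyl_mono hR.le (by linarith)
  have hfin : volume (cyl n m (2 * R) \ cyl n m R) < ⊤ :=
    (measure_mono sdiff_subset).trans_lt volume_cyl_lt_top
  have : IsFiniteMeasure (volume.restrict (cyl n m (2 * R) \ cyl n m R)) :=
    ⟨by rwa [Measure.restrict_apply_univ]⟩
  have hpq := Real.HolderConjugate.conjExponent hp
  have h := integral_mul_le_Lp_mul_Lq_of_nonneg hpq
    (μ := volume.restrict (cyl n m (2 * R) \ cyl n m R))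
    (f := fun z => |v z.1 z.2|) (g := fun _ => (1 : ℝ))
    (Eventually.of_forall fun z => abs_nonneg _) (Eventually.of_forall fun z => zero_le_one)
    (MemLp.of_bound (measurable_norm.comp S.measurable_v).aestronglyMeasurable M
      (Eventually.of_forall fun z => by simpa using S.bdd z.1 z.2))
    (memLp_const 1)
  simp only [mul_one, Real.one_rpow] at h
  rw [setIntegral_const, smul_eq_mul, mul_one] at h
  refine h.trans ?_
  have e : ∫ z in cyl n m (2 * R) \ cyl n m R, |v z.1 z.2| ^ p =
      mass m p v (2 * R) - mass m p v R := by
    rw [setIntegral_sdiff measurableSet_cyl (S.integrableOn_pow _) hsub]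
    rfl
  have e2 : 1 / p.conjExponent = 1 - 1 / p := by
    have := hpq.inv_add_inv_eq_one
    rw [one_div, one_div]
    linarith
  rw [e, e2]
  refine mul_le_mul_of_nonneg_left ?_ (Real.rpow_nonneg ?_ _)
  · refine Real.rpow_le_rpow measureReal_nonneg
      (measureReal_mono sdiff_subset volume_cyl_lt_top.ne) ?_
    rw [sub_nonneg, div_le_one hp0]
    exact hp.le
  · rw [← e]
    exact integral_nonneg fun z => by positivity

end Sol

/-! ### The test function argument -/

/-- This is where the exponent condition enters: the powers of `R` produced by the test function
argument are nonpositive. -/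
lemma exponent_le {n m γ p : ℝ} (hp : 1 < p)
    (hpcond : (n - 2 * m + 2 * m * γ ≤ 0) ∨
      (0 < n - 2 * m + 2 * m * γ ∧ p ≤ 1 + 2 * m * (2 - γ) / (n - 2 * m + 2 * m * γ)))
    (hm : 0 ≤ m) (hγ1 : γ < 1) :
    (n + 2 * m) * (1 - 1 / p) ≤ 2 * m * (2 - γ) := by
  have hp0 : 0 < p := by linarith
  have key : (p - 1) * (n - 2 * m + 2 * m * γ) ≤ 2 * m * (2 - γ) := by
    rcases hpcond with h | ⟨h, h'⟩
    · have h1 : 0 ≤ 2 * m * (2 - γ) := by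
        have : 0 ≤ 2 - γ := by linarith
        positivity
      nlinarith
    · have h1 : p - 1 ≤ 2 * m * (2 - γ) / (n - 2 * m + 2 * m * γ) := by linarith
      rwa [le_div_iff₀ h] at h1
  have e : (n + 2 * m) * (1 - 1 / p) = (n + 2 * m) * (p - 1) / p := by
    field_simp
  rw [e, div_le_iff₀ hp0]
  nlinarith

namespace Sol
variable {n m : ℕ} {γ p M : ℝ} {v : ℝ → Sp n → ℝ}

/-- The scaled test function argument, before the powers of `R` are collected. -/
lemma test_estimate (S : Sol n m γ p M v) : ∃ C, 0 ≤ C ∧ ∀ R, 0 < R →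
    R ^ (2 * m) * ((3 * R ^ (2 * m)) ^ (-γ) * mass m p v R) ≤
      C * (R ^ (2 * m))⁻¹ * ∫ z in cyl n m (2 * R) \ cyl n m R, |v z.1 z.2| := by
  obtain ⟨a, Ca, ha, ha0, ha1, has, had, hads, hac, hCa, haC, hadC⟩ := exists_time_cutoff
  obtain ⟨b, Cb, hb, hb0, hb1, hbL, hCb, hbC, hbLC⟩ := exists_space_cutoff n m S.hm
  refine ⟨2 * (Ca * Cb), by positivity, fun R hR => ?_⟩
  set T := R ^ (2 * m) with hT
  have hT0 : 0 < T := by positivity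
  have hTi : 0 < T⁻¹ := by positivity
  have h4T : 4 * T ≤ (2 * R) ^ (2 * m) := by
    rw [mul_pow, ← hT]
    refine mul_le_mul_of_nonneg_right ?_ hT0.le
    calc (4 : ℝ) = 2 ^ 2 := by norm_num
      _ ≤ 2 ^ (2 * m) := pow_le_pow_right₀ one_le_two (by have := S.hm; lia)
  set α : ℝ → ℝ := fun t => a (T⁻¹ * t) with hαdef
  set ψ : Sp n → ℝ := fun x => b (R⁻¹ • x) with hψdef
  have hα : ContDiff ℝ ∞ α := ha.comp (contDiff_const.mul contDiff_id)
  have hα' : ∀ t, deriv α t = T⁻¹ * deriv a (T⁻¹ * t) := fun t => by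
    have := deriv_comp_mul_left (T⁻¹) a t
    simpa [hαdef] using this
  have hscale : ∀ t c d : ℝ, T⁻¹ * t ∈ Icc c d ↔ t ∈ Icc (c * T) (d * T) := by
    intro t c d
    rw [mem_Icc, mem_Icc, ← div_eq_inv_mul, le_div_iff₀ hT0, div_le_iff₀ hT0]
  have hαc : HasCompactSupport α := by
    refine HasCompactSupport.intro (isCompact_Icc (a := -2 * T) (b := 3 * T)) fun t ht => ?_
    exact has _ fun h => ht ((hscale t _ _).1 h)
  have hψT : Test (2 * R) ψ := by
    refine ⟨hb.smooth.comp (contDiff_id.const_smul R⁻¹), ?_⟩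
    have hcl : IsClosed {x : Sp n | R⁻¹ • x ∈ tsupport b} :=
      (isClosed_tsupport b).preimage (continuous_const_smul R⁻¹)
    have hsub : tsupport ψ ⊆ {x : Sp n | R⁻¹ • x ∈ tsupport b} :=
      closure_minimal (fun x hx => subset_tsupport b (by exact hx)) hcl
    refine hsub.trans fun x hx => ?_
    have h1 := hb.supp hx
    rw [mem_ball_zero_iff, norm_smul, norm_inv, Real.norm_of_nonneg hR.le,
      inv_mul_lt_iff₀ hR] at h1
    rw [mem_ball_zero_iff]
    linarith
  have hψL : ∀ x, negLapPow n m ψ x = T⁻¹ * negLapPow n m b (R⁻¹ • x) := by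
    intro x
    have := congrFun (negLapPow_affine (m := m) hb.smooth 1 R⁻¹ 0) x
    simpa [inv_pow] using this
  have hin : ∀ x ∈ Metric.ball (0 : Sp n) R, R⁻¹ • x ∈ Metric.ball (0 : Sp n) 1 := by
    intro x hx
    rw [mem_ball_zero_iff] at hx ⊢
    rw [norm_smul, norm_inv, Real.norm_of_nonneg hR.le, inv_mul_lt_iff₀ hR]
    linarith
  have hlow : T * ((3 * T) ^ (-γ) * mass m p v R) ≤
      ∫ t, α t * ∫ x, memF γ p v t x * ψ x := by
    have hHc := S.continuous_F_mul hψT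
    have hH0 : ∀ t, 0 ≤ ∫ x, memF γ p v t x * ψ x := fun t =>
      integral_nonneg fun x => mul_nonneg (F_nonneg t x) (hb0 _)
    have hi : Integrable fun t => α t * ∫ x, memF γ p v t x * ψ x :=
      (hα.continuous.mul hHc).integrable_of_hasCompactSupport hαc.mul_right
    refine le_trans ?_ (setIntegral_le_integral (s := Icc T (2 * T)) hi
      (Eventually.of_forall fun t => mul_nonneg (ha0 _) (hH0 t)))
    have hconst : T * ((3 * T) ^ (-γ) * mass m p v R) =
        ∫ _ in Icc T (2 * T), (3 * T) ^ (-γ) * mass m p v R := by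
      rw [setIntegral_const, Real.volume_real_Icc_of_le (by linarith), smul_eq_mul]
      ring
    rw [hconst]
    refine setIntegral_mono_on (integrableOn_const (by simp)) hi.integrableOn measurableSet_Icc
      fun t ht => ?_
    have h1 : α t = 1 := ha1 _ ((hscale t _ _).2 ⟨by linarith [ht.1], ht.2⟩)
    rw [h1, one_mul]
    exact S.mass_le_memory hR hψT (fun x => hb0 _) (fun x hx => hb1 _ (hin x hx)) ht
  -- `g` comes from the linear terms; it lives on the difference of the two cylinders
  have hident := S.weak_identity hψT hα hαc
  set g : ℝ × Sp n → ℝ := fun z => α z.1 * negLapPow n m ψ z.2 - deriv α z.1 * ψ z.2 with hg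
  have hgm : Measurable g := by
    have h1 : Measurable α := hα.continuous.measurable
    have h2 : Measurable (deriv α) := measurable_deriv α
    have h3 : Measurable ψ := hψT.continuous.measurable
    have h4 : Measurable (negLapPow n m ψ) := (hψT.negLapPow (m := m)).continuous.measurable
    exact ((h1.comp measurable_fst).mul (h4.comp measurable_snd)).sub
      ((h2.comp measurable_fst).mul (h3.comp measurable_snd))
  have hgb : ∀ z, |g z| ≤ 2 * (Ca * Cb) * T⁻¹ := by
    intro z
    have h1 : |α z.1 * negLapPow n m ψ z.2| ≤ Ca * Cb * T⁻¹ := by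
      rw [hψL, abs_mul, abs_mul, abs_of_pos hTi]
      calc |α z.1| * (T⁻¹ * |negLapPow n m b (R⁻¹ • z.2)|) ≤ Ca * (T⁻¹ * Cb) := by
            gcongr
            · exact haC _
            · exact hbLC _
        _ = _ := by ring
    have h2 : |deriv α z.1 * ψ z.2| ≤ Ca * Cb * T⁻¹ := by
      rw [hα', abs_mul, abs_mul, abs_of_pos hTi]
      calc T⁻¹ * |deriv a (T⁻¹ * z.1)| * |ψ z.2| ≤ T⁻¹ * Ca * Cb := by
            gcongr
            · exact hadC _
            · exact hbC _
        _ = _ := by ring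
    refine (abs_sub _ _).trans ?_
    linarith
  have hg0 : ∀ z, z ∉ cyl n m (2 * R) \ cyl n m R → g z = 0 := by
    intro z hz
    by_cases hzR : z ∈ cyl n m R
    · have h1 : negLapPow n m ψ z.2 = 0 := by rw [hψL, hbL _ (hin _ hzR.2), mul_zero]
      have hz1 : -T ≤ z.1 ∧ z.1 < T := hzR.1
      have h2 : deriv α z.1 = 0 := by
        rw [hα', had _ ((hscale _ _ _).2 ⟨by linarith [hz1.1], by linarith [hz1.2]⟩), mul_zero]
      simp [hg, h1, h2]
    · have hz2 : z ∉ cyl n m (2 * R) := fun h => hz ⟨h, hzR⟩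
      by_cases hx : z.2 ∈ Metric.ball (0 : Sp n) (2 * R)
      · have ht : T⁻¹ * z.1 ∉ Icc (-2 : ℝ) 3 := by
          rw [hscale]
          intro ht
          exact hz2 ⟨⟨by linarith [ht.1], by linarith [ht.2]⟩, hx⟩
        have h1 : α z.1 = 0 := has _ ht
        have h2 : deriv α z.1 = 0 := by rw [hα', hads _ ht, mul_zero]
        simp [hg, h1, h2]
      · simp [hg, hψT.eq_zero hx, (hψT.negLapPow (m := m)).eq_zero hx]
  have hms : MeasurableSet (cyl n m (2 * R) \ cyl n m R) := measurableSet_cyl.diff measurableSet_cyl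
  have hvi : IntegrableOn (fun z : ℝ × Sp n => |v z.1 z.2|) (cyl n m (2 * R) \ cyl n m R) :=
    IntegrableOn.of_bound ((measure_mono sdiff_subset).trans_lt volume_cyl_lt_top)
      (measurable_norm.comp S.measurable_v).aestronglyMeasurable M
      (Eventually.of_forall fun z => by simpa using S.bdd z.1 z.2)
  have hdom : Integrable ((cyl n m (2 * R) \ cyl n m R).indicator
      fun z : ℝ × Sp n => 2 * (Ca * Cb) * T⁻¹ * |v z.1 z.2|) :=
    (integrable_indicator_iff hms).2 (hvi.const_mul _)
  have hle : ∀ z, ‖v z.1 z.2 * g z‖ ≤ (cyl n m (2 * R) \ cyl n m R).indicator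
      (fun z : ℝ × Sp n => 2 * (Ca * Cb) * T⁻¹ * |v z.1 z.2|) z := by
    intro z
    by_cases hz : z ∈ cyl n m (2 * R) \ cyl n m R
    · rw [indicator_of_mem hz, norm_mul, mul_comm, Real.norm_eq_abs, Real.norm_eq_abs]
      exact mul_le_mul_of_nonneg_right (hgb z) (abs_nonneg _)
    · rw [indicator_of_notMem hz, hg0 z hz]
      simp
  have hgi : Integrable fun z : ℝ × Sp n => v z.1 z.2 * g z :=
    hdom.mono' (S.measurable_v.mul hgm).aestronglyMeasurable (Eventually.of_forall hle)
  have hup : ∫ t, ∫ x, v t x * (α t * negLapPow n m ψ x - deriv α t * ψ x) =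
      ∫ z : ℝ × Sp n, v z.1 z.2 * g z := by
    rw [Measure.volume_eq_prod] at hgi ⊢
    exact (integral_prod _ hgi).symm
  rw [hident, hup] at hlow
  refine hlow.trans ((le_abs_self _).trans ?_)
  rw [← Real.norm_eq_abs]
  refine (norm_integral_le_of_norm_le hdom (Eventually.of_forall hle)).trans ?_
  rw [integral_indicator hms, integral_const_mul]

/-- The recursive inequality for the mass of parabolic cylinders; under `hexp` all powers of `R ≥ 1`
are absorbed. -/
lemma mass_step (S : Sol n m γ p M v)
    (hexp : ((n : ℝ) + 2 * m) * (1 - 1 / p) ≤ 2 * m * (2 - γ)) :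
    ∃ K, 0 < K ∧ ∀ R, 1 ≤ R →
      mass m p v R ≤ K * (mass m p v (2 * R) - mass m p v R) ^ (1 / p) := by
  obtain ⟨C, hC, hest⟩ := S.test_estimate
  have hp := S.hp
  set κ : ℝ := 2 * volume.real (Metric.ball (0 : Sp n) 1) * 2 ^ (n + 2 * m) with hκ
  have hκ0 : 0 ≤ κ := by positivity
  refine ⟨C * (3 ^ γ * κ ^ (1 - 1 / p)) + 1, by positivity, fun R hR => ?_⟩
  have hR0 : 0 < R := by linarith
  set T := R ^ (2 * m) with hT
  have hT0 : 0 < T := by positivity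
  have hδ : 0 ≤ mass m p v (2 * R) - mass m p v R := by
    rw [sub_nonneg]
    exact setIntegral_mono_set (S.integrableOn_pow _)
      (Eventually.of_forall fun z => by simp only [Pi.zero_apply]; positivity)
      (cyl_mono hR0.le (by linarith)).eventuallyLE
  set δ := mass m p v (2 * R) - mass m p v R with hδdef
  have hV : volume.real (cyl n m (2 * R)) ^ (1 - 1 / p) ≤ κ ^ (1 - 1 / p) * T ^ (2 - γ) := by
    have e1 : volume.real (cyl n m (2 * R)) = κ * R ^ (n + 2 * m) := by
      rw [volume_real_cyl (by positivity), mul_pow, hκ]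
      ring
    rw [e1, Real.mul_rpow hκ0 (by positivity)]
    refine mul_le_mul_of_nonneg_left ?_ (by positivity)
    rw [hT, ← Real.rpow_natCast, ← Real.rpow_natCast, ← Real.rpow_mul hR0.le,
      ← Real.rpow_mul hR0.le]
    refine Real.rpow_le_rpow_of_exponent_le hR ?_
    push_cast
    exact hexp
  have h3T : (3 * T) ^ (-γ) = (3 ^ γ)⁻¹ * (T ^ γ)⁻¹ := by
    rw [Real.mul_rpow (by norm_num) hT0.le, Real.rpow_neg (by norm_num), Real.rpow_neg hT0.le]
  have hT2 : T ^ (2 - γ) = T * T * (T ^ γ)⁻¹ := by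
    rw [Real.rpow_sub hT0, div_eq_mul_inv]
    congr 1
    rw [show (2 : ℝ) = ((2 : ℕ) : ℝ) by norm_num, Real.rpow_natCast, sq]
  have h1 := (hest R hR0).trans (mul_le_mul_of_nonneg_left
    ((S.integral_annulus_le hR0).trans (mul_le_mul_of_nonneg_left hV
      (Real.rpow_nonneg hδ (1 / p)))) (show 0 ≤ C * T⁻¹ by positivity))
  rw [← hδdef, ← hT, h3T, hT2] at h1
  have hD := Real.rpow_nonneg hδ (1 / p)
  have hTγ : 0 < T ^ γ := by positivity
  have h3γ : (0 : ℝ) < 3 ^ γ := by positivity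
  have h2 : mass m p v R ≤ C * (3 ^ γ * κ ^ (1 - 1 / p)) * δ ^ (1 / p) := by
    have hpos : 0 < T * ((3 ^ γ)⁻¹ * (T ^ γ)⁻¹) := by positivity
    refine le_of_mul_le_mul_left (le_trans (le_of_eq ?_) (h1.trans (le_of_eq ?_))) hpos
    · ring
    · field_simp
  refine h2.trans ?_
  rw [add_mul, one_mul]
  linarith

/-- The masses of the cylinders of radii `2^j` vanish by `seq_eq_zero`; continuity in each variable
upgrades vanishing almost everywhere to vanishing everywhere. -/
lemma eq_zero (S : Sol n m γ p M v)
    (hexp : ((n : ℝ) + 2 * m) * (1 - 1 / p) ≤ 2 * m * (2 - γ)) (t : ℝ) (x : Sp n) :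
    v t x = 0 := by
  obtain ⟨K, hK, hstep⟩ := S.mass_step hexp
  have hp := S.hp
  have hp0 : 0 < p := by linarith
  have hM := S.M_nonneg
  have hmono : ∀ j : ℕ, mass m p v (2 ^ j) ≤ mass m p v (2 ^ (j + 1)) := fun j =>
    setIntegral_mono_set (S.integrableOn_pow _)
      (Eventually.of_forall fun z => by simp only [Pi.zero_apply]; positivity)
      (cyl_mono (by positivity) (pow_le_pow_right₀ one_le_two (Nat.le_succ j))).eventuallyLE
  have hzero : ∀ j : ℕ, mass m p v (2 ^ j) = 0 := by
    refine seq_eq_zero (c := (K ^ p)⁻¹) (p := p) (B := 2 ^ (n + 2 * m))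
      (C := M ^ p * (2 * volume.real (Metric.ball (0 : Sp n) 1))) (by positivity) hp
      (one_le_pow₀ one_le_two) (fun j => mass_nonneg _) (fun j => ?_) fun j => ?_
    · have h1 := hstep (2 ^ j) (one_le_pow₀ one_le_two)
      rw [← pow_succ'] at h1
      have hδ := sub_nonneg.2 (hmono j)
      have h2 := Real.rpow_le_rpow (mass_nonneg _) h1 hp0.le
      rw [Real.mul_rpow hK.le (Real.rpow_nonneg hδ _), ← Real.rpow_mul hδ,
        one_div_mul_cancel hp0.ne', Real.rpow_one] at h2
      have h3 : (K ^ p)⁻¹ * mass m p v (2 ^ j) ^ p ≤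
          mass m p v (2 ^ (j + 1)) - mass m p v (2 ^ j) := by
        rwa [inv_mul_le_iff₀ (by positivity)]
      linarith
    · refine S.mass_le.trans (le_of_eq ?_)
      rw [volume_real_cyl (by positivity), ← pow_mul, ← pow_mul, mul_comm j]
      ring
  have hae : ∀ᵐ z : ℝ × Sp n, v z.1 z.2 = 0 := by
    have h1 : ∀ j : ℕ, ∀ᵐ z : ℝ × Sp n, z ∈ cyl n m (2 ^ j) → v z.1 z.2 = 0 := by
      intro j
      have h2 := (setIntegral_eq_zero_iff_of_nonneg_ae
        (Eventually.of_forall fun z => by simp only [Pi.zero_apply]; positivity)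
        (S.integrableOn_pow (2 ^ j))).1 (hzero j)
      have h3 := (ae_restrict_iff' measurableSet_cyl).1 h2
      filter_upwards [h3] with z hz hzc
      have h4 : |v z.1 z.2| ^ p = 0 := hz hzc
      exact abs_eq_zero.1 ((Real.rpow_eq_zero (abs_nonneg _) hp0.ne').1 h4)
    filter_upwards [ae_all_iff.2 h1] with z hz
    obtain ⟨j, hj⟩ := pow_unbounded_of_one_lt (max |z.1| ‖z.2‖) (one_lt_two (α := ℝ))
    refine hz j ⟨?_, ?_⟩
    · have h5 : |z.1| < (2 ^ j) ^ (2 * m) := by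
        refine ((le_max_left _ _).trans_lt hj).trans_le ?_
        exact le_self_pow₀ (one_le_pow₀ one_le_two) (by have := S.hm; lia)
      exact ⟨(abs_lt.1 h5).1.le, (abs_lt.1 h5).2⟩
    · rw [mem_ball_zero_iff]
      exact (le_max_right _ _).trans_lt hj
  rw [Measure.volume_eq_prod] at hae
  have h6 : ∀ᵐ t : ℝ, v t x = 0 := by
    filter_upwards [Measure.ae_ae_of_ae_prod hae] with s hs
    have : v s = fun _ => 0 := (Continuous.ae_eq_iff_eq volume (S.cont_x s) continuous_const).1 hs
    rw [this]
  have h7 : (fun t => v t x) = fun _ => 0 :=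
    (Continuous.ae_eq_iff_eq volume (S.cont_t x) continuous_const).1 h6
  exact congrFun h7 t

end Sol

end

/-- Liouville-type theorem, first exponent range: any bounded classical
solution of `v_t + (-Δ)^m v = ∫_{-∞}^t (t-s)^{-γ}|v(s)|^p ds` on `ℝ × ℝⁿ` vanishes
identically, provided `n - 2m + 2mγ ≤ 0`, or `n - 2m + 2mγ > 0` and
`p ≤ 1 + 2m(2-γ)/(n - 2m + 2mγ)`. -/
theorem liouville_subcritical (n m : ℕ) (hn : 1 ≤ n) (hm : 1 ≤ m)
    (γ p : ℝ) (hγ0 : 0 < γ) (hγ1 : γ < 1) (hp : 1 < p)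
    (hpcond : ((n : ℝ) - 2 * m + 2 * m * γ ≤ 0) ∨
      (0 < (n : ℝ) - 2 * m + 2 * m * γ ∧
        p ≤ 1 + 2 * m * (2 - γ) / ((n : ℝ) - 2 * m + 2 * m * γ)))
    (v : ℝ → EuclideanSpace ℝ (Fin n) → ℝ)
    (hbdd : ∃ M : ℝ, ∀ t x, |v t x| ≤ M)
    (hC1t : ∀ x, ContDiff ℝ 1 (fun t => v t x))
    (hC2mx : ∀ t, ContDiff ℝ (2 * m : ℕ) (v t))
    (hint : ∀ t x, MeasureTheory.IntegrableOn
      (fun s => (t - s) ^ (-γ) * |v s x| ^ p) (Set.Iio t))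
    (heq : ∀ t x, deriv (fun s => v s x) t + negLapPow n m (v t) x =
      ∫ s in Set.Iio t, (t - s) ^ (-γ) * |v s x| ^ p) :
    ∀ t x, v t x = 0 := by
  obtain ⟨M, hM⟩ := hbdd
  exact Sol.eq_zero (M := M) ⟨hm, hγ0, hγ1, hp, hM, hC1t, hC2mx, hint, heq⟩
    (exponent_le hp hpcond (Nat.cast_nonneg m) hγ1)
end
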